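/- arXiv:2503.21390 — 2 statements merged into one kernel-verified Lean document; each statement's English description precedes it below -/
import Mathlib

section
/- Let (V,1,𝒮,Y) be a vertex F-algebra over a formal group law F over a commutative ring R. Then weak commutativity holds: for all a,b,c ∈ V there exists M ≥ 0 such that F(z,ι(w))^M · Y(a,z)Y(b,w)c = F(z,ι(w))^M · Y(b,w)Y(a,z)c as bilateral series in V⟦z^{±1},w^{±1}⟧ (here F(z,ι(w))^M ∈ R⟦z,w⟧ since M ≥ 0, Y(a,z)Y(b,w)c ∈ V((w))((z)) and Y(b,w)Y(a,z)c ∈ V((z))((w))). Equivalently, F(z,ι(w))^M may be replaced by (z−w)^M. -/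
/-!
Coefficient-wise formal calculus for vertex `F`-algebras, following
M. Upmeier, "Vertex F-Algebras and Their Associated Lie Algebra".

Series in one, two or three variables are represented by their coefficient
functions `ℤ → R`, `ℤ → ℤ → R`, …; products are given by coefficient-wise
(finite) sums, expressed via `finsum` (`∑ᶠ`).
-/

open scoped BigOperators

noncomputable section

/-- Generalized binomial coefficient `C(n,k) = n(n-1)⋯(n-k+1)/k!` for `n : ℤ`, `k : ℕ`. -/
def zbinom (n : ℤ) (k : ℕ) : ℤ :=
  if 0 ≤ n then (n.toNat.choose k : ℤ)
  else (-1 : ℤ) ^ k * (((k : ℤ) - n - 1).toNat.choose k : ℤ)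

/-- `C(n,m)` for integer `m`, with `C(n,m) = 0` for `m < 0`. -/
def zbinomZ (n m : ℤ) : ℤ := if m < 0 then 0 else zbinom n m.toNat

/-- `(-1)^n` for `n : ℤ`. -/
def msign (n : ℤ) : ℤ := if Even n then 1 else -1

section Series

variable {R : Type*} [CommRing R] {M : Type*} [AddCommGroup M] [Module R M]

/-- Product of a one-variable series with `R`-coefficients with an `M`-valued one. -/
def mulS (f : ℤ → R) (g : ℤ → M) : ℤ → M := fun n => ∑ᶠ i : ℤ, f i • g (n - i)

/-- The constant series `1` (one variable). -/
def oneS (R : Type*) [CommRing R] : ℤ → R := fun n => if n = 0 then 1 else 0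

/-- Natural powers of a one-variable series. -/
def pow1 (f : ℤ → R) : ℕ → ℤ → R
  | 0 => oneS R
  | k + 1 => mulS f (pow1 f k)

/-- Product of two-variable series. -/
def mulS2 (f : ℤ → ℤ → R) (g : ℤ → ℤ → M) : ℤ → ℤ → M :=
  fun a b => ∑ᶠ p : ℤ × ℤ, f p.1 p.2 • g (a - p.1) (b - p.2)

/-- The constant series `1` (two variables). -/
def oneS2 (R : Type*) [CommRing R] : ℤ → ℤ → R := fun a b => if a = 0 ∧ b = 0 then 1 else 0

/-- Natural powers of a two-variable series. -/
def pow2 (f : ℤ → ℤ → R) : ℕ → ℤ → ℤ → R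
  | 0 => oneS2 R
  | k + 1 => mulS2 f (pow2 f k)

/-- `f ∈ M((z))`: only finitely many negative powers. -/
def IsLaurent (f : ℤ → M) : Prop := ∃ N : ℤ, ∀ n : ℤ, n < N → f n = 0

/-- `f ∈ M((z,w))`: only finitely many nonzero coefficients with some negative index. -/
def IsLaurent2 (f : ℤ → ℤ → M) : Prop :=
  {p : ℤ × ℤ | (p.1 < 0 ∨ p.2 < 0) ∧ f p.1 p.2 ≠ 0}.Finite

/-- Formal derivative of a one-variable series. -/
def fderiv1 (f : ℤ → R) : ℤ → R := fun n => ((n + 1 : ℤ) : R) * f (n + 1)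

/-- The polynomial `z - w` as a two-variable series. -/
def zmw (R : Type*) [CommRing R] : ℤ → ℤ → R :=
  fun i j => if i = 1 ∧ j = 0 then 1 else if i = 0 ∧ j = 1 then -1 else 0

/-- `∂/∂w` of a two-variable series. -/
def d01 (f : ℤ → ℤ → R) : ℤ → ℤ → R := fun i j => ((j + 1 : ℤ) : R) * f i (j + 1)

/-- `∂/∂z` of a two-variable series. -/
def d10 (f : ℤ → ℤ → R) : ℤ → ℤ → R := fun i j => ((i + 1 : ℤ) : R) * f (i + 1) j

/-- Substitution `p(f(z,w))` of a two-variable series (zero constant term) into a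
one-variable power series `p`. -/
def comp2 (p : ℤ → R) (f : ℤ → ℤ → R) : ℤ → ℤ → R :=
  fun a b => ∑ᶠ m : ℕ, p (m : ℤ) * pow2 f m a b

/-- Substitution `p(f(z))` of a one-variable series (zero constant term) into a
one-variable power series `p`. -/
def comp1 (p : ℤ → R) (f : ℤ → R) : ℤ → R :=
  fun a => ∑ᶠ m : ℕ, p (m : ℤ) * pow1 f m a

/-- `(G - z)/z` for `G ≡ z (mod w)`. -/
def hzS (G : ℤ → ℤ → R) : ℤ → ℤ → R := fun i j => G (i + 1) j - oneS2 R i j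

/-- Integer powers `i_{z,w} G^n`, for `G ≡ z (mod w)`, expanded in `R((z))⟦w⟧`:
the Newton expansion `z^n ∑_k C(n,k) ((G-z)/z)^k`. -/
def izwPow (G : ℤ → ℤ → R) (n : ℤ) : ℤ → ℤ → R :=
  fun a b => ∑ᶠ k : ℕ, (zbinom n k : R) * pow2 (hzS G) k (a - n) b

/-- `(G - w)/w` for `G ≡ w (mod z)`. -/
def hwS (G : ℤ → ℤ → R) : ℤ → ℤ → R := fun i j => G i (j + 1) - oneS2 R i j

/-- Integer powers `i_{w,z} G^n`, for `G ≡ w (mod z)`, expanded in `R((w))⟦z⟧`. -/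
def iwzPow (G : ℤ → ℤ → R) (n : ℤ) : ℤ → ℤ → R :=
  fun a b => ∑ᶠ k : ℕ, (zbinom n k : R) * pow2 (hwS G) k a (b - n)

/-- `(G + w)/(-w)` for `G ≡ ι(w) (mod z)`. -/
def hwNegS (G : ℤ → ℤ → R) : ℤ → ℤ → R := fun i j => -G i (j + 1) - oneS2 R i j

/-- Integer powers `i_{w,z} G^n`, for `G ≡ -w(1+⋯) (mod z)` (e.g. `G = F(z, ι w)`),
expanded in `R((w))⟦z⟧`. -/
def iwzPowNeg (G : ℤ → ℤ → R) (n : ℤ) : ℤ → ℤ → R :=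
  fun a b => (msign n : R) * ∑ᶠ k : ℕ, (zbinom n k : R) * pow2 (hwNegS G) k a (b - n)

/-- `(f + z)/(-z)` for a series `f = -z(1 + ⋯)` such as `ι(z)`. -/
def hS (f : ℤ → R) : ℤ → R := fun j => -f (j + 1) - oneS R j

/-- Integer powers `f(z)^n` (`n : ℤ`) for `f = -z(1+⋯)`, e.g. `f = ι(z)`. -/
def iotaPow (f : ℤ → R) (n : ℤ) : ℤ → R :=
  fun a => (msign n : R) * ∑ᶠ k : ℕ, (zbinom n k : R) * pow1 (hS f) k (a - n)

/-- `f - 1` for a power series with constant term `1`. -/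
def hOneS (f : ℤ → R) : ℤ → R := fun j => f j - oneS R j

/-- Multiplicative inverse of a power series with constant term `1`. -/
def invOne (f : ℤ → R) : ℤ → R :=
  fun a => ∑ᶠ k : ℕ, ((-1 : R) ^ k) * pow1 (hOneS f) k a

end Series

/-- A (one-dimensional, commutative) formal group law `F(z,w)` over `R`, together with
its (unique) inverse `ι`. -/
structure FormalGroupLaw (R : Type*) [CommRing R] where
  F : ℤ → ℤ → R
  F_supp : ∀ i j : ℤ, i < 0 ∨ j < 0 → F i j = 0
  /-- `F(z,0) = z`, so that `F(z,w) = z + w + O(zw)` using commutativity. -/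
  F_modw : ∀ i : ℤ, F i 0 = if i = 1 then 1 else 0
  F_comm : ∀ i j : ℤ, F i j = F j i
  /-- associativity `F(F(z,w),v) = F(z,F(w,v))`, coefficient-wise. -/
  F_assoc : ∀ a b c : ℤ,
    (∑ᶠ m : ℕ, F (m : ℤ) c * pow2 F m a b) = ∑ᶠ n : ℕ, F a (n : ℤ) * pow2 F n b c
  /-- the inverse `ι(z) = -z + O(z²)`. -/
  inv : ℤ → R
  inv_supp : ∀ n : ℤ, n < 1 → inv n = 0
  inv_one : inv 1 = -1
  /-- `F(z, ι(z)) = 0`, coefficient-wise. -/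
  inv_eq : ∀ n : ℤ, (∑ᶠ p : ℤ × ℕ, F p.1 (p.2 : ℤ) * pow1 inv p.2 (n - p.1)) = 0

namespace FormalGroupLaw

variable {R : Type*} [CommRing R] {M : Type*} [AddCommGroup M] [Module R M]

/-- The series `F(z, ι(w))`. -/
def Fzi (𝓕 : FormalGroupLaw R) : ℤ → ℤ → R :=
  fun i j => ∑ᶠ m : ℕ, 𝓕.F i (m : ℤ) * pow1 𝓕.inv m j

/-- The `F`-delta distribution `z⁻¹δ_F(w/z) = i_{z,w}F(z,ιw)⁻¹ - i_{w,z}F(z,ιw)⁻¹`. -/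
def delta (𝓕 : FormalGroupLaw R) : ℤ → ℤ → R :=
  fun a b => izwPow 𝓕.Fzi (-1) a b - iwzPowNeg 𝓕.Fzi (-1) a b

/-- `p_F(z) = F^{0,1}(z,0)⁻¹`, the coefficient series of the invariant 1-form. -/
def pF (𝓕 : FormalGroupLaw R) : ℤ → R := invOne (fun i => 𝓕.F i 1)

/-- `F`-residue: the coefficient of `z⁻¹` in `f(z)·p_F(z)`. -/
def resF (𝓕 : FormalGroupLaw R) (f : ℤ → M) : M := ∑ᶠ i : ℤ, 𝓕.pF i • f (-1 - i)

/-- The `F`-hyperderivative `𝒮^F_n f`, defined by `i_{z,w}f(F(z,w)) = ∑_n (𝒮^F_n f)(z) wⁿ`. -/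
def hyper (𝓕 : FormalGroupLaw R) (n : ℕ) (f : ℤ → R) : ℤ → R :=
  fun a => ∑ᶠ m : ℤ, f m * izwPow 𝓕.F m a (n : ℤ)

/-- `F`-binomial coefficients: `i_{z,w}F(z,w)^n = ∑_{i,j} binomF(n;i,j) z^i w^j`. -/
def binomF (𝓕 : FormalGroupLaw R) (n i j : ℤ) : R := izwPow 𝓕.F n i j

/-- `φ` is a logarithm of `F`: `φ(F(z,w)) = φ(z) + φ(w)`, `φ(0) = 0`, `φ'(0) = 1`. -/
def IsLogarithm (𝓕 : FormalGroupLaw R) (φ : ℤ → R) : Prop :=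
  (∀ n : ℤ, n < 0 → φ n = 0) ∧ φ 0 = 0 ∧ φ 1 = 1 ∧
  ∀ a b : ℤ, (∑ᶠ m : ℕ, φ (m : ℤ) * pow2 𝓕.F m a b)
    = (if b = 0 then φ a else 0) + (if a = 0 then φ b else 0)

end FormalGroupLaw

section Vertex

variable {R : Type*} [CommRing R] {V : Type*} [AddCommGroup V] [Module R V]

/-- For `c = ∑_m c_m v^m ∈ V((v))`, the substitution `v ↦ F(z,w)` (coefficient `(k,n)` of
`z^k w^n`, expanded in `V((z))⟦w⟧`). -/
def substF (𝓕 : FormalGroupLaw R) (c : ℤ → V) : ℤ → ℤ → V :=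
  fun k n => ∑ᶠ m : ℤ, izwPow 𝓕.F m k n • c m

/-- Coefficients of `i_{z,w} Y(a, F(z,w)) (Y(b,w)c)`, where `Ya v = Y(a,·)v` and
`d = Y(b,·)c`. -/
def substFProd (𝓕 : FormalGroupLaw R) (Ya : V → ℤ → V) (d : ℤ → V) : ℤ → ℤ → V :=
  fun k n => ∑ᶠ q : ℤ × ℤ, izwPow 𝓕.F q.1 k (n - q.2) • Ya (d q.2) q.1

end Vertex

/-- A vertex `F`-algebra `(V, 𝟙, 𝒮, Y)` over the formal group law `𝓕`.
`Y a b : ℤ → V` records the coefficients of `Y(a,z)b = ∑_k (Y a b k) z^k`, and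
`S n` is the component `𝒮⁽ⁿ⁾` of the `F`-shift operator `𝒮(z) = ∑_{n≥0} 𝒮⁽ⁿ⁾ zⁿ`. -/
structure VertexFAlgebra (R : Type*) [CommRing R] (𝓕 : FormalGroupLaw R)
    (V : Type*) [AddCommGroup V] [Module R V] where
  vac : V
  S : ℕ → V →ₗ[R] V
  Y : V →ₗ[R] V →ₗ[R] (ℤ → V)
  /-- `Y(a,z)b ∈ V((z))`. -/
  Y_laurent : ∀ a b : V, IsLaurent (Y a b)
  /-- `Y(a,z)𝟙` is holomorphic. -/
  vac_holo : ∀ (a : V) (k : ℤ), k < 0 → Y a vac k = 0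
  /-- `Y(a,z)𝟙|_{z=0} = a`. -/
  creation : ∀ a : V, Y a vac 0 = a
  /-- `Y(𝟙,z) = id`. -/
  Y_vac : ∀ (b : V) (k : ℤ), Y vac b k = if k = 0 then b else 0
  /-- `𝒮(0) = id`. -/
  S_zero : S 0 = LinearMap.id
  /-- `𝒮(z)𝟙 = 𝟙`. -/
  S_vac : ∀ n : ℕ, 1 ≤ n → S n vac = 0
  /-- `𝒮(z) ∘ 𝒮(w) = 𝒮(F(z,w))`, coefficient-wise. -/
  S_comp : ∀ (a : V) (i j : ℕ),
    S i (S j a) = ∑ᶠ m : ℕ, pow2 𝓕.F m (i : ℤ) (j : ℤ) • S m a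
  /-- `F`-translation covariance `Y(𝒮(w)a, z)b = i_{z,w} Y(a,F(z,w))b`. -/
  translation : ∀ (a b : V) (k : ℤ) (n : ℕ),
    Y (S n a) b k = substF 𝓕 (Y a b) k (n : ℤ)
  /-- weak `F`-associativity. -/
  weak_assoc : ∀ a b c : V, ∃ N : ℕ,
    mulS2 (pow2 𝓕.F N) (fun k l => Y (Y a b k) c l)
      = mulS2 (pow2 𝓕.F N) (substFProd 𝓕 (fun v => Y a v) (Y b c))
  /-- skew symmetry `Y(a,z)b = 𝒮(z)(Y(b,ι(z))a)`, coefficient-wise. -/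
  skew : ∀ (a b : V) (k : ℤ),
    Y a b k = ∑ᶠ q : ℕ × ℤ, iotaPow 𝓕.inv q.2 (k - (q.1 : ℤ)) • S q.1 (Y b a q.2)

end

namespace VertexF

section FinsumTools

variable {α β M N : Type*} [AddCommMonoid M] [AddCommMonoid N]

theorem finsum_map_flat (g : α → M →+ N) (f : α → β → M) {s : Set (α × β)} (hs : s.Finite)
    (h : ∀ a b, g a ≠ 0 → f a b ≠ 0 → (a, b) ∈ s) :
    ∑ᶠ a, g a (∑ᶠ b, f a b) = ∑ᶠ p : α × β, g p.1 (f p.1 p.2) := by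
  rw [finsum_curry]
  · refine finsum_congr fun a => ?_
    by_cases ha : g a = 0
    · simp [ha]
    · refine (g a).map_finsum ?_
      refine (hs.image Prod.snd).subset fun b hb => ⟨(a, b), h a b ha hb, rfl⟩
  · refine hs.subset fun p hp => h p.1 p.2 ?_ ?_
    · rintro h0; simp [h0] at hp
    · rintro h0; simp [h0] at hp

theorem finsum_eq_of_injective (g : β → M) {φ : α → β} (hφ : Function.Injective φ)
    (h : ∀ b, g b ≠ 0 → ∃ a, φ a = b) : ∑ᶠ b, g b = ∑ᶠ a, g (φ a) := by
  rw [← finsum_mem_range (f := g) hφ, ← finsum_mem_univ g]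
  refine finsum_mem_inter_support_eq g _ _ ?_
  ext b
  simp only [Set.univ_inter, Set.mem_inter_iff, Set.mem_range, Function.mem_support]
  exact ⟨fun hb => ⟨h b hb, hb⟩, fun hb => hb.2⟩

theorem finsum_int_eq_nat (g : ℤ → M) (h : ∀ m, g m ≠ 0 → 0 ≤ m) :
    ∑ᶠ m : ℤ, g m = ∑ᶠ n : ℕ, g n :=
  finsum_eq_of_injective g Nat.cast_injective fun m hm => ⟨m.toNat, by have := h m hm; omega⟩

variable {R : Type*} [CommRing R] {V : Type*} [AddCommGroup V] [Module R V]

theorem finsum_smul_flat (c : α → R) (f : α → β → V) {s : Set (α × β)} (hs : s.Finite)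
    (h : ∀ a b, c a ≠ 0 → f a b ≠ 0 → (a, b) ∈ s) :
    ∑ᶠ a, c a • (∑ᶠ b, f a b) = ∑ᶠ p : α × β, c p.1 • f p.1 p.2 :=
  finsum_map_flat (fun a => DistribSMul.toAddMonoidHom V (c a)) f hs fun a b ha =>
    h a b fun h0 => ha (by ext; simp [h0])

theorem finsum_flat_smul (c : α → β → R) (u : α → V) {s : Set (α × β)} (hs : s.Finite)
    (h : ∀ a b, c a b ≠ 0 → u a ≠ 0 → (a, b) ∈ s) :
    ∑ᶠ a, (∑ᶠ b, c a b) • u a = ∑ᶠ p : α × β, c p.1 p.2 • u p.1 :=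
  finsum_map_flat (fun a => (smulAddHom R V).flip (u a)) c hs fun a b ha hb =>
    h a b hb fun h0 => ha (by ext; simp [h0])

/-- Associativity of the composition of two (locally finite) linear substitutions. -/
theorem finsum_smul_comm (c : α → R) (d : α → β → R) (u : β → V) {s : Set (α × β)}
    (hs : s.Finite) (h : ∀ a b, c a ≠ 0 → d a b ≠ 0 → u b ≠ 0 → (a, b) ∈ s) :
    ∑ᶠ a, c a • (∑ᶠ b, d a b • u b) = ∑ᶠ b, (∑ᶠ a, c a * d a b) • u b := by
  rw [finsum_smul_flat c (fun a b => d a b • u b) hs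
      (fun a b ha hb => h a b ha (left_ne_zero_of_smul hb) (right_ne_zero_of_smul hb)),
    finsum_flat_smul (fun b a => c a * d a b) u (s := Prod.swap ⁻¹' s)
      (hs.preimage Prod.swap_injective.injOn)
      (fun b a hb hu => h a b (left_ne_zero_of_mul hb) (right_ne_zero_of_mul hb) hu),
    ← finsum_comp_equiv (Equiv.prodComm β α)]
  exact finsum_congr fun p => by simp [smul_smul]

theorem finsum_mul_comm (c : α → R) (d : α → β → R) (u : β → R) {s : Set (α × β)}
    (hs : s.Finite) (h : ∀ a b, c a ≠ 0 → d a b ≠ 0 → u b ≠ 0 → (a, b) ∈ s) :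
    ∑ᶠ a, c a * (∑ᶠ b, d a b * u b) = ∑ᶠ b, (∑ᶠ a, c a * d a b) * u b :=
  finsum_smul_comm c d u hs h

end FinsumTools

section Ring

variable {R : Type*} [CommRing R]

/-- Double Laurent series in `z` and `w / z`; the coefficient of `z ^ k * w ^ l` is stored at
`(k + l, l)`. -/
abbrev Ser (R : Type*) [CommRing R] := HahnSeries (ℤ × ℤ) R

/-- The coefficient of `z ^ k * w ^ l`. -/
def cf (x : Ser R) (k l : ℤ) : R := x.coeff (k + l, l)

theorem coeff_eq_cf (x : Ser R) (p : ℤ × ℤ) : x.coeff p = cf x (p.1 - p.2) p.2 := by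
  simp [cf]

theorem cf_injective {x y : Ser R} (h : ∀ k l, cf x k l = cf y k l) : x = y := by
  ext p
  rw [coeff_eq_cf, coeff_eq_cf, h]

/-- Functions which are the coefficients of an element of `Ser R`. -/
def Bdd (f : ℤ → ℤ → R) : Prop := ∃ N : ℤ, ∀ k l, f k l ≠ 0 → N ≤ k + l ∧ N ≤ l

theorem bddBelow_of_isPWO {s : Set ℤ} (hs : s.IsPWO) : BddBelow s := by
  rcases s.eq_empty_or_nonempty with rfl | hne
  · exact bddBelow_empty
  · exact ⟨hs.isWF.min hne, fun x hx => hs.isWF.min_le hne hx⟩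

theorem cf_bdd (x : Ser R) : Bdd (cf x) := by
  obtain ⟨a, ha⟩ := bddBelow_of_isPWO (x.isPWO_support.image_of_monotone monotone_fst)
  obtain ⟨b, hb⟩ := bddBelow_of_isPWO (x.isPWO_support.image_of_monotone monotone_snd)
  refine ⟨min a b, fun k l h => ?_⟩
  have h1 := ha ⟨(k + l, l), h, rfl⟩
  have h2 := hb ⟨(k + l, l), h, rfl⟩
  simp only at h1 h2
  omega

open Classical in
/-- The series with given coefficients, provided they are bounded below. -/
noncomputable def mk (f : ℤ → ℤ → R) : Ser R :=
  if h : Bdd f then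
    { coeff := fun p => f (p.1 - p.2) p.2
      isPWO_support' := by
        obtain ⟨N, hN⟩ := h
        refine ((BddBelow.isWF (bddBelow_Ici (a := N))).isPWO.prod
          (BddBelow.isWF (bddBelow_Ici (a := N))).isPWO).mono fun p hp => ?_
        have := hN _ _ hp
        exact ⟨by simpa using this.1, this.2⟩ }
  else 0

theorem cf_mk {f : ℤ → ℤ → R} (h : Bdd f) (k l : ℤ) : cf (mk f) k l = f k l := by
  simp [cf, mk, h]

@[simp] theorem cf_zero (k l : ℤ) : cf (0 : Ser R) k l = 0 := rfl

@[simp] theorem cf_add (x y : Ser R) (k l : ℤ) : cf (x + y) k l = cf x k l + cf y k l := rfl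

@[simp] theorem cf_sub (x y : Ser R) (k l : ℤ) : cf (x - y) k l = cf x k l - cf y k l := rfl

@[simp] theorem cf_neg (x : Ser R) (k l : ℤ) : cf (-x) k l = -cf x k l := rfl

theorem cf_one (k l : ℤ) : cf (1 : Ser R) k l = oneS2 R k l := by
  have : ((k + l, l) : ℤ × ℤ) = 0 ↔ k = 0 ∧ l = 0 := by
    rw [Prod.mk_eq_zero]; omega
  simp [cf, HahnSeries.coeff_one, oneS2, this]

theorem cf_mul (x y : Ser R) (k l : ℤ) : cf (x * y) k l = mulS2 (cf x) (cf y) k l := by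
  classical
  rw [cf, HahnSeries.coeff_mul, mulS2, finsum_eq_sum_of_support_subset (s :=
    (Finset.antidiagonal x.isPWO_support y.isPWO_support (k + l, l)).image
      fun q => (q.1.1 - q.1.2, q.1.2))]
  · rw [Finset.sum_image]
    · refine Finset.sum_congr rfl fun q hq => ?_
      have h := (Finset.mem_antidiagonal.1 hq).2.2
      have h1 : q.1.1 + q.2.1 = k + l := congrArg Prod.fst h
      have h2 : q.1.2 + q.2.2 = l := congrArg Prod.snd h
      rw [coeff_eq_cf, coeff_eq_cf, smul_eq_mul]
      congr 2 <;> simp only <;> omega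
    · intro q hq q' hq' h
      have h := (Finset.mem_antidiagonal.1 hq).2.2
      have h1 : q.1.1 + q.2.1 = k + l := congrArg Prod.fst h
      have h2 : q.1.2 + q.2.2 = l := congrArg Prod.snd h
      have h' := (Finset.mem_antidiagonal.1 hq').2.2
      have h3 : q'.1.1 + q'.2.1 = k + l := congrArg Prod.fst h'
      have h4 : q'.1.2 + q'.2.2 = l := congrArg Prod.snd h'
      simp only [Prod.mk.injEq] at *
      ext <;> omega
  · intro p hp
    have h1 := left_ne_zero_of_smul hp
    have h2 := right_ne_zero_of_smul hp
    simp only [Finset.coe_image, Set.mem_image, Finset.mem_coe, Finset.mem_antidiagonal]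
    refine ⟨((p.1 + p.2, p.2), (k - p.1 + (l - p.2), l - p.2)), ⟨h1, h2, ?_⟩, ?_⟩
    · ext <;> simp; ring
    · ext <;> simp

/-- The monomial `z ^ i * w ^ j`. -/
noncomputable def mono (R : Type*) [CommRing R] (i j : ℤ) : Ser R := HahnSeries.single (i + j, j) 1

theorem cf_mono_mul (i j : ℤ) (x : Ser R) (k l : ℤ) :
    cf (mono R i j * x) k l = cf x (k - i) (l - j) := by
  rw [cf, mono, HahnSeries.coeff_single_mul, one_mul, cf, Prod.mk_sub_mk,
    show k + l - (i + j) = k - i + (l - j) by ring]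

theorem mono_mul_mono (i j i' j' : ℤ) : mono R i j * mono R i' j' = mono R (i + i') (j + j') := by
  rw [mono, mono, mono, HahnSeries.single_mul_single, Prod.mk_add_mk, one_mul,
    show i + j + (i' + j') = i + i' + (j + j') by ring]

theorem mono_zero : mono R 0 0 = 1 := rfl

theorem cf_mono (i j k l : ℤ) : cf (mono R i j) k l = if k = i ∧ l = j then 1 else 0 := by
  rw [← mul_one (mono R i j), cf_mono_mul, cf_one, oneS2]
  simp only [sub_eq_zero]

/-- The monomial `z ^ i * w ^ j` as a unit. -/
noncomputable def umono (R : Type*) [CommRing R] (i j : ℤ) : (Ser R)ˣ where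
  val := mono R i j
  inv := mono R (-i) (-j)
  val_inv := by rw [mono_mul_mono, add_neg_cancel, add_neg_cancel, mono_zero]
  inv_val := by rw [mono_mul_mono, neg_add_cancel, neg_add_cancel, mono_zero]

theorem umono_mul (i j i' j' : ℤ) : umono R i j * umono R i' j' = umono R (i + i') (j + j') :=
  Units.ext (mono_mul_mono i j i' j')

theorem umono_zpow (i j n : ℤ) : umono R i j ^ n = umono R (n * i) (n * j) := by
  induction n with
  | zero => simp only [zpow_zero, zero_mul]; exact Units.ext mono_zero.symm
  | succ n ih => rw [zpow_add_one, ih, umono_mul]; congr 1 <;> ring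
  | pred n ih =>
    rw [zpow_sub_one, ih, mul_inv_eq_iff_eq_mul, umono_mul]; congr 1 <;> ring

theorem cf_mul_ne_zero {x y : Ser R} {k l : ℤ} (h : cf (x * y) k l ≠ 0) :
    ∃ i j, cf x i j ≠ 0 ∧ cf y (k - i) (l - j) ≠ 0 := by
  rw [cf_mul] at h
  obtain ⟨p, hp⟩ : ∃ p : ℤ × ℤ, cf x p.1 p.2 • cf y (k - p.1) (l - p.2) ≠ 0 := by
    by_contra! h0
    exact h (finsum_eq_zero_of_forall_eq_zero h0)
  exact ⟨p.1, p.2, left_ne_zero_of_smul hp, right_ne_zero_of_smul hp⟩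

/-- The `n`-th power of the ideal generated by `z` and `w / z` in `R⟦z, w / z⟧`, up to
degree considerations: `z ^ k * w ^ l` has bidegree `(k + l, l)`. -/
def Fil (n : ℤ) (x : Ser R) : Prop :=
  ∀ k l, cf x k l ≠ 0 → 0 ≤ k + l ∧ 0 ≤ l ∧ n ≤ k + 2 * l

theorem Fil.mul {m n : ℤ} {x y : Ser R} (hx : Fil m x) (hy : Fil n y) : Fil (m + n) (x * y) := by
  intro k l h
  obtain ⟨i, j, h1, h2⟩ := cf_mul_ne_zero h
  have := hx _ _ h1
  have := hy _ _ h2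
  omega

theorem fil_one : Fil 0 (1 : Ser R) := by
  intro k l h
  rw [cf_one, oneS2] at h
  have := (ite_ne_right_iff.1 h).1
  omega

theorem Fil.mono {m n : ℤ} (hmn : m ≤ n) {x : Ser R} (hx : Fil n x) : Fil m x := by
  intro k l h
  have := hx _ _ h
  omega

theorem Fil.pow {x : Ser R} (hx : Fil 1 x) (n : ℕ) : Fil n (x ^ n) := by
  induction n with
  | zero => simpa using fil_one
  | succ n ih => rw [pow_succ]; push_cast; exact ih.mul hx

theorem Fil.pow_mul_pow {x y : Ser R} (hx : Fil 1 x) (hy : Fil 1 y) (m n : ℕ) :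
    Fil (m + n) (x ^ m * y ^ n) := (hx.pow m).mul (hy.pow n)

end Ring

section Evaluation

variable {R : Type*} [CommRing R]

theorem finsum_mul_finsum {α β : Type*} (f : α → R) (g : β → R) (hf : f.support.Finite)
    (hg : g.support.Finite) :
    (∑ᶠ a, f a) * (∑ᶠ b, g b) = ∑ᶠ p : α × β, f p.1 * g p.2 := by
  rw [finsum_mul' _ _ hf, finsum_curry]
  · exact finsum_congr fun a => mul_finsum' _ _ hg
  · refine (hf.prod hg).subset fun p hp => ⟨left_ne_zero_of_mul hp, right_ne_zero_of_mul hp⟩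

theorem exists_of_finsum_ne_zero {α M : Type*} [AddCommMonoid M] {f : α → M}
    (h : ∑ᶠ a, f a ≠ 0) : ∃ a, f a ≠ 0 := by
  by_contra! h0
  exact h (finsum_eq_zero_of_forall_eq_zero h0)

theorem mulS2_ne_zero {f u : ℤ → ℤ → R} {k l : ℤ} (h : mulS2 f u k l ≠ 0) :
    ∃ i j, f i j ≠ 0 ∧ u (k - i) (l - j) ≠ 0 := by
  obtain ⟨p, hp⟩ := exists_of_finsum_ne_zero h
  exact ⟨p.1, p.2, left_ne_zero_of_smul hp, right_ne_zero_of_smul hp⟩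

/-- Coefficients of `∑ f i j * e i j`. -/
noncomputable def ev (e : ℤ → ℤ → Ser R) (f : ℤ → ℤ → R) (k l : ℤ) : R :=
  ∑ᶠ p : ℤ × ℤ, f p.1 p.2 * cf (e p.1 p.2) k l

theorem ev_ne_zero {e : ℤ → ℤ → Ser R} {f : ℤ → ℤ → R} {k l : ℤ} (h : ev e f k l ≠ 0) :
    ∃ i j, f i j ≠ 0 ∧ cf (e i j) k l ≠ 0 := by
  obtain ⟨p, hp⟩ := exists_of_finsum_ne_zero h
  exact ⟨p.1, p.2, left_ne_zero_of_mul hp, right_ne_zero_of_mul hp⟩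

theorem ev_mulS2 (e : ℤ → ℤ → Ser R) (f u : ℤ → ℤ → R)
    (hmul : ∀ i j i' j', f i j ≠ 0 → u i' j' ≠ 0 → e (i + i') (j + j') = e i j * e i' j')
    (hf : ∀ k l, {p : ℤ × ℤ | f p.1 p.2 ≠ 0 ∧ cf (e p.1 p.2) k l ≠ 0}.Finite)
    (hu : ∀ k l, {p : ℤ × ℤ | u p.1 p.2 ≠ 0 ∧ cf (e p.1 p.2) k l ≠ 0}.Finite)
    (hfu : ∀ k l, {t : ((ℤ × ℤ) × ℤ × ℤ) × ℤ × ℤ | f t.1.1.1 t.1.1.2 ≠ 0 ∧ u t.1.2.1 t.1.2.2 ≠ 0 ∧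
      cf (e t.1.1.1 t.1.1.2) t.2.1 t.2.2 ≠ 0 ∧
      cf (e t.1.2.1 t.1.2.2) (k - t.2.1) (l - t.2.2) ≠ 0}.Finite) (k l : ℤ) :
    ev e (mulS2 f u) k l = mulS2 (ev e f) (ev e u) k l := by
  have h1 : ev e (mulS2 f u) k l =
      ∑ᶠ q : (ℤ × ℤ) × ℤ × ℤ, (f q.1.1 q.1.2 * u q.2.1 q.2.2) *
        cf (e q.1.1 q.1.2 * e q.2.1 q.2.2) k l := by
    simp only [ev, mulS2, ← smul_eq_mul (_ : R) (cf _ _ _)]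
    let φ : (ℤ × ℤ) × (ℤ × ℤ) ≃ (ℤ × ℤ) × (ℤ × ℤ) :=
      { toFun := fun q => (q.2, q.1 - q.2)
        invFun := fun q => (q.1 + q.2, q.1)
        left_inv := fun q => by simp
        right_inv := fun q => by simp }
    rw [finsum_flat_smul (s := φ ⁻¹' ((fun t => t.1) '' (_ : Set _)))
      (hs := ((hfu k l).image _).preimage φ.injective.injOn)]
    · symm
      rw [← finsum_comp_equiv φ]
      refine finsum_congr fun q => ?_
      by_cases hq : f q.2.1 q.2.2 = 0
      · simp [φ, hq]
      by_cases hq' : u (q.1.1 - q.2.1) (q.1.2 - q.2.2) = 0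
      · simp [φ, hq']
      have := hmul _ _ _ _ hq hq'
      simp only [add_sub_cancel] at this
      simp [φ, this]
    · intro P p h1 h2
      have h3 := left_ne_zero_of_smul h1
      have h4 := right_ne_zero_of_smul h1
      have := hmul _ _ _ _ h3 h4
      simp only [add_sub_cancel] at this
      rw [this] at h2
      obtain ⟨a, b, h5, h6⟩ := cf_mul_ne_zero h2
      exact ⟨((p, P - p), (a, b)), ⟨h3, h4, h5, h6⟩, rfl⟩
  rw [h1]
  simp only [cf_mul, mulS2, ← smul_eq_mul (_ * _ : R) (finsum _)]
  rw [finsum_smul_flat _ _ (hfu k l)]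
  · rw [← finsum_comp_equiv (Equiv.prodComm _ _), finsum_curry]
    · refine finsum_congr fun ab => ?_
      simp only [ev, smul_eq_mul]
      rw [finsum_mul_finsum]
      · exact finsum_congr fun q => by simp; ring
      · exact (hf ab.1 ab.2).subset fun p hp =>
          ⟨left_ne_zero_of_mul hp, right_ne_zero_of_mul hp⟩
      · exact (hu (k - ab.1) (l - ab.2)).subset fun p hp =>
          ⟨left_ne_zero_of_mul hp, right_ne_zero_of_mul hp⟩
    · refine ((hfu k l).preimage (Equiv.prodComm _ _).injective.injOn).subset fun q hq => ?_
      have h2 := left_ne_zero_of_smul hq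
      have h3 := right_ne_zero_of_smul hq
      exact ⟨left_ne_zero_of_mul h2, right_ne_zero_of_mul h2, left_ne_zero_of_smul h3,
        right_ne_zero_of_smul h3⟩
  · intro q ab h2 h3
    exact ⟨left_ne_zero_of_mul h2, right_ne_zero_of_mul h2, left_ne_zero_of_smul h3,
      right_ne_zero_of_smul h3⟩

/-- Functions supported in the first quadrant. -/
def NN (f : ℤ → ℤ → R) : Prop := ∀ i j, f i j ≠ 0 → 0 ≤ i ∧ 0 ≤ j

theorem NN.mulS2 {f u : ℤ → ℤ → R} (hf : NN f) (hu : NN u) : NN (mulS2 f u) := by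
  intro k l h
  obtain ⟨i, j, h1, h2⟩ := mulS2_ne_zero h
  have := hf _ _ h1
  have := hu _ _ h2
  omega

theorem nn_oneS2 : NN (oneS2 R) := by
  intro k l h
  have := (ite_ne_right_iff.1 h).1
  omega

theorem NN.pow2 {f : ℤ → ℤ → R} (hf : NN f) (n : ℕ) : NN (pow2 f n) := by
  induction n with
  | zero => exact nn_oneS2
  | succ n ih => exact hf.mulS2 ih

/-- `X ^ i * Y ^ j` for nonnegative `i`, `j`. -/
noncomputable def powers (X Y : Ser R) (i j : ℤ) : Ser R := X ^ i.toNat * Y ^ j.toNat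

/-- Substitution of two points of the maximal ideal into a power series in two variables. -/
noncomputable def ev1 (X Y : Ser R) (f : ℤ → ℤ → R) : Ser R := mk (ev (powers X Y) f)

variable {X Y : Ser R} (hX : Fil 1 X) (hY : Fil 1 Y)
include hX hY

theorem fil_powers (i j : ℤ) : Fil (i + j) (powers X Y i j) :=
  (hX.pow_mul_pow hY i.toNat j.toNat).mono (by omega)

theorem cf_ev1 (f : ℤ → ℤ → R) (k l : ℤ) : cf (ev1 X Y f) k l = ev (powers X Y) f k l := by
  refine cf_mk ⟨0, fun k l h => ?_⟩ k l
  obtain ⟨i, j, -, h2⟩ := ev_ne_zero h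
  have := fil_powers hX hY _ _ _ _ h2
  omega

theorem fil_ev1 {n : ℤ} {f : ℤ → ℤ → R} (hf : ∀ i j, f i j ≠ 0 → n ≤ i + j) :
    Fil n (ev1 X Y f) := by
  intro k l h
  rw [cf_ev1 hX hY] at h
  obtain ⟨i, j, h1, h2⟩ := ev_ne_zero h
  have := fil_powers hX hY _ _ _ _ h2
  have := hf _ _ h1
  omega

theorem finite_powers {f : ℤ → ℤ → R} (hf : NN f) (k l : ℤ) :
    {p : ℤ × ℤ | f p.1 p.2 ≠ 0 ∧ cf (powers X Y p.1 p.2) k l ≠ 0}.Finite := by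
  refine (Set.finite_Icc ((0, 0) : ℤ × ℤ) (k + 2 * l, k + 2 * l)).subset fun p hp => ?_
  have h1 := hf _ _ hp.1
  have h2 := fil_powers hX hY _ _ _ _ hp.2
  simp only [Set.mem_Icc, Prod.le_def]
  omega

theorem ev1_mulS2 {f u : ℤ → ℤ → R} (hf : NN f) (hu : NN u) :
    ev1 X Y (mulS2 f u) = ev1 X Y f * ev1 X Y u := by
  refine cf_injective fun k l => ?_
  rw [cf_mul, cf_ev1 hX hY, ev_mulS2 _ _ _ _ (finite_powers hX hY hf) (finite_powers hX hY hu)]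
  · congr 1 <;> ext <;> rw [cf_ev1 hX hY]
  · intro k l
    refine (Set.finite_Icc ((((0, 0), (0, 0)), (-l, 0)) : ((ℤ × ℤ) × ℤ × ℤ) × ℤ × ℤ)
      (((k + 2 * l, k + 2 * l), (k + 2 * l, k + 2 * l)), (k + l, l))).subset ?_
    rintro ⟨⟨⟨i, j⟩, i', j'⟩, a, b⟩ ⟨h1, h2, h3, h4⟩
    have h1 := hf _ _ h1
    have h2 := hu _ _ h2
    have h3 := fil_powers hX hY _ _ _ _ h3
    have h4 := fil_powers hX hY _ _ _ _ h4
    simp only [Set.mem_Icc, Prod.le_def] at *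
    omega
  · intro i j i' j' h1 h2
    have h1 := hf _ _ h1
    have h2 := hu _ _ h2
    rw [powers, powers, powers, Int.toNat_add h1.1 h2.1, Int.toNat_add h1.2 h2.2]
    ring

theorem ev1_oneS2 : ev1 X Y (oneS2 R) = 1 := by
  refine cf_injective fun k l => ?_
  rw [cf_ev1 hX hY, ev, finsum_eq_single _ (0, 0)]
  · simp [oneS2, powers]
  · intro p hp
    have : ¬ (p.1 = 0 ∧ p.2 = 0) := fun h => hp (Prod.ext h.1 h.2)
    simp [oneS2, this]

theorem ev1_pow2 {f : ℤ → ℤ → R} (hf : NN f) (n : ℕ) :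
    ev1 X Y (pow2 f n) = ev1 X Y f ^ n := by
  induction n with
  | zero => exact (ev1_oneS2 hX hY).trans (pow_zero _).symm
  | succ n ih => rw [pow2, ev1_mulS2 hX hY hf (hf.pow2 n), ih, pow_succ']

end Evaluation

section UnitEvaluation

variable {R : Type*} [CommRing R]

/-- A pair of units of the shape `z * (1 + ⋯)`, `w * (1 + ⋯)` up to sign and reordering: enough
to substitute it into elements of `Ser R`. -/
def Adm (X Y : (Ser R)ˣ) : Prop :=
  ∀ i j k l : ℤ, cf ((X ^ i * Y ^ j : (Ser R)ˣ) : Ser R) k l ≠ 0 → i + j ≤ k + l ∧ j ≤ l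

/-- `X ^ i * Y ^ j` for integers `i`, `j`. -/
noncomputable def zpowers (X Y : (Ser R)ˣ) (i j : ℤ) : Ser R := ((X ^ i * Y ^ j : (Ser R)ˣ) : Ser R)

theorem zpowers_add (X Y : (Ser R)ˣ) (i j i' j' : ℤ) :
    zpowers X Y (i + i') (j + j') = zpowers X Y i j * zpowers X Y i' j' := by
  rw [zpowers, zpowers, zpowers, ← Units.val_mul, zpow_add, zpow_add, mul_mul_mul_comm]

variable {X Y : (Ser R)ˣ} (h : Adm X Y)

include h in
theorem cf_ev2 (x : Ser R) (k l : ℤ) :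
    cf (mk (ev (zpowers X Y) (cf x))) k l = ev (zpowers X Y) (cf x) k l := by
  obtain ⟨N, hN⟩ := cf_bdd x
  refine cf_mk ⟨N, fun k l hkl => ?_⟩ k l
  obtain ⟨i, j, h1, h2⟩ := ev_ne_zero hkl
  have := hN _ _ h1
  have := h _ _ _ _ h2
  omega

include h in
theorem finite_zpowers (x : Ser R) (k l : ℤ) :
    {p : ℤ × ℤ | cf x p.1 p.2 ≠ 0 ∧ cf (zpowers X Y p.1 p.2) k l ≠ 0}.Finite := by
  obtain ⟨N, hN⟩ := cf_bdd x
  refine (Set.finite_Icc ((N - l, N) : ℤ × ℤ) (k + l - N, l)).subset fun p hp => ?_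
  have h1 := hN _ _ hp.1
  have h2 := h _ _ _ _ hp.2
  simp only [Set.mem_Icc, Prod.le_def]
  omega

/-- Substitution of a pair of units into elements of `Ser R`. -/
noncomputable def ev2 : Ser R →* Ser R where
  toFun x := mk (ev (zpowers X Y) (cf x))
  map_one' := by
    refine cf_injective fun k l => ?_
    rw [cf_ev2 h, ev, finsum_eq_single _ (0, 0)]
    · simp [cf_one, oneS2, zpowers]
    · intro p hp
      have : ¬ (p.1 = 0 ∧ p.2 = 0) := fun h => hp (Prod.ext h.1 h.2)
      simp [cf_one, oneS2, this]
  map_mul' x y := by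
    refine cf_injective fun k l => ?_
    rw [cf_ev2 h, cf_mul, show cf (x * y) = mulS2 (cf x) (cf y) from
      funext fun k => funext fun l => cf_mul x y k l,
      ev_mulS2 _ _ _ _ (finite_zpowers h x) (finite_zpowers h y)]
    · congr 1 <;> ext <;> rw [cf_ev2 h]
    · intro k l
      obtain ⟨N, hN⟩ := cf_bdd x
      obtain ⟨N', hN'⟩ := cf_bdd y
      refine (Set.finite_Icc ((((N - l + N', N), (N' - l + N, N')), (N - l + N', N)) :
        ((ℤ × ℤ) × ℤ × ℤ) × ℤ × ℤ)
        (((k + l - N' - N, l - N'), (k + l - N - N', l - N)),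
          (k + l - N' - N, l - N'))).subset ?_
      rintro ⟨⟨⟨i, j⟩, i', j'⟩, a, b⟩ ⟨h1, h2, h3, h4⟩
      have h1 := hN _ _ h1
      have h2 := hN' _ _ h2
      have h3 := h _ _ _ _ h3
      have h4 := h _ _ _ _ h4
      simp only [Set.mem_Icc, Prod.le_def] at *
      omega
    · intros
      exact zpowers_add _ _ _ _ _ _

theorem cf_ev2_apply (x : Ser R) (k l : ℤ) :
    cf (ev2 h x) k l = ∑ᶠ p : ℤ × ℤ, cf x p.1 p.2 * cf (zpowers X Y p.1 p.2) k l :=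
  cf_ev2 h x k l

theorem coe_ev2_zpow (U : (Ser R)ˣ) (n : ℤ) :
    ev2 h ((U ^ n : (Ser R)ˣ) : Ser R) = ((Units.map (ev2 h) U ^ n : (Ser R)ˣ) : Ser R) := by
  rw [← map_zpow]; rfl

end UnitEvaluation

section Swap

variable {R : Type*} [CommRing R] 

theorem mulS2_swap (f g : ℤ → ℤ → R) (k l : ℤ) :
    mulS2 (fun i j => f j i) (fun i j => g j i) k l = mulS2 f g l k := by
  rw [mulS2, mulS2, ← finsum_comp_equiv (Equiv.prodComm ℤ ℤ)]
  rfl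

theorem pow2_swap (f : ℤ → ℤ → R) (n : ℕ) (k l : ℤ) :
    pow2 (fun i j => f j i) n k l = pow2 f n l k := by
  induction n generalizing k l with
  | zero => simp only [pow2, oneS2, and_comm]
  | succ n ih =>
    rw [pow2, pow2, ← mulS2_swap]
    congr 1
    funext i j
    exact ih j i

/-- A series in `z`, seen as a series in `z` and `w`. -/
def axz (f : ℤ → R) (k l : ℤ) : R := if l = 0 then f k else 0

/-- A series in `w`, seen as a series in `z` and `w`. -/
def axw (f : ℤ → R) (k l : ℤ) : R := axz f l k

theorem mulS2_axz (f g : ℤ → R) : mulS2 (axz f) (axz g) = axz (mulS f g) := by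
  funext k l
  rw [mulS2, finsum_eq_of_injective (φ := fun i : ℤ => (i, (0 : ℤ)))]
  · simp [axz, mulS]
    split_ifs with h <;> simp
  · intro i j h; simpa using h
  · intro p hp
    have := left_ne_zero_of_smul hp
    exact ⟨p.1, Prod.ext rfl (ite_ne_right_iff.1 this).1.symm⟩

theorem pow2_axz (f : ℤ → R) (n : ℕ) : pow2 (axz f) n = axz (pow1 f n) := by
  induction n with
  | zero =>
    funext k l
    simp only [pow2, pow1, oneS2, axz, oneS]
    split_ifs <;> simp_all
  | succ n ih => rw [pow2, ih, mulS2_axz, pow1]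

theorem pow2_axw (f : ℤ → R) (n : ℕ) : pow2 (axw f) n = axw (pow1 f n) := by
  funext k l
  rw [show axw f = fun i j => axz f j i from rfl, pow2_swap, pow2_axz]
  rfl

end Swap

section Powers

variable {R : Type*} [CommRing R] 

theorem zbinom_succ (n : ℤ) (m : ℕ) :
    zbinom (n + 1) (m + 1) = zbinom n m + zbinom n (m + 1) := by
  unfold zbinom
  rcases le_or_gt 0 n with hn | hn
  · lift n to ℕ using hn
    simp only [Int.natCast_nonneg, if_true, if_pos (by omega : (0 : ℤ) ≤ n + 1), Int.toNat_natCast,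
      Int.toNat_natCast_add_one]
    exact_mod_cast Nat.choose_succ_succ n m
  · rw [if_neg (by omega : ¬ 0 ≤ n), if_neg (by omega : ¬ 0 ≤ n)]
    rcases eq_or_ne n (-1) with rfl | hn'
    · simp [pow_succ]
    · obtain ⟨t, rfl⟩ : ∃ t : ℕ, n = -(t + 2) := ⟨(-n - 2).toNat, by omega⟩
      rw [if_neg (by omega),
        show ((m + 1 : ℕ) - (-(t + 2) + 1 : ℤ) - 1).toNat = m + t + 1 by omega,
        show ((m : ℤ) - -(t + 2 : ℤ) - 1).toNat = m + t + 1 by omega,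
        show ((m + 1 : ℕ) - -(t + 2 : ℤ) - 1).toNat = m + t + 1 + 1 by omega,
        Nat.choose_succ_succ (m + t + 1) m]
      push_cast
      ring

theorem zbinom_zero_right (n : ℤ) : zbinom n 0 = 1 := by
  simp [zbinom]

theorem zbinom_zero_succ (m : ℕ) : zbinom 0 (m + 1) = 0 := by
  simp [zbinom]

theorem cf_pow (x : Ser R) (n : ℕ) (k l : ℤ) : cf (x ^ n) k l = pow2 (cf x) n k l := by
  induction n generalizing k l with
  | zero => rw [pow_zero, cf_one]; rfl
  | succ n ih =>
    rw [pow_succ', cf_mul, pow2]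
    congr 1
    funext i j
    exact ih i j

/-- The Newton expansion of `(1 + H) ^ n`. -/
noncomputable def newton (H : Ser R) (n : ℤ) : Ser R :=
  mk fun k l => ∑ᶠ m : ℕ, (zbinom n m : R) * cf (H ^ m) k l

variable {H : Ser R} (hH : Fil 1 H)
include hH

theorem newton_aux {n k l : ℤ} (h : ∑ᶠ m : ℕ, (zbinom n m : R) * cf (H ^ m) k l ≠ 0) :
    0 ≤ k + l ∧ 0 ≤ l ∧ 0 ≤ k + 2 * l := by
  obtain ⟨m, hm⟩ := exists_of_finsum_ne_zero h
  have := hH.pow m _ _ (right_ne_zero_of_mul hm)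
  omega

theorem cf_newton (n k l : ℤ) :
    cf (newton H n) k l = ∑ᶠ m : ℕ, (zbinom n m : R) * cf (H ^ m) k l :=
  cf_mk ⟨0, fun k l h => by have := newton_aux hH h; omega⟩ k l

theorem fil_newton (n : ℤ) : Fil 0 (newton H n) := fun k l h =>
  newton_aux hH (n := n) (by rwa [cf_newton hH] at h)

theorem finsum_newton (c : ℕ → R) (j : ℕ) (k l : ℤ) (N : ℕ) (hN : k + 2 * l < N) :
    ∑ᶠ m : ℕ, c m * cf (H ^ (m + j)) k l = ∑ m ∈ Finset.range N, c m * cf (H ^ (m + j)) k l := by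
  refine finsum_eq_sum_of_support_subset _ fun m hm => ?_
  have := hH.pow (m + j) _ _ (right_ne_zero_of_mul hm)
  simp only [Finset.coe_range, Set.mem_Iio]
  push_cast at this
  omega

theorem newton_zero : newton H 0 = 1 := by
  refine cf_injective fun k l => ?_
  rw [cf_newton hH, finsum_eq_single _ 0]
  · simp [zbinom_zero_right]
  · intro m hm
    obtain ⟨m, rfl⟩ := Nat.exists_eq_succ_of_ne_zero hm
    simp [zbinom_zero_succ]

theorem newton_succ (n : ℤ) : newton H (n + 1) = (1 + H) * newton H n := by
  refine cf_injective fun k l => ?_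
  have h1 : cf (H * newton H n) k l = ∑ᶠ m : ℕ, (zbinom n m : R) * cf (H ^ (m + 1)) k l := by
    rw [cf_mul, mulS2]
    simp only [cf_newton hH, smul_eq_mul, fun (m : ℕ) k l => mul_comm (zbinom n m : R) (cf (H ^ m) k l)]
    rw [finsum_mul_comm (s := Set.Icc ((-l, 0), 0) ((k + l, l), (k + 2 * l).toNat))
      (hs := Set.finite_Icc _ _)]
    · refine finsum_congr fun m => ?_
      rw [mul_comm, pow_succ', cf_mul]
      rfl
    · intro p m h1 h2 _
      have h1 := hH _ _ h1
      have h2 := hH.pow _ _ _ h2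
      simp only [Set.mem_Icc, Prod.le_def]
      omega
  rw [add_mul, one_mul, cf_add, h1, cf_newton hH, cf_newton hH]
  have hN : k + 2 * l < (k + 2 * l + 1).toNat := by omega
  have e1 := finsum_newton hH (fun m => (zbinom (n + 1) m : R)) 0 k l
    ((k + 2 * l + 1).toNat + 1) (by omega)
  have e2 := finsum_newton hH (fun m => (zbinom n m : R)) 0 k l
    ((k + 2 * l + 1).toNat + 1) (by omega)
  simp only [add_zero] at e1 e2
  rw [e1, e2, finsum_newton hH (fun m => (zbinom n m : R)) 1 k l _ hN,
    Finset.sum_range_succ', Finset.sum_range_succ']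
  simp only [zbinom_succ, zbinom_zero_right]
  push_cast
  simp only [add_mul, Finset.sum_add_distrib]
  ring

/-- The unit `1 + H`. -/
noncomputable def oneAdd : (Ser R)ˣ where
  val := 1 + H
  inv := newton H (-1)
  val_inv := by rw [← newton_succ hH]; exact newton_zero hH
  inv_val := by rw [mul_comm, ← newton_succ hH]; exact newton_zero hH

theorem coe_oneAdd_zpow (n : ℤ) : ((oneAdd hH ^ n : (Ser R)ˣ) : Ser R) = newton H n := by
  induction n with
  | zero => rw [zpow_zero, newton_zero hH]; rfl
  | succ n ih => rw [zpow_add_one, Units.val_mul, ih, newton_succ hH, mul_comm]; rfl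
  | pred n ih =>
    have := newton_succ hH (-n - 1)
    rw [sub_add_cancel, ← ih] at this
    rw [zpow_sub_one, Units.val_mul, this, mul_comm]
    exact (oneAdd hH).inv_mul_cancel_left _

omit hH in
theorem coe_umono_zpow (i j n : ℤ) :
    ((umono R i j ^ n : (Ser R)ˣ) : Ser R) = mono R (n * i) (n * j) := by
  rw [umono_zpow]; rfl

omit hH in
theorem cf_neg_one_zpow_mul (x : Ser R) (n k l : ℤ) :
    cf ((((-1) ^ n : (Ser R)ˣ) : Ser R) * x) k l = (msign n : R) * cf x k l := by
  rcases Int.even_or_odd n with h | h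
  · rw [h.neg_one_zpow]; simp [msign, h]
  · rw [h.neg_one_zpow]; simp [msign, h]

end Powers

section Units

variable {R : Type*} [CommRing R]

/-- Power series `G` in `z` and `w` with `G ≡ z` modulo `w`. -/
def IsZ (G : ℤ → ℤ → R) : Prop := NN G ∧ ∀ i, G i 0 = if i = 1 then 1 else 0

theorem hzS_ne_zero {G : ℤ → ℤ → R} (hG : IsZ G) {i j : ℤ} (h : hzS G i j ≠ 0) :
    0 ≤ i + 1 ∧ 1 ≤ j := by
  by_cases hj : j = 0
  · subst hj
    exfalso
    apply h
    rw [hzS, hG.2, oneS2]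
    simp
  · have : oneS2 R i j = 0 := by simp [oneS2, hj]
    rw [hzS, this, sub_zero] at h
    have := hG.1 _ _ h
    omega

theorem cf_mk_hzS {G : ℤ → ℤ → R} (hG : IsZ G) : cf (mk (hzS G)) = hzS G := by
  funext k l
  exact cf_mk ⟨0, fun k l h => by have := hzS_ne_zero hG h; omega⟩ k l

theorem fil_hzS {G : ℤ → ℤ → R} (hG : IsZ G) : Fil 1 (mk (hzS G)) := by
  intro k l h
  rw [cf_mk_hzS hG] at h
  have := hzS_ne_zero hG h
  omega

theorem NN.cf_mk {G : ℤ → ℤ → R} (hG : NN G) : cf (mk G) = G := by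
  funext k l
  exact VertexF.cf_mk ⟨0, fun k l h => by have := hG _ _ h; omega⟩ k l

/-- A power series `G ≡ z` modulo `w` as a unit. -/
noncomputable def zunit {G : ℤ → ℤ → R} (hG : IsZ G) : (Ser R)ˣ :=
  umono R 1 0 * oneAdd (fil_hzS hG)

theorem coe_zunit {G : ℤ → ℤ → R} (hG : IsZ G) : (zunit hG : Ser R) = mk G := by
  refine cf_injective fun k l => ?_
  change cf (mono R 1 0 * (1 + mk (hzS G))) k l = _
  rw [cf_mono_mul, cf_add, cf_one, cf_mk_hzS hG, hG.1.cf_mk, hzS]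
  simp

theorem cf_zunit_zpow {G : ℤ → ℤ → R} (hG : IsZ G) (n k l : ℤ) :
    cf ((zunit hG ^ n : (Ser R)ˣ) : Ser R) k l = izwPow G n k l := by
  rw [zunit, mul_zpow, Units.val_mul, coe_oneAdd_zpow, coe_umono_zpow, cf_mono_mul,
    cf_newton (fil_hzS hG), izwPow]
  refine finsum_congr fun m => ?_
  rw [cf_pow, cf_mk_hzS hG]
  simp

theorem fil_zero_zpow {H : Ser R} (hH : Fil 1 H) (n : ℤ) :
    Fil 0 ((oneAdd hH ^ n : (Ser R)ˣ) : Ser R) := by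
  rw [coe_oneAdd_zpow]
  exact fil_newton hH n

theorem cf_zunit_zpow_nat {G : ℤ → ℤ → R} (hG : IsZ G) (n : ℕ) (k l : ℤ) :
    cf ((zunit hG ^ (n : ℤ) : (Ser R)ˣ) : Ser R) k l = pow2 G n k l := by
  rw [zpow_natCast, Units.val_pow_eq_pow_val, coe_zunit, cf_pow, hG.1.cf_mk]

theorem izwPow_ne_zero {G : ℤ → ℤ → R} (hG : IsZ G) {n k l : ℤ} (h : izwPow G n k l ≠ 0) :
    n ≤ k + l ∧ 0 ≤ l ∧ n ≤ k + 2 * l := by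
  rw [← cf_zunit_zpow hG, zunit, mul_zpow, Units.val_mul, coe_umono_zpow, cf_mono_mul] at h
  have := fil_zero_zpow (fil_hzS hG) n _ _ h
  omega

/-- Power series `f` in one variable with `f = -z + O(z²)`. -/
def IsNeg (f : ℤ → R) : Prop := (∀ n < 1, f n = 0) ∧ f 1 = -1

variable {f : ℤ → R} (hf : IsNeg f)
include hf

theorem hS_ne_zero {i : ℤ} (h : hS f i ≠ 0) : 1 ≤ i := by
  by_contra! hi
  apply h
  rcases eq_or_ne i 0 with rfl | h0
  · simp [hS, hf.2, oneS]
  · simp [hS, hf.1 (i + 1) (by omega), oneS, h0]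

theorem cf_mk_axz_hS : cf (mk (axz (hS f))) = axz (hS f) := by
  funext k l
  refine cf_mk ⟨0, fun k l h => ?_⟩ k l
  have h1 := hS_ne_zero hf (ite_ne_right_iff.1 h).2
  have h2 := (ite_ne_right_iff.1 h).1
  omega

theorem cf_mk_axw_hS : cf (mk (axw (hS f))) = axw (hS f) := by
  funext k l
  refine cf_mk ⟨0, fun k l h => ?_⟩ k l
  have h1 := hS_ne_zero hf (ite_ne_right_iff.1 h).2
  have h2 := (ite_ne_right_iff.1 h).1
  omega

theorem fil_axz_hS : Fil 1 (mk (axz (hS f))) := by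
  intro k l h
  rw [cf_mk_axz_hS hf] at h
  have h1 := hS_ne_zero hf (ite_ne_right_iff.1 h).2
  have h2 := (ite_ne_right_iff.1 h).1
  omega

theorem fil_axw_hS : Fil 1 (mk (axw (hS f))) := by
  intro k l h
  rw [cf_mk_axw_hS hf] at h
  have h1 := hS_ne_zero hf (ite_ne_right_iff.1 h).2
  have h2 := (ite_ne_right_iff.1 h).1
  omega

/-- `f(z)` as a unit. -/
noncomputable def zneg : (Ser R)ˣ := -1 * (umono R 1 0 * oneAdd (fil_axz_hS hf))

/-- `f(w)` as a unit. -/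
noncomputable def wneg : (Ser R)ˣ := -1 * (umono R 0 1 * oneAdd (fil_axw_hS hf))

theorem cf_zneg_zpow (n k l : ℤ) :
    cf ((zneg hf ^ n : (Ser R)ˣ) : Ser R) k l = axz (iotaPow f n) k l := by
  rw [zneg, mul_zpow, Units.val_mul, cf_neg_one_zpow_mul, mul_zpow, Units.val_mul,
    coe_oneAdd_zpow, coe_umono_zpow, cf_mono_mul, cf_newton (fil_axz_hS hf)]
  simp only [cf_pow, cf_mk_axz_hS hf, pow2_axz]
  simp only [axz, mul_zero, sub_zero, mul_one, iotaPow]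
  split_ifs <;> simp

theorem cf_wneg_zpow (n k l : ℤ) :
    cf ((wneg hf ^ n : (Ser R)ˣ) : Ser R) k l = axw (iotaPow f n) k l := by
  rw [wneg, mul_zpow, Units.val_mul, cf_neg_one_zpow_mul, mul_zpow, Units.val_mul,
    coe_oneAdd_zpow, coe_umono_zpow, cf_mono_mul, cf_newton (fil_axw_hS hf)]
  simp only [cf_pow, cf_mk_axw_hS hf, pow2_axw]
  simp only [axz, axw, mul_zero, sub_zero, mul_one, iotaPow]
  split_ifs <;> simp

theorem iotaPow_ne_zero {n k : ℤ} (h : iotaPow f n k ≠ 0) : n ≤ k := by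
  have h1 : cf ((zneg hf ^ n : (Ser R)ˣ) : Ser R) k 0 ≠ 0 := by
    rw [cf_zneg_zpow]; simpa [axz] using h
  rw [zneg, mul_zpow, Units.val_mul, cf_neg_one_zpow_mul, mul_zpow, Units.val_mul,
    coe_umono_zpow, cf_mono_mul] at h1
  have := fil_zero_zpow (fil_axz_hS hf) n _ _ (right_ne_zero_of_mul h1)
  omega

theorem coe_zneg : (zneg hf : Ser R) = mk (axz f) := by
  have hb : Bdd (axz f) := ⟨0, fun k l h => by
    have h2 := (ite_ne_right_iff.1 h)
    have : ¬ k < 1 := fun h3 => h2.2 (hf.1 k h3)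
    omega⟩
  refine cf_injective fun k l => ?_
  rw [cf_mk hb]
  change cf (-1 * (mono R 1 0 * (1 + mk (axz (hS f))))) k l = _
  rw [neg_one_mul, cf_neg, cf_mono_mul, cf_add, cf_one, cf_mk_axz_hS hf]
  by_cases h : l = 0 <;> simp [h, axz, hS, oneS2, oneS]

theorem coe_wneg : (wneg hf : Ser R) = mk (axw f) := by
  have hb : Bdd (axw f) := ⟨0, fun k l h => by
    have h2 := (ite_ne_right_iff.1 h)
    have : ¬ l < 1 := fun h3 => h2.2 (hf.1 l h3)
    omega⟩
  refine cf_injective fun k l => ?_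
  rw [cf_mk hb]
  change cf (-1 * (mono R 0 1 * (1 + mk (axw (hS f))))) k l = _
  rw [neg_one_mul, cf_neg, cf_mono_mul, cf_add, cf_one, cf_mk_axw_hS hf]
  by_cases h : k = 0 <;> simp [h, axz, axw, hS, oneS2, oneS]

end Units

section Points

variable {R : Type*} [CommRing R]

theorem fil_mono_one {i j : ℤ} (h : 0 ≤ i + j ∧ 0 ≤ j ∧ 1 ≤ i + 2 * j) : Fil 1 (mono R i j) := by
  intro k l hkl
  rw [cf_mono] at hkl
  have := (ite_ne_right_iff.1 hkl).1
  omega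

theorem fil_zero (n : ℤ) : Fil n (0 : Ser R) := fun _ _ h => absurd rfl h

theorem cf_ev1_mul {X Y W : Ser R} (hX : Fil 1 X) (hY : Fil 1 Y) (hW : Fil 0 W)
    {f : ℤ → ℤ → R} (hf : NN f) (k l : ℤ) :
    cf (ev1 X Y f * W) k l = ∑ᶠ p : ℤ × ℤ, f p.1 p.2 * cf (powers X Y p.1 p.2 * W) k l := by
  rw [mul_comm, cf_mul, mulS2]
  simp only [cf_ev1 hX hY, ev, smul_eq_mul]
  simp only [fun (p : ℤ × ℤ) a b => mul_comm (f p.1 p.2) (cf (powers X Y p.1 p.2) a b)]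
  rw [finsum_mul_comm (s := Set.Icc (((-l, 0), (0, 0)) : (ℤ × ℤ) × ℤ × ℤ)
    ((k + l, l), (k + 2 * l, k + 2 * l))) (hs := Set.finite_Icc _ _)]
  · refine finsum_congr fun p => ?_
    rw [mul_comm, mul_comm _ W, cf_mul]
    rfl
  · intro a p h1 h2 h3
    have h1 := hW _ _ h1
    have h2 := fil_powers hX hY _ _ _ _ h2
    have h3 := hf _ _ h3
    simp only [Set.mem_Icc, Prod.le_def]
    omega

theorem cf_ev1_axz_mul {X Y W : Ser R} (hX : Fil 1 X) (hY : Fil 1 Y) (hW : Fil 0 W)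
    {f : ℤ → R} (hf : ∀ n, f n ≠ 0 → 0 ≤ n) (k l : ℤ) :
    cf (ev1 X Y (axz f) * W) k l = ∑ᶠ n : ℤ, f n * cf (X ^ n.toNat * W) k l := by
  rw [cf_ev1_mul hX hY hW, finsum_eq_of_injective (φ := fun i : ℤ => (i, (0 : ℤ)))]
  · simp [axz, powers]
  · intro i j h; simpa using h
  · intro p hp
    have := left_ne_zero_of_mul hp
    exact ⟨p.1, Prod.ext rfl (ite_ne_right_iff.1 this).1.symm⟩
  · intro i j h
    have := ite_ne_right_iff.1 h
    exact ⟨hf _ this.2, this.1.ge⟩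

theorem ev1_axz_right {X Y Y' : Ser R} (hX : Fil 1 X) (hY : Fil 1 Y) (hY' : Fil 1 Y')
    {f : ℤ → R} (hf : ∀ n, f n ≠ 0 → 0 ≤ n) : ev1 X Y (axz f) = ev1 X Y' (axz f) := by
  refine cf_injective fun k l => ?_
  rw [← mul_one (ev1 X Y _), ← mul_one (ev1 X Y' _), cf_ev1_axz_mul hX hY fil_one hf,
    cf_ev1_axz_mul hX hY' fil_one hf]

theorem pow1_ne_zero {f : ℤ → R} (hf : ∀ n, f n ≠ 0 → 1 ≤ n) {m : ℕ} {n : ℤ}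
    (h : pow1 f m n ≠ 0) : (m : ℤ) ≤ n := by
  induction m generalizing n with
  | zero => have := (ite_ne_right_iff.1 h).1; simp [this]
  | succ m ih =>
    obtain ⟨i, hi⟩ := exists_of_finsum_ne_zero h
    have h1 := hf _ (left_ne_zero_of_smul hi)
    have h2 := ih (right_ne_zero_of_smul hi)
    push_cast
    omega

theorem nn_axz {f : ℤ → R} (hf : ∀ n, f n ≠ 0 → 0 ≤ n) : NN (axz f) := by
  intro i j h
  have := ite_ne_right_iff.1 h
  exact ⟨hf _ this.2, this.1.ge⟩

variable (𝓕 : FormalGroupLaw R)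

theorem F_nn : NN 𝓕.F := fun i j h => by
  by_contra h0
  exact h (𝓕.F_supp i j (by omega))

theorem F_isZ : IsZ 𝓕.F := ⟨F_nn 𝓕, 𝓕.F_modw⟩

theorem F_ne_zero {i j : ℤ} (h : 𝓕.F i j ≠ 0) : 1 ≤ i + j := by
  have := F_nn 𝓕 _ _ h
  by_contra h0
  obtain ⟨rfl, rfl⟩ : i = 0 ∧ j = 0 := by omega
  exact h (by rw [𝓕.F_modw]; simp)

theorem inv_isNeg : IsNeg 𝓕.inv := ⟨𝓕.inv_supp, 𝓕.inv_one⟩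

theorem inv_ne_zero' {n : ℤ} (h : 𝓕.inv n ≠ 0) : 1 ≤ n := by
  by_contra h0
  exact h (𝓕.inv_supp n (by omega))

theorem inv_ne_zero {n : ℤ} (h : 𝓕.inv n ≠ 0) : 0 ≤ n := by
  have := inv_ne_zero' 𝓕 h
  omega

theorem pow1_inv_ne_zero {m : ℕ} {n : ℤ} (h : pow1 𝓕.inv m n ≠ 0) : (m : ℤ) ≤ n :=
  pow1_ne_zero (fun _ => inv_ne_zero' 𝓕) h

theorem Fzi_isZ : IsZ 𝓕.Fzi := by
  refine ⟨fun i j h => ?_, fun i => ?_⟩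
  · obtain ⟨m, hm⟩ := exists_of_finsum_ne_zero h
    have h1 := F_nn 𝓕 _ _ (left_ne_zero_of_mul hm)
    have h2 := pow1_inv_ne_zero 𝓕 (right_ne_zero_of_mul hm)
    omega
  · rw [FormalGroupLaw.Fzi, finsum_eq_single _ 0]
    · simp [pow1, oneS, 𝓕.F_modw]
    · intro m hm
      by_contra h
      have := pow1_inv_ne_zero 𝓕 (right_ne_zero_of_mul h)
      omega

/-- The formal group law on points of the maximal ideal. -/
noncomputable def gadd (X Y : Ser R) : Ser R := ev1 X Y 𝓕.F

/-- The inverse for the formal group law on points of the maximal ideal. -/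
noncomputable def ginv (X : Ser R) : Ser R := ev1 X 0 (axz 𝓕.inv)

variable {𝓕} {X Y Z : Ser R} (hX : Fil 1 X) (hY : Fil 1 Y) (hZ : Fil 1 Z)

section
include hX
theorem fil_ginv : Fil 1 (ginv 𝓕 X) := fil_ev1 hX (fil_zero 1) fun i j h => by
  have := ite_ne_right_iff.1 h
  have := inv_ne_zero' 𝓕 this.2
  omega

theorem gadd_zero : gadd 𝓕 X 0 = X := by
  refine cf_injective fun k l => ?_
  rw [gadd, cf_ev1 hX (fil_zero 1), ev, finsum_eq_single _ (1, 0)]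
  · simp [powers, 𝓕.F_modw]
  · rintro ⟨i, j⟩ hp
    by_cases h : 𝓕.F i j = 0
    · simp [h]
    have := F_nn 𝓕 _ _ h
    rcases eq_or_ne j 0 with rfl | hj
    · have : i ≠ 1 := by rintro rfl; exact hp rfl
      simp [𝓕.F_modw, this]
    · have : j.toNat ≠ 0 := by omega
      simp [powers, this]

theorem cf_mul_ginv_pow {W : Ser R} (hW : Fil 0 W) (m : ℕ) (k l : ℤ) :
    cf (W * ginv 𝓕 X ^ m) k l = ∑ᶠ n : ℤ, pow1 𝓕.inv m n * cf (W * X ^ n.toNat) k l := by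
  rw [mul_comm, ginv, ← ev1_pow2 hX (fil_zero 1) (nn_axz fun _ => inv_ne_zero 𝓕), pow2_axz,
    cf_ev1_axz_mul hX (fil_zero 1) hW]
  · simp only [mul_comm W]
  · intro n hn
    have := pow1_inv_ne_zero 𝓕 hn
    omega

theorem gadd_ginv : gadd 𝓕 X (ginv 𝓕 X) = 0 := by
  refine cf_injective fun k l => ?_
  have hI := fil_ginv (𝓕 := 𝓕) hX
  have h1 : ∀ p : ℤ × ℤ, 𝓕.F p.1 p.2 * cf (powers X (ginv 𝓕 X) p.1 p.2) k l =
      𝓕.F p.1 p.2 * ∑ᶠ n : ℤ, pow1 𝓕.inv p.2.toNat (n - p.1) * cf (X ^ n.toNat) k l := by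
    intro p
    by_cases h : 𝓕.F p.1 p.2 = 0
    · simp [h]
    have hp := F_nn 𝓕 _ _ h
    rw [powers, cf_mul_ginv_pow hX ((hX.pow _).mono (by omega)),
      ← finsum_comp_equiv (Equiv.subRight p.1)]
    congr 1
    refine finsum_congr fun n => ?_
    simp only [Equiv.subRight_apply]
    by_cases h' : pow1 𝓕.inv p.2.toNat (n - p.1) = 0
    · simp [h']
    have := pow1_inv_ne_zero 𝓕 h'
    rw [← pow_add, show p.1.toNat + (n - p.1).toNat = n.toNat by omega]
  rw [gadd, cf_ev1 hX hI, ev, finsum_congr h1,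
    finsum_mul_comm (s := Set.Icc (((0, 0), 0) : (ℤ × ℤ) × ℤ)
      ((k + 2 * l, k + 2 * l), k + 2 * l)) (hs := Set.finite_Icc _ _)]
  · rw [finsum_eq_zero_of_forall_eq_zero, cf_zero]
    intro n
    rw [finsum_eq_of_injective (φ := fun p : ℤ × ℕ => (p.1, (p.2 : ℤ)))]
    · simp only [Int.toNat_natCast, 𝓕.inv_eq, zero_mul]
    · rintro ⟨a, b⟩ ⟨c, d⟩ h
      simpa using h
    · rintro ⟨i, j⟩ hp
      have := F_nn 𝓕 _ _ (left_ne_zero_of_mul hp)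
      exact ⟨(i, j.toNat), Prod.ext rfl (by simp only; omega)⟩
  · intro p n h1 h2 h3
    have h1 := F_nn 𝓕 _ _ h1
    have h2 := pow1_inv_ne_zero 𝓕 h2
    have h3 := hX.pow _ _ _ h3
    simp only [Set.mem_Icc, Prod.le_def]
    omega

include hY

theorem fil_gadd : Fil 1 (gadd 𝓕 X Y) := fil_ev1 hX hY fun _ _ => F_ne_zero 𝓕

theorem gadd_comm : gadd 𝓕 X Y = gadd 𝓕 Y X := by
  refine cf_injective fun k l => ?_
  rw [gadd, gadd, cf_ev1 hX hY, cf_ev1 hY hX, ev, ev, ← finsum_comp_equiv (Equiv.prodComm ℤ ℤ)]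
  refine finsum_congr fun p => ?_
  simp only [Equiv.prodComm_apply, Prod.fst_swap, Prod.snd_swap, powers]
  rw [𝓕.F_comm, mul_comm (X ^ _)]

include hZ

theorem gadd_gadd_left (k l : ℤ) : cf (gadd 𝓕 (gadd 𝓕 X Y) Z) k l =
    ∑ᶠ t : ℤ × ℤ × ℤ, (∑ᶠ m : ℕ, 𝓕.F m t.2.2 * pow2 𝓕.F m t.1 t.2.1) *
      cf (X ^ t.1.toNat * Y ^ t.2.1.toNat * Z ^ t.2.2.toNat) k l := by
  have h1 : ∀ p : ℤ × ℤ, cf (powers (gadd 𝓕 X Y) Z p.1 p.2) k l =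
      ∑ᶠ t : ℤ × ℤ × ℤ, (if t.2.2 = p.2 then pow2 𝓕.F p.1.toNat t.1 t.2.1 else 0) *
        cf (X ^ t.1.toNat * Y ^ t.2.1.toNat * Z ^ t.2.2.toNat) k l := by
    intro p
    rw [powers, gadd, ← ev1_pow2 hX hY (F_nn 𝓕), cf_ev1_mul hX hY ((hZ.pow _).mono (by omega))
      ((F_nn 𝓕).pow2 _),
      finsum_eq_of_injective (β := ℤ × ℤ × ℤ) (φ := fun q : ℤ × ℤ => (q.1, q.2, p.2))]
    · simp [powers]
    · rintro ⟨a, b⟩ ⟨c, d⟩ h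
      simpa using h
    · intro t ht
      have := ite_ne_right_iff.1 (left_ne_zero_of_mul ht)
      exact ⟨(t.1, t.2.1), by rw [← this.1]⟩
  rw [gadd, cf_ev1 (fil_gadd hX hY) hZ, ev]
  simp only [h1]
  rw [finsum_mul_comm (s := Set.Icc (((0, 0), (0, 0, 0)) : (ℤ × ℤ) × ℤ × ℤ × ℤ)
      ((k + 2 * l, k + 2 * l), (k + 2 * l, k + 2 * l, k + 2 * l))) (hs := Set.finite_Icc _ _)]
  · refine finsum_congr fun t => ?_
    congr 1
    rw [finsum_eq_of_injective (φ := fun m : ℕ => ((m : ℤ), t.2.2))]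
    · simp
    · intro a b h; simpa using h
    · rintro ⟨i, j⟩ hp
      have h1 := F_nn 𝓕 _ _ (left_ne_zero_of_mul hp)
      have h2 := (ite_ne_right_iff.1 (right_ne_zero_of_mul hp)).1
      exact ⟨i.toNat, Prod.ext (by simp only; omega) h2⟩
  · rintro ⟨m, c⟩ ⟨i, j, n⟩ h1 h2 h3
    have h1 := F_nn 𝓕 _ _ h1
    obtain ⟨h4, h5⟩ := ite_ne_right_iff.1 h2
    have h6 := (F_nn 𝓕).pow2 _ _ _ h5
    have h7 := ((hX.pow_mul_pow hY _ _).mul (hZ.pow _)) _ _ h3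
    have h8 : (m : ℤ) ≤ i + j := by
      have h9 : cf (mk 𝓕.F ^ m.toNat) i j ≠ 0 := by
        rw [cf_pow, (F_nn 𝓕).cf_mk]; exact h5
      rw [← coe_zunit (F_isZ 𝓕), ← Units.val_pow_eq_pow_val, ← zpow_natCast, cf_zunit_zpow] at h9
      have := izwPow_ne_zero (F_isZ 𝓕) h9
      omega
    simp only [Set.mem_Icc, Prod.le_def] at *
    omega

theorem gadd_assoc : gadd 𝓕 (gadd 𝓕 X Y) Z = gadd 𝓕 X (gadd 𝓕 Y Z) := by
  refine cf_injective fun k l => ?_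
  rw [gadd_comm hX (fil_gadd hY hZ), gadd_gadd_left hX hY hZ, gadd_gadd_left hY hZ hX]
  let φ : ℤ × ℤ × ℤ ≃ ℤ × ℤ × ℤ :=
    { toFun := fun t => (t.2.1, t.2.2, t.1)
      invFun := fun t => (t.2.2, t.1, t.2.1)
      left_inv := fun _ => rfl
      right_inv := fun _ => rfl }
  symm
  rw [← finsum_comp_equiv φ]
  refine finsum_congr fun t => ?_
  simp only [φ, Equiv.coe_fn_mk, 𝓕.F_assoc, 𝓕.F_comm _ t.1]
  rw [mul_comm (_ * _) (X ^ _), mul_assoc (X ^ _)]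

end

theorem eq_ginv (hX : Fil 1 X) (hY : Fil 1 Y) (h : gadd 𝓕 X Y = 0) : Y = ginv 𝓕 X := by
  have hI := fil_ginv (𝓕 := 𝓕) hX
  rw [← gadd_zero (𝓕 := 𝓕) hI, ← h, ← gadd_assoc hI hX hY, gadd_comm hI hX, gadd_ginv hX,
    gadd_comm (fil_zero 1) hY, gadd_zero hY]

theorem gadd_gadd_ginv (hX : Fil 1 X) (hY : Fil 1 Y) : gadd 𝓕 (gadd 𝓕 X (ginv 𝓕 Y)) Y = X := by
  have hI := fil_ginv (𝓕 := 𝓕) hY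
  rw [gadd_assoc hX hI hY, gadd_comm hI hY, gadd_ginv hY, gadd_zero hX]

theorem ginv_gadd_ginv (hX : Fil 1 X) (hY : Fil 1 Y) :
    ginv 𝓕 (gadd 𝓕 X (ginv 𝓕 Y)) = gadd 𝓕 (ginv 𝓕 X) Y := by
  have hI := fil_ginv (𝓕 := 𝓕) hY
  have hJ := fil_ginv (𝓕 := 𝓕) hX
  refine (eq_ginv (fil_gadd hX hI) (fil_gadd hJ hY) ?_).symm
  rw [gadd_comm hJ hY, ← gadd_assoc (fil_gadd hX hI) hY hJ, gadd_gadd_ginv hX hY, gadd_ginv hX]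

end Points

section Substitutions

variable {R : Type*} [CommRing R]

theorem ev2_mk {X Y : (Ser R)ˣ} (h : Adm X Y) {f : ℤ → ℤ → R} (hf : NN f) :
    ev2 h (mk f) = ev1 (X : Ser R) Y f := by
  change mk _ = mk _
  congr 1
  funext k l
  refine finsum_congr fun p => ?_
  rw [hf.cf_mk]
  by_cases h0 : f p.1 p.2 = 0
  · simp [h0]
  have := hf _ _ h0
  rw [zpowers, powers, ← Units.val_pow_eq_pow_val, ← Units.val_pow_eq_pow_val, ← Units.val_mul,
    ← zpow_natCast, ← zpow_natCast, Int.toNat_of_nonneg this.1, Int.toNat_of_nonneg this.2]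

theorem ev2_mono {X Y : (Ser R)ˣ} (h : Adm X Y) (i j : ℤ) :
    ev2 h (mono R i j) = zpowers X Y i j := by
  refine cf_injective fun k l => ?_
  rw [cf_ev2_apply, finsum_eq_single _ (i, j)]
  · simp [cf_mono]
  · intro p hp
    have : ¬ (p.1 = i ∧ p.2 = j) := fun h => hp (Prod.ext h.1 h.2)
    simp [cf_mono, this]

theorem ev2_add {X Y : (Ser R)ˣ} (h : Adm X Y) (x y : Ser R) :
    ev2 h (x + y) = ev2 h x + ev2 h y := by
  refine cf_injective fun k l => ?_
  rw [cf_add, cf_ev2_apply, cf_ev2_apply, cf_ev2_apply, ← finsum_add_distrib]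
  · simp only [cf_add, add_mul]
  · exact (finite_zpowers h x k l).subset fun p hp =>
      ⟨left_ne_zero_of_mul hp, right_ne_zero_of_mul hp⟩
  · exact (finite_zpowers h y k l).subset fun p hp =>
      ⟨left_ne_zero_of_mul hp, right_ne_zero_of_mul hp⟩

theorem cf_mul_mono (x : Ser R) (i j k l : ℤ) : cf (x * mono R i j) k l = cf x (k - i) (l - j) := by
  rw [mul_comm, cf_mono_mul]

variable (𝓕 : FormalGroupLaw R)

/-- The unit `F(z, w)`. -/
noncomputable def uF : (Ser R)ˣ := zunit (F_isZ 𝓕)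

/-- The unit `F(z, ι(w))`. -/
noncomputable def uX : (Ser R)ˣ := zunit (Fzi_isZ 𝓕)

/-- The unit `ι(z)`. -/
noncomputable def iz : (Ser R)ˣ := zneg (inv_isNeg 𝓕)

/-- The unit `ι(w)`. -/
noncomputable def iw : (Ser R)ˣ := wneg (inv_isNeg 𝓕)

theorem cf_zpow_mul_umono (U : (Ser R)ˣ) (a b i j k l : ℤ) :
    cf (zpowers U (umono R a b) i j) k l =
      cf ((U ^ i : (Ser R)ˣ) : Ser R) (k - j * a) (l - j * b) := by
  rw [zpowers, Units.val_mul, coe_umono_zpow, cf_mul_mono]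

theorem cf_zpowers_uX (i j k l : ℤ) :
    cf (zpowers (uX 𝓕) (umono R 0 1) i j) k l = izwPow 𝓕.Fzi i k (l - j) := by
  rw [cf_zpow_mul_umono, uX, cf_zunit_zpow]
  simp

theorem cf_zpowers_iz (i j k l : ℤ) :
    cf (zpowers (iz 𝓕) (umono R 0 1) i j) k l = axz (iotaPow 𝓕.inv i) k (l - j) := by
  rw [cf_zpow_mul_umono, iz, cf_zneg_zpow]
  simp

theorem cf_zpowers_iw (i j k l : ℤ) :
    cf (zpowers (umono R 1 0) (iw 𝓕) i j) k l = axw (iotaPow 𝓕.inv j) (k - i) l := by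
  rw [zpowers, Units.val_mul, coe_umono_zpow, cf_mono_mul, iw, cf_wneg_zpow]
  simp

theorem adm_uX : Adm (uX 𝓕) (umono R 0 1) := by
  intro i j k l h
  change cf (zpowers (uX 𝓕) (umono R 0 1) i j) k l ≠ 0 at h
  rw [cf_zpowers_uX] at h
  have := izwPow_ne_zero (Fzi_isZ 𝓕) h
  omega

theorem adm_iz : Adm (iz 𝓕) (umono R 0 1) := by
  intro i j k l h
  change cf (zpowers (iz 𝓕) (umono R 0 1) i j) k l ≠ 0 at h
  rw [cf_zpowers_iz] at h
  have h1 := ite_ne_right_iff.1 h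
  have := iotaPow_ne_zero (inv_isNeg 𝓕) h1.2
  omega

theorem adm_iw : Adm (umono R 1 0) (iw 𝓕) := by
  intro i j k l h
  change cf (zpowers (umono R 1 0) (iw 𝓕) i j) k l ≠ 0 at h
  rw [cf_zpowers_iw] at h
  have h1 := ite_ne_right_iff.1 h
  have := iotaPow_ne_zero (inv_isNeg 𝓕) h1.2
  omega

theorem fil_z : Fil 1 (mono R 1 0) := fil_mono_one (by decide)

theorem fil_w : Fil 1 (mono R 0 1) := fil_mono_one (by decide)

theorem mono_pow (i j : ℤ) (n : ℕ) : mono R i j ^ n = mono R (n * i) (n * j) := by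
  rw [← coe_umono_zpow, zpow_natCast, Units.val_pow_eq_pow_val]
  rfl

theorem ginv_z : ginv 𝓕 (mono R 1 0) = (iz 𝓕 : Ser R) := by
  refine cf_injective fun k l => ?_
  rw [ginv, ← mul_one (ev1 _ _ _), cf_ev1_axz_mul fil_z (fil_zero 1) fil_one fun _ => inv_ne_zero 𝓕,
    iz, coe_zneg, (nn_axz fun _ => inv_ne_zero 𝓕).cf_mk, finsum_eq_single _ k]
  · rw [mul_one, mono_pow, cf_mono, axz]
    by_cases h : 𝓕.inv k = 0
    · simp [h]
    · have := inv_ne_zero 𝓕 h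
      simp [this]
  · intro n hn
    by_cases h : 𝓕.inv n = 0
    · simp [h]
    · have := inv_ne_zero 𝓕 h
      simp [mono_pow, cf_mono, this, hn.symm]

theorem ginv_w : ginv 𝓕 (mono R 0 1) = (iw 𝓕 : Ser R) := by
  refine cf_injective fun k l => ?_
  rw [ginv, ← mul_one (ev1 _ _ _), cf_ev1_axz_mul fil_w (fil_zero 1) fil_one fun _ => inv_ne_zero 𝓕,
    iw, coe_wneg, (show NN (axw 𝓕.inv) from fun i j h =>
      (nn_axz (fun _ => inv_ne_zero 𝓕) j i h).symm).cf_mk, finsum_eq_single _ l]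
  · rw [mul_one, mono_pow, cf_mono, axw, axz]
    by_cases h : 𝓕.inv l = 0
    · simp [h]
    · have := inv_ne_zero 𝓕 h
      simp [this]
  · intro n hn
    by_cases h : 𝓕.inv n = 0
    · simp [h]
    · have := inv_ne_zero 𝓕 h
      simp [mono_pow, cf_mono, this, hn.symm]

theorem iotaPow_natCast (m : ℕ) : iotaPow 𝓕.inv m = pow1 𝓕.inv m := by
  funext k
  have h := cf_zneg_zpow (inv_isNeg 𝓕) m k 0
  rw [zpow_natCast, Units.val_pow_eq_pow_val, coe_zneg, cf_pow,
    (nn_axz fun _ => inv_ne_zero 𝓕).cf_mk, pow2_axz] at h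
  simpa [axz] using h.symm

theorem gadd_z_ginv_w : gadd 𝓕 (mono R 1 0) (ginv 𝓕 (mono R 0 1)) = (uX 𝓕 : Ser R) := by
  refine cf_injective fun k l => ?_
  rw [ginv_w, uX, coe_zunit, (Fzi_isZ 𝓕).1.cf_mk]
  change cf (ev1 (umono R 1 0 : Ser R) (iw 𝓕) 𝓕.F) k l = _
  rw [← ev2_mk (adm_iw 𝓕) (F_nn 𝓕), cf_ev2_apply, (F_nn 𝓕).cf_mk, FormalGroupLaw.Fzi,
    finsum_eq_of_injective (φ := fun m : ℕ => (k, (m : ℤ)))]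
  · simp only [cf_zpowers_iw, iotaPow_natCast, axw, axz, sub_self, if_true]
  · intro a b h; simpa using h
  · intro p hp
    have h1 := F_nn 𝓕 _ _ (left_ne_zero_of_mul hp)
    have h2 := right_ne_zero_of_mul hp
    rw [cf_zpowers_iw] at h2
    have := (ite_ne_right_iff.1 h2).1
    exact ⟨p.2.toNat, Prod.ext (by simp only; omega) (by simp only; omega)⟩

theorem ev2_uX_F : ev2 (adm_uX 𝓕) (uF 𝓕 : Ser R) = mono R 1 0 := by
  rw [uF, coe_zunit, ev2_mk _ (F_nn 𝓕), ← gadd_z_ginv_w]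
  exact gadd_gadd_ginv fil_z fil_w

theorem ev2_uX_iz : ev2 (adm_uX 𝓕) (iz 𝓕 : Ser R) = ev2 (adm_iz 𝓕) (uF 𝓕 : Ser R) := by
  have hi := fil_ginv (𝓕 := 𝓕) (fil_w (R := R))
  rw [uF, coe_zunit, ev2_mk _ (F_nn 𝓕), iz, coe_zneg, ev2_mk _ (nn_axz fun _ => inv_ne_zero 𝓕),
    ← coe_zneg (inv_isNeg 𝓕)]
  change _ = ev1 (iz 𝓕 : Ser R) _ _
  rw [← ginv_z, ← gadd_z_ginv_w]
  refine (ev1_axz_right (fil_gadd fil_z hi) fil_w (fil_zero 1) fun _ => inv_ne_zero 𝓕).trans ?_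
  exact ginv_gadd_ginv fil_z fil_w

theorem ev2_iw_F : ev2 (adm_iw 𝓕) (uF 𝓕 : Ser R) = (uX 𝓕 : Ser R) := by
  rw [uF, coe_zunit, ev2_mk _ (F_nn 𝓕), ← gadd_z_ginv_w, ginv_w]
  rfl

/-- The coefficients of `Φ(ι(z) ^ p * F(z, w) ^ j)`, where `Φ` is the substitution
`z ↦ F(z, ι(w))`, `w ↦ w`, in two ways. -/
theorem coeff_uX_iz_F (j p k l : ℤ) :
    ∑ᶠ q : ℤ × ℤ, (∑ᶠ n : ℤ, iotaPow 𝓕.inv p (q.1 - n) * izwPow 𝓕.F j n q.2) *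
      izwPow 𝓕.Fzi q.1 k (l - q.2) =
    ∑ᶠ q : ℤ, iotaPow 𝓕.inv q (k - j) * izwPow 𝓕.F p q l := by
  have h1 : Units.map (ev2 (adm_uX 𝓕)) (iz 𝓕) = Units.map (ev2 (adm_iz 𝓕)) (uF 𝓕) :=
    Units.ext (ev2_uX_iz 𝓕)
  have h2 : Units.map (ev2 (adm_uX 𝓕)) (uF 𝓕) = umono R 1 0 := Units.ext (ev2_uX_F 𝓕)
  have h3 : ev2 (adm_uX 𝓕) ((iz 𝓕 ^ p * uF 𝓕 ^ j : (Ser R)ˣ) : Ser R) =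
      ev2 (adm_iz 𝓕) ((uF 𝓕 ^ p : (Ser R)ˣ) : Ser R) * mono R j 0 := by
    rw [Units.val_mul, map_mul, coe_ev2_zpow, coe_ev2_zpow, coe_ev2_zpow, h1, h2, coe_umono_zpow]
    simp
  have h4 := congrArg (fun x => cf x k l) h3
  simp only [cf_mul_mono, cf_ev2_apply, cf_zpowers_uX, cf_zpowers_iz, sub_zero] at h4
  refine (finsum_congr fun q => ?_).trans (h4.trans ?_)
  · congr 1
    rw [Units.val_mul, cf_mul, mulS2, finsum_eq_of_injective (φ := fun n : ℤ => (q.1 - n, (0 : ℤ)))]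
    · refine finsum_congr fun n => ?_
      rw [iz, cf_zneg_zpow, uF, cf_zunit_zpow]
      simp [axz]
    · intro a b h; simpa using h
    · intro t ht
      have h5 := left_ne_zero_of_smul ht
      rw [iz, cf_zneg_zpow] at h5
      have := (ite_ne_right_iff.1 h5).1
      exact ⟨q.1 - t.1, Prod.ext (by simp) this.symm⟩
  · rw [finsum_eq_of_injective (φ := fun n : ℤ => (n, l))]
    · refine finsum_congr fun n => ?_
      rw [uF, cf_zunit_zpow, mul_comm]
      simp [axz]
    · intro a b h; simpa using h
    · intro t ht
      have := (ite_ne_right_iff.1 (right_ne_zero_of_mul ht)).1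
      exact ⟨t.1, Prod.ext rfl (by simp only; omega)⟩

/-- The coefficients of `Ω(w ^ q * F(z, w) ^ m)`, where `Ω` is the substitution
`z ↦ z`, `w ↦ ι(w)`, in two ways. -/
theorem coeff_iw_F (m q k l : ℤ) :
    ∑ᶠ j : ℤ, iotaPow 𝓕.inv j l * izwPow 𝓕.F m k (j - q) =
    ∑ᶠ n : ℤ, iotaPow 𝓕.inv q n * izwPow 𝓕.Fzi m k (l - n) := by
  have h1 : Units.map (ev2 (adm_iw 𝓕)) (uF 𝓕) = uX 𝓕 := Units.ext (ev2_iw_F 𝓕)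
  have h3 : ev2 (adm_iw 𝓕) (((uF 𝓕 ^ m : (Ser R)ˣ) : Ser R) * mono R 0 q) =
      ((iw 𝓕 ^ q * uX 𝓕 ^ m : (Ser R)ˣ) : Ser R) := by
    rw [map_mul, coe_ev2_zpow, h1, ev2_mono, zpowers, zpow_zero, one_mul, ← Units.val_mul, mul_comm]
  have h4 := congrArg (fun x => cf x k l) h3
  simp only [cf_mul_mono, cf_ev2_apply, cf_zpowers_iw, sub_zero] at h4
  refine Eq.trans ?_ (h4.trans ?_)
  · rw [finsum_eq_of_injective (β := ℤ × ℤ) (φ := fun n : ℤ => (k, n))]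
    · refine finsum_congr fun n => ?_
      rw [uF, cf_zunit_zpow, mul_comm]
      simp [axw, axz]
    · intro a b h; simpa using h
    · intro t ht
      have := (ite_ne_right_iff.1 (right_ne_zero_of_mul ht)).1
      exact ⟨t.2, Prod.ext (by simp only; omega) rfl⟩
  · rw [Units.val_mul, cf_mul, mulS2, finsum_eq_of_injective (φ := fun n : ℤ => ((0 : ℤ), n))]
    · refine finsum_congr fun n => ?_
      rw [iw, cf_wneg_zpow, uX, cf_zunit_zpow]
      simp [axz, axw]
    · intro a b h; simpa using h
    · intro t ht
      have h5 := left_ne_zero_of_smul ht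
      rw [iw, cf_wneg_zpow] at h5
      have := (ite_ne_right_iff.1 h5).1
      exact ⟨t.2, Prod.ext this.symm rfl⟩

theorem izwPow_F_natCast (m : ℕ) : izwPow 𝓕.F m = pow2 𝓕.F m := by
  funext k l
  rw [← cf_zunit_zpow (F_isZ 𝓕), cf_zunit_zpow_nat]

theorem izwPow_Fzi_natCast (m : ℕ) : izwPow 𝓕.Fzi m = pow2 𝓕.Fzi m := by
  funext k l
  rw [← cf_zunit_zpow (Fzi_isZ 𝓕), cf_zunit_zpow_nat]

theorem pow2_F_comm (m : ℕ) (k l : ℤ) : pow2 𝓕.F m k l = pow2 𝓕.F m l k := by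
  rw [← pow2_swap 𝓕.F m k l]
  simp only [𝓕.F_comm]

/-- `F(z, ι(w))` divides `z - w`. -/
theorem exists_zmw_eq : ∃ h : ℤ → ℤ → R, NN h ∧
    ∀ M : ℕ, pow2 (zmw R) M = mulS2 (pow2 h M) (pow2 𝓕.Fzi M) := by
  let H : ℤ → ℤ → R := fun k l => if 0 ≤ k then 𝓕.F (k + 1) l else 0
  have hH : NN H := fun k l h => by
    have h1 := ite_ne_right_iff.1 h
    have h2 := F_nn 𝓕 _ _ h1.2
    omega
  let h : Ser R := ev2 (adm_uX 𝓕) (mk H)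
  have h1 : (uF 𝓕 : Ser R) = mono R 0 1 + mono R 1 0 * mk H := by
    refine cf_injective fun k l => ?_
    rw [uF, coe_zunit, (F_nn 𝓕).cf_mk, cf_add, cf_mono_mul, hH.cf_mk, cf_mono]
    by_cases hk : 1 ≤ k
    · have : k ≠ 0 := by omega
      simp [H, hk, this]
    · rcases eq_or_ne k 0 with rfl | hk'
      · simp [H, 𝓕.F_comm 0, 𝓕.F_modw]
      · simp [H, hk, hk', 𝓕.F_supp k l (by omega)]
  have h2 : mono R 1 0 - mono R 0 1 = h * (uX 𝓕 : Ser R) := by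
    rw [sub_eq_iff_eq_add', ← ev2_uX_F 𝓕, h1, ev2_add, map_mul, ev2_mono, ev2_mono]
    simp [zpowers, h, mul_comm]
    rfl
  have h3 : cf (mono R 1 0 - mono R 0 1) = zmw R := by
    funext k l
    rw [cf_sub, cf_mono, cf_mono, zmw]
    split_ifs <;> first | omega | simp
  refine ⟨cf h, fun k l hkl => ?_, fun M => ?_⟩
  · rw [cf_ev2_apply] at hkl
    obtain ⟨p, hp⟩ := exists_of_finsum_ne_zero hkl
    have h4 := left_ne_zero_of_mul hp
    have h5 := right_ne_zero_of_mul hp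
    rw [hH.cf_mk] at h4
    have h4 := hH _ _ h4
    rw [cf_zpowers_uX, ← Int.toNat_of_nonneg h4.1, izwPow_Fzi_natCast] at h5
    have := (Fzi_isZ 𝓕).1.pow2 _ _ _ h5
    omega
  · funext k l
    rw [← h3, ← cf_pow, h2, mul_pow, cf_mul]
    congr 1 <;> funext i j
    · exact cf_pow h M i j
    · rw [uX, coe_zunit, cf_pow, (Fzi_isZ 𝓕).1.cf_mk]

end Substitutions

section LocalFiniteness

variable {R : Type*} [CommRing R] {V W : Type*} [AddCommGroup V] [Module R V] [AddCommGroup W]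
  [Module R W]

theorem map_finsum_smul {α : Type*} (f : V →ₗ[R] W) (c : α → R) (v : α → V) {s : Set α}
    (hs : s.Finite) (h : ∀ a, c a ≠ 0 → v a ≠ 0 → a ∈ s) :
    f (∑ᶠ a, c a • v a) = ∑ᶠ a, c a • f (v a) := by
  rw [show f (∑ᶠ a, c a • v a) = f.toAddMonoidHom (∑ᶠ a, c a • v a) from rfl,
    AddMonoidHom.map_finsum]
  · simp
  · exact hs.subset fun a ha => h a (left_ne_zero_of_smul ha) (right_ne_zero_of_smul ha)

/-- Bilateral series whose support is finite in each quadrant bounded above. -/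
def LocFin (G : ℤ → ℤ → V) : Prop :=
  ∀ k l, ∃ K, ∀ k' ≤ k, ∀ l' ≤ l, G k' l' ≠ 0 → K ≤ k' ∧ K ≤ l'

theorem mulS2_assoc {f g : ℤ → ℤ → R} {G : ℤ → ℤ → V} (hf : NN f) (hg : NN g) (hG : LocFin G) :
    mulS2 f (mulS2 g G) = mulS2 (mulS2 f g) G := by
  funext k l
  obtain ⟨K, hK⟩ := hG k l
  have h1 : ∀ p : ℤ × ℤ, mulS2 g G (k - p.1) (l - p.2) =
      ∑ᶠ b : ℤ × ℤ, g (b.1 - p.1) (b.2 - p.2) • G (k - b.1) (l - b.2) := by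
    intro p
    rw [← finsum_comp_equiv (Equiv.addRight p)]
    refine finsum_congr fun b => ?_
    simp only [Equiv.coe_addRight, Prod.fst_add, Prod.snd_add, add_sub_cancel_right]
    congr 2 <;> ring
  rw [mulS2]
  simp only [h1]
  rw [finsum_smul_comm (s := Set.Icc (((0, 0), (0, 0)) : (ℤ × ℤ) × ℤ × ℤ)
    ((k - K, l - K), (k - K, l - K))) (hs := Set.finite_Icc _ _)]
  · rfl
  · rintro ⟨i, j⟩ ⟨i', j'⟩ h1 h2 h3
    have h1 := hf _ _ h1
    have h2 := hg _ _ h2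
    have h3 := hK (k - i') (by omega) (l - j') (by omega) h3
    simp only [Set.mem_Icc, Prod.le_def]
    omega

theorem exists_lower_bound {f : ℤ → ℤ → V} (hf : ∀ q, IsLaurent (f q)) (a b : ℤ) :
    ∃ K, ∀ q m, a ≤ q → q ≤ b → f q m ≠ 0 → K ≤ m := by
  choose N hN using hf
  obtain ⟨K, hK⟩ := ((Set.finite_Icc a b).image N).bddBelow
  refine ⟨K, fun q m h1 h2 h3 => ?_⟩
  have h4 := hK ⟨q, ⟨h1, h2⟩, rfl⟩
  by_contra h5
  exact h3 (hN q m (by omega))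

theorem IsLaurent.exists_le {f : ℤ → V} (hf : IsLaurent f) : ∃ N, ∀ n, f n ≠ 0 → N ≤ n := by
  obtain ⟨N, hN⟩ := hf
  refine ⟨N, fun n h => ?_⟩
  by_contra h0
  exact h (hN n (by omega))

theorem locFin_of_isLaurent {f : ℤ → ℤ → V} (hf : ∀ q, IsLaurent (f q))
    {D : ℤ} (hD : ∀ q m, f q m ≠ 0 → D ≤ q) : LocFin f := by
  intro k l
  obtain ⟨K, hK⟩ := exists_lower_bound hf D k
  refine ⟨min D K, fun k' hk l' hl h => ?_⟩
  have h1 := hD _ _ h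
  have h2 := hK _ _ h1 hk h
  omega

theorem LocFin.swap {f : ℤ → ℤ → V} (hf : LocFin f) : LocFin fun k l => f l k := by
  intro k l
  obtain ⟨K, hK⟩ := hf l k
  exact ⟨K, fun k' hk l' hl h => (hK l' hl k' hk h).symm⟩

end LocalFiniteness

section VertexAlgebra

variable {R : Type*} [CommRing R] {𝓕 : FormalGroupLaw R} {V : Type*} [AddCommGroup V] [Module R V]
  (A : VertexFAlgebra R 𝓕 V)

/-- The components of the shift operator, extended by zero to integer indices. -/
noncomputable def shift (n : ℤ) : V →ₗ[R] V := if 0 ≤ n then A.S n.toNat else 0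

theorem shift_natCast (n : ℕ) : shift A n = A.S n := by simp [shift]

theorem shift_ne_zero {n : ℤ} {v : V} (h : shift A n v ≠ 0) : 0 ≤ n := by
  by_contra h0
  simp [shift, h0] at h

theorem shift_arg_ne_zero {n : ℤ} {v : V} (h : shift A n v ≠ 0) : v ≠ 0 := by
  rintro rfl
  simp at h

theorem shift_shift (v : V) (i n : ℤ) :
    shift A i (shift A n v) = ∑ᶠ j : ℤ, izwPow 𝓕.F j i n • shift A j v := by
  rw [finsum_int_eq_nat _ fun j hj => shift_ne_zero A (right_ne_zero_of_smul hj)]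
  simp only [izwPow_F_natCast, shift_natCast]
  by_cases h : 0 ≤ i ∧ 0 ≤ n
  · obtain ⟨i, rfl⟩ := Int.eq_ofNat_of_zero_le h.1
    obtain ⟨n, rfl⟩ := Int.eq_ofNat_of_zero_le h.2
    rw [shift_natCast, shift_natCast, A.S_comp]
  · rw [finsum_eq_zero_of_forall_eq_zero]
    · by_contra h1
      have h2 := shift_ne_zero A h1
      have h3 := shift_ne_zero A (shift_arg_ne_zero A h1)
      exact h ⟨h2, h3⟩
    · intro m
      by_contra h1
      exact h ((F_nn 𝓕).pow2 m _ _ (left_ne_zero_of_smul h1))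

theorem skew_shift (a b : V) (k : ℤ) :
    A.Y a b k = ∑ᶠ q : ℤ × ℤ, iotaPow 𝓕.inv q.2 (k - q.1) • shift A q.1 (A.Y b a q.2) := by
  rw [A.skew, finsum_eq_of_injective (β := ℤ × ℤ) (φ := fun q : ℕ × ℤ => ((q.1 : ℤ), q.2))]
  · simp only [shift_natCast]
  · rintro ⟨a, b⟩ ⟨c, d⟩ h; simpa using h
  · intro q hq
    have := shift_ne_zero A (right_ne_zero_of_smul hq)
    exact ⟨(q.1.toNat, q.2), Prod.ext (by simp only; omega) rfl⟩

theorem Y_shift_left (a b : V) (k n : ℤ) :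
    A.Y (shift A n a) b k = ∑ᶠ m : ℤ, izwPow 𝓕.F m k n • A.Y a b m := by
  by_cases h : 0 ≤ n
  · obtain ⟨n, rfl⟩ := Int.eq_ofNat_of_zero_le h
    rw [shift_natCast, A.translation, substF]
  · rw [finsum_eq_zero_of_forall_eq_zero]
    · simp [shift, h]
    · intro m
      by_contra h1
      have := izwPow_ne_zero (F_isZ 𝓕) (left_ne_zero_of_smul h1)
      omega

theorem izwPow_F_comm {j : ℤ} (hj : 0 ≤ j) (i n : ℤ) : izwPow 𝓕.F j i n = izwPow 𝓕.F j n i := by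
  obtain ⟨j, rfl⟩ := Int.eq_ofNat_of_zero_le hj
  rw [izwPow_F_natCast, pow2_F_comm]

theorem izwPow_F_nn {j : ℤ} (hj : 0 ≤ j) {i n : ℤ} (h : izwPow 𝓕.F j i n ≠ 0) :
    0 ≤ i ∧ 0 ≤ n := by
  obtain ⟨j, rfl⟩ := Int.eq_ofNat_of_zero_le hj
  rw [izwPow_F_natCast] at h
  exact (F_nn 𝓕).pow2 _ _ _ h

theorem shift_Y (a x : V) (i m : ℤ) :
    shift A i (A.Y a x m) = ∑ᶠ t : ℤ × ℤ, (∑ᶠ n : ℤ, iotaPow 𝓕.inv t.2 (m - n) *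
      izwPow 𝓕.F t.1 n i) • shift A t.1 (A.Y x a t.2) := by
  obtain ⟨P, hP⟩ := IsLaurent.exists_le (A.Y_laurent x a)
  rw [skew_shift, map_finsum_smul (s := Set.Icc ((0, P) : ℤ × ℤ) (m - P, m))
    (hs := Set.finite_Icc _ _)]
  · have h1 : ∀ q : ℤ × ℤ, shift A i (shift A q.1 (A.Y x a q.2)) =
        ∑ᶠ t : ℤ × ℤ, (if t.2 = q.2 then izwPow 𝓕.F t.1 i q.1 else 0) •
          shift A t.1 (A.Y x a t.2) := by
      intro q
      rw [shift_shift, finsum_eq_of_injective (β := ℤ × ℤ) (φ := fun j : ℤ => (j, q.2))]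
      · simp
      · intro a b h; simpa using h
      · intro t ht
        have := (ite_ne_right_iff.1 (left_ne_zero_of_smul ht)).1
        exact ⟨t.1, Prod.ext rfl this.symm⟩
    simp only [h1]
    rw [finsum_smul_comm (s := Set.Icc (((0, P), (0, P)) : (ℤ × ℤ) × ℤ × ℤ)
      ((m - P, m), (i + m - P, m))) (hs := Set.finite_Icc _ _)]
    · refine finsum_congr fun t => ?_
      by_cases ht : 0 ≤ t.1
      · congr 1
        rw [finsum_eq_of_injective (β := ℤ × ℤ) (φ := fun n : ℤ => (n, t.2))]
        · refine finsum_congr fun n => ?_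
          rw [izwPow_F_comm ht]
          simp
        · intro a b h; simpa using h
        · intro q hq
          have := (ite_ne_right_iff.1 (right_ne_zero_of_mul hq)).1
          exact ⟨q.1, Prod.ext rfl this⟩
      · simp [shift, ht]
    · rintro ⟨n, p⟩ ⟨j, p'⟩ h2 h3 h4
      have h2 := iotaPow_ne_zero (inv_isNeg 𝓕) h2
      obtain ⟨h5, h6⟩ := ite_ne_right_iff.1 h3
      have h7 := shift_ne_zero A h4
      have h8 := hP _ (shift_arg_ne_zero A h4)
      have h9 := izwPow_ne_zero (F_isZ 𝓕) h6
      simp only [Set.mem_Icc, Prod.le_def] at *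
      omega
  · rintro ⟨n, p⟩ h2 h4
    have h2 := iotaPow_ne_zero (inv_isNeg 𝓕) h2
    have h7 := shift_ne_zero A h4
    have h8 := hP _ (shift_arg_ne_zero A h4)
    simp only [Set.mem_Icc, Prod.le_def] at *
    omega

theorem Y_shift_right (a x : V) (k l : ℤ) :
    A.Y a (shift A l x) k =
      ∑ᶠ q : ℤ × ℤ, izwPow 𝓕.Fzi q.1 k (l - q.2) • shift A q.2 (A.Y a x q.1) := by
  obtain ⟨P, hP⟩ := IsLaurent.exists_le (A.Y_laurent x a)
  have h1 : ∀ q : ℤ × ℤ, shift A q.1 (A.Y (shift A l x) a q.2) =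
      ∑ᶠ t : ℤ × ℤ, (if t.1 = q.1 then izwPow 𝓕.F t.2 q.2 l else 0) •
        shift A t.1 (A.Y x a t.2) := by
    intro q
    rw [Y_shift_left, map_finsum_smul (s := Set.Icc P (q.2 + l)) (hs := Set.finite_Icc _ _),
      finsum_eq_of_injective (β := ℤ × ℤ) (φ := fun j : ℤ => (q.1, j))]
    · simp
    · intro a b h; simpa using h
    · intro t ht
      have := (ite_ne_right_iff.1 (left_ne_zero_of_smul ht)).1
      exact ⟨t.2, Prod.ext this.symm rfl⟩
    · intro p h2 h3
      have h2 := izwPow_ne_zero (F_isZ 𝓕) h2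
      have h3 := hP _ h3
      simp only [Set.mem_Icc]
      omega
  rw [skew_shift]
  simp only [h1]
  rw [finsum_smul_comm (s := Set.Icc (((0, P - l), (0, P)) : (ℤ × ℤ) × ℤ × ℤ)
      ((k - P + l, k), (k - P + l, k + l))) (hs := Set.finite_Icc _ _)]
  · simp only [shift_Y A a x]
    rw [finsum_smul_comm (s := Set.Icc (((P, 0), (0, P)) : (ℤ × ℤ) × ℤ × ℤ)
      ((k + l, l), (l + k + l - P, k + l))) (hs := Set.finite_Icc _ _)]
    · refine finsum_congr fun t => ?_
      congr 1
      have h2 := coeff_uX_iz_F 𝓕 t.1 t.2 k l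
      refine Eq.trans ?_ (h2.symm.trans (finsum_congr fun q => mul_comm _ _))
      rw [finsum_eq_of_injective (β := ℤ × ℤ) (φ := fun n : ℤ => (t.1, n))]
      · simp
      · intro a b h; simpa using h
      · intro q hq
        have := (ite_ne_right_iff.1 (right_ne_zero_of_mul hq)).1
        exact ⟨q.2, Prod.ext this rfl⟩
    · rintro ⟨m, i⟩ ⟨j, p⟩ h2 h3 h4
      have h2 := izwPow_ne_zero (Fzi_isZ 𝓕) h2
      obtain ⟨n, hn⟩ := exists_of_finsum_ne_zero h3
      have h5 := iotaPow_ne_zero (inv_isNeg 𝓕) (left_ne_zero_of_mul hn)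
      have h7 := shift_ne_zero A h4
      have h8 := hP _ (shift_arg_ne_zero A h4)
      have h9 := izwPow_F_nn h7 (right_ne_zero_of_mul hn)
      have h10 := izwPow_ne_zero (F_isZ 𝓕) (right_ne_zero_of_mul hn)
      simp only [Set.mem_Icc, Prod.le_def] at *
      omega
  · rintro ⟨j, q⟩ ⟨j', p⟩ h2 h3 h4
    have h2 := iotaPow_ne_zero (inv_isNeg 𝓕) h2
    obtain ⟨h5, h6⟩ := ite_ne_right_iff.1 h3
    have h7 := shift_ne_zero A h4
    have h8 := hP _ (shift_arg_ne_zero A h4)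
    have h9 := izwPow_ne_zero (F_isZ 𝓕) h6
    simp only [Set.mem_Icc, Prod.le_def] at *
    omega

/-- The operation `G ↦ 𝒮(w) G(z, ι(w))`. -/
noncomputable def twist (G : ℤ → ℤ → V) (k l : ℤ) : V :=
  ∑ᶠ q : ℤ × ℤ, iotaPow 𝓕.inv q.2 (l - q.1) • shift A q.1 (G k q.2)

theorem Y_Y_left (a b c : V) (k l : ℤ) :
    A.Y b (A.Y a c k) l = twist A (fun k l => A.Y (A.Y a c k) b l) k l :=
  skew_shift A _ _ _

theorem Y_Y_right (a b c : V) (k l : ℤ) :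
    A.Y a (A.Y b c l) k = twist A (substFProd 𝓕 (fun v => A.Y a v) (A.Y c b)) k l := by
  obtain ⟨D, hD⟩ := IsLaurent.exists_le (A.Y_laurent c b)
  obtain ⟨K, hK⟩ := exists_lower_bound (fun q => A.Y_laurent a (A.Y c b q)) D l
  let u : ℤ × ℤ × ℤ → V := fun t => shift A t.1 (A.Y a (A.Y c b t.2.2) t.2.1)
  have hu : ∀ t, u t ≠ 0 → 0 ≤ t.1 ∧ D ≤ t.2.2 ∧ (t.2.2 ≤ l → K ≤ t.2.1) := by
    intro t ht
    have h1 := shift_arg_ne_zero A ht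
    have h2 : D ≤ t.2.2 := hD _ fun h0 => h1 (by rw [h0]; simp)
    exact ⟨shift_ne_zero A ht, h2, fun h3 => hK _ _ h2 h3 h1⟩
  have h1 : ∀ q : ℤ × ℤ, A.Y a (shift A q.1 (A.Y c b q.2)) k =
      ∑ᶠ t : ℤ × ℤ × ℤ, (if t.2.2 = q.2 then izwPow 𝓕.Fzi t.2.1 k (q.1 - t.1) else 0) • u t := by
    intro q
    rw [Y_shift_right,
      finsum_eq_of_injective (β := ℤ × ℤ × ℤ) (φ := fun j : ℤ × ℤ => (j.2, j.1, q.2))]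
    · simp [u]
    · rintro ⟨a, b⟩ ⟨c, d⟩ h
      simpa [and_comm] using h
    · intro t ht
      have := (ite_ne_right_iff.1 (left_ne_zero_of_smul ht)).1
      exact ⟨(t.2.1, t.1), by rw [← this]⟩
  have h2 : A.Y a (A.Y b c l) k = ∑ᶠ q : ℤ × ℤ, iotaPow 𝓕.inv q.2 (l - q.1) •
      A.Y a (shift A q.1 (A.Y c b q.2)) k := by
    rw [skew_shift A b c]
    refine map_finsum_smul (LinearMap.proj k ∘ₗ A.Y a) _ _
      (s := Set.Icc ((0, D) : ℤ × ℤ) (l - D, l)) (Set.finite_Icc _ _) ?_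
    rintro ⟨i, q⟩ h2 h3
    have h2 := iotaPow_ne_zero (inv_isNeg 𝓕) h2
    have h4 := shift_ne_zero A h3
    have h5 := hD _ (shift_arg_ne_zero A h3)
    simp only [Set.mem_Icc, Prod.le_def] at *
    omega
  have h3 : ∀ q : ℤ × ℤ, q.2 ≤ l - q.1 →
      shift A q.1 (substFProd 𝓕 (fun v => A.Y a v) (A.Y c b) k q.2) =
      ∑ᶠ t : ℤ × ℤ × ℤ, (if t.1 = q.1 then izwPow 𝓕.F t.2.1 k (q.2 - t.2.2) else 0) • u t := by
    intro q hq
    by_cases hq0 : 0 ≤ q.1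
    · rw [substFProd, map_finsum_smul (s := Set.Icc ((K, D) : ℤ × ℤ) (k + q.2 - D, q.2))
        (hs := Set.finite_Icc _ _),
        finsum_eq_of_injective (β := ℤ × ℤ × ℤ) (φ := fun j : ℤ × ℤ => (q.1, j))]
      · simp [u]
      · intro i j h; simpa using h
      · intro t ht
        have := (ite_ne_right_iff.1 (left_ne_zero_of_smul ht)).1
        exact ⟨t.2, by rw [← this]⟩
      · rintro ⟨m, j⟩ h4 h5
        have h4 := izwPow_ne_zero (F_isZ 𝓕) h4
        have h6 : D ≤ j := hD _ fun h0 => h5 (by simp [h0])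
        have h7 := hK _ _ h6 (by simp only at *; omega) h5
        simp only [Set.mem_Icc, Prod.le_def] at *
        omega
    · rw [finsum_eq_zero_of_forall_eq_zero]
      · simp [shift, hq0]
      · intro t
        by_contra h4
        have h5 := (ite_ne_right_iff.1 (left_ne_zero_of_smul h4)).1
        have h6 := hu _ (right_ne_zero_of_smul h4)
        omega
  have h4 : twist A (substFProd 𝓕 (fun v => A.Y a v) (A.Y c b)) k l =
      ∑ᶠ q : ℤ × ℤ, iotaPow 𝓕.inv q.2 (l - q.1) • ∑ᶠ t : ℤ × ℤ × ℤ,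
        (if t.1 = q.1 then izwPow 𝓕.F t.2.1 k (q.2 - t.2.2) else 0) • u t := by
    refine finsum_congr fun q => ?_
    by_cases hq : iotaPow 𝓕.inv q.2 (l - q.1) = 0
    · rw [hq, zero_smul, zero_smul]
    · rw [h3 q (iotaPow_ne_zero (inv_isNeg 𝓕) hq)]
  rw [h2, h4]
  simp only [h1]
  rw [finsum_smul_comm (s := Set.Icc (((0, D), (0, K, D)) : (ℤ × ℤ) × ℤ × ℤ × ℤ)
      ((l - D, l), (l - D, k + l - D, l))) (hs := Set.finite_Icc _ _),
    finsum_smul_comm (s := Set.Icc (((0, D), (0, K, D)) : (ℤ × ℤ) × ℤ × ℤ × ℤ)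
      ((l - D, l), (l - D, k + l - D, l))) (hs := Set.finite_Icc _ _)]
  · refine finsum_congr fun t => ?_
    congr 1
    have h5 := coeff_iw_F 𝓕 t.2.1 t.2.2 k (l - t.1)
    rw [finsum_eq_of_injective (β := ℤ × ℤ) (φ := fun n : ℤ => (l - n, t.2.2)),
      finsum_eq_of_injective (β := ℤ × ℤ) (φ := fun n : ℤ => (t.1, n))]
    · simp only [if_true, sub_sub_cancel]
      rw [h5]
      refine finsum_congr fun n => ?_
      rw [sub_right_comm]
    · intro a b h; simpa using h
    · intro q hq
      have := (ite_ne_right_iff.1 (right_ne_zero_of_mul hq)).1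
      exact ⟨q.2, by rw [this]⟩
    · intro a b h; simpa using h
    · intro q hq
      have := (ite_ne_right_iff.1 (right_ne_zero_of_mul hq)).1
      exact ⟨l - q.1, by rw [this, sub_sub_cancel]⟩
  · rintro ⟨i, j⟩ ⟨i', m, q⟩ h5 h6 h7
    have h5 := iotaPow_ne_zero (inv_isNeg 𝓕) h5
    obtain ⟨h8, h9⟩ := ite_ne_right_iff.1 h6
    have h9 := izwPow_ne_zero (F_isZ 𝓕) h9
    have h7 := hu _ h7
    simp only [Set.mem_Icc, Prod.le_def] at *
    omega
  · rintro ⟨i, j⟩ ⟨i', m, q⟩ h5 h6 h7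
    have h5 := iotaPow_ne_zero (inv_isNeg 𝓕) h5
    obtain ⟨h8, h9⟩ := ite_ne_right_iff.1 h6
    have h9 := izwPow_ne_zero (Fzi_isZ 𝓕) h9
    have h7 := hu _ h7
    simp only [Set.mem_Icc, Prod.le_def] at *
    omega

end VertexAlgebra

section WeakCommutativity

variable {R : Type*} [CommRing R] {𝓕 : FormalGroupLaw R} {V : Type*} [AddCommGroup V] [Module R V]
  (A : VertexFAlgebra R 𝓕 V)

theorem twist_mulS2 {G : ℤ → ℤ → V} (hG : LocFin G) (N : ℕ) :
    twist A (mulS2 (pow2 𝓕.F N) G) = mulS2 (pow2 𝓕.Fzi N) (twist A G) := by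
  funext k l
  obtain ⟨K, hK⟩ := hG k l
  let u : ℤ × ℤ × ℤ → V := fun t => shift A t.1 (G (k - t.2.1) t.2.2)
  have hu : ∀ t, u t ≠ 0 → 0 ≤ t.1 ∧ (0 ≤ t.2.1 → t.2.2 ≤ l → K ≤ k - t.2.1 ∧ K ≤ t.2.2) :=
    fun t ht => ⟨shift_ne_zero A ht, fun h1 h2 =>
      hK _ (by omega) _ h2 (shift_arg_ne_zero A ht)⟩
  have h1 : ∀ q : ℤ × ℤ, q.2 ≤ l - q.1 →
      shift A q.1 (mulS2 (pow2 𝓕.F N) G k q.2) =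
      ∑ᶠ t : ℤ × ℤ × ℤ, (if t.1 = q.1 then pow2 𝓕.F N t.2.1 (q.2 - t.2.2) else 0) • u t := by
    intro q hq
    by_cases hq0 : 0 ≤ q.1
    · rw [mulS2, map_finsum_smul (s := Set.Icc ((0, 0) : ℤ × ℤ) (k - K, q.2 - K))
        (hs := Set.finite_Icc _ _),
        finsum_eq_of_injective (β := ℤ × ℤ × ℤ) (φ := fun p : ℤ × ℤ => (q.1, p.1, q.2 - p.2))]
      · simp [u]
      · rintro ⟨a, b⟩ ⟨c, d⟩ h
        simpa using h
      · intro t ht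
        have := (ite_ne_right_iff.1 (left_ne_zero_of_smul ht)).1
        exact ⟨(t.2.1, q.2 - t.2.2), by rw [← this]; simp⟩
      · rintro ⟨m, j⟩ h4 h5
        have h4 := (F_nn 𝓕).pow2 _ _ _ h4
        have h7 := hK _ (by simp only; omega) _ (by simp only; omega) h5
        simp only [Set.mem_Icc, Prod.le_def] at *
        omega
    · rw [finsum_eq_zero_of_forall_eq_zero]
      · simp [shift, hq0]
      · intro t
        by_contra h4
        have h5 := (ite_ne_right_iff.1 (left_ne_zero_of_smul h4)).1
        have h6 := hu _ (right_ne_zero_of_smul h4)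
        omega
  have h2 : twist A (mulS2 (pow2 𝓕.F N) G) k l =
      ∑ᶠ q : ℤ × ℤ, iotaPow 𝓕.inv q.2 (l - q.1) • ∑ᶠ t : ℤ × ℤ × ℤ,
        (if t.1 = q.1 then pow2 𝓕.F N t.2.1 (q.2 - t.2.2) else 0) • u t := by
    refine finsum_congr fun q => ?_
    by_cases hq : iotaPow 𝓕.inv q.2 (l - q.1) = 0
    · rw [hq, zero_smul, zero_smul]
    · rw [h1 q (iotaPow_ne_zero (inv_isNeg 𝓕) hq)]
  have h3 : ∀ p : ℤ × ℤ, twist A G (k - p.1) (l - p.2) =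
      ∑ᶠ t : ℤ × ℤ × ℤ,
        (if t.2.1 = p.1 then iotaPow 𝓕.inv t.2.2 (l - p.2 - t.1) else 0) • u t := by
    intro p
    rw [twist, finsum_eq_of_injective (β := ℤ × ℤ × ℤ) (φ := fun q : ℤ × ℤ => (q.1, p.1, q.2))]
    · simp [u]
    · rintro ⟨a, b⟩ ⟨c, d⟩ h
      simpa using h
    · intro t ht
      have := (ite_ne_right_iff.1 (left_ne_zero_of_smul ht)).1
      exact ⟨(t.1, t.2.2), by rw [← this]⟩
  rw [h2, mulS2]
  simp only [h3]
  rw [finsum_smul_comm (s := Set.Icc (((0, K), (0, 0, K)) : (ℤ × ℤ) × ℤ × ℤ × ℤ)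
      ((l - K, l), (l - K, k - K, l))) (hs := Set.finite_Icc _ _),
    finsum_smul_comm (s := Set.Icc (((0, 0), (0, 0, K)) : (ℤ × ℤ) × ℤ × ℤ × ℤ)
      ((k - K, l - K), (l - K, k - K, l))) (hs := Set.finite_Icc _ _)]
  · refine finsum_congr fun t => ?_
    congr 1
    have h5 := coeff_iw_F 𝓕 N t.2.2 t.2.1 (l - t.1)
    rw [izwPow_F_natCast, izwPow_Fzi_natCast] at h5
    rw [finsum_eq_of_injective (β := ℤ × ℤ) (φ := fun n : ℤ => (t.1, n)),
      finsum_eq_of_injective (β := ℤ × ℤ) (φ := fun n : ℤ => (t.2.1, l - t.1 - n))]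
    · simp only [if_true]
      rw [h5]
      refine finsum_congr fun n => ?_
      rw [mul_comm, show l - (l - t.1 - n) - t.1 = n by ring]
    · intro a b h; simpa using h
    · intro q hq
      have := (ite_ne_right_iff.1 (right_ne_zero_of_mul hq)).1
      exact ⟨l - t.1 - q.2, by rw [this, sub_sub_cancel]⟩
    · intro a b h; simpa using h
    · intro q hq
      have := (ite_ne_right_iff.1 (right_ne_zero_of_mul hq)).1
      exact ⟨q.2, by rw [this]⟩
  · rintro ⟨p, q⟩ ⟨i, m, j⟩ h5 h6 h7
    have h5 := (Fzi_isZ 𝓕).1.pow2 _ _ _ h5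
    obtain ⟨h8, h9⟩ := ite_ne_right_iff.1 h6
    have h9 := iotaPow_ne_zero (inv_isNeg 𝓕) h9
    have h7 := hu _ h7
    simp only [Set.mem_Icc, Prod.le_def] at *
    omega
  · rintro ⟨p, q⟩ ⟨i, m, j⟩ h5 h6 h7
    have h5 := iotaPow_ne_zero (inv_isNeg 𝓕) h5
    obtain ⟨h8, h9⟩ := ite_ne_right_iff.1 h6
    have h9 := (F_nn 𝓕).pow2 _ _ _ h9
    have h7 := hu _ h7
    simp only [Set.mem_Icc, Prod.le_def] at *
    omega

theorem locFin_Y_Y_left (a b c : V) : LocFin fun k l => A.Y (A.Y a c k) b l := by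
  obtain ⟨D, hD⟩ := IsLaurent.exists_le (A.Y_laurent a c)
  exact locFin_of_isLaurent (fun q => A.Y_laurent (A.Y a c q) b)
    fun q m h => hD q fun h0 => h (by simp [h0])

theorem locFin_Y_Y_right (a b c : V) : LocFin fun k l => A.Y b (A.Y a c k) l := by
  obtain ⟨D, hD⟩ := IsLaurent.exists_le (A.Y_laurent a c)
  exact locFin_of_isLaurent (fun q => A.Y_laurent b (A.Y a c q))
    fun q m h => hD q fun h0 => h (by simp [h0])

theorem locFin_substFProd (a b c : V) :
    LocFin (substFProd 𝓕 (fun v => A.Y a v) (A.Y c b)) := by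
  intro k l
  obtain ⟨D, hD⟩ := IsLaurent.exists_le (A.Y_laurent c b)
  obtain ⟨K, hK⟩ := exists_lower_bound (fun q => A.Y_laurent a (A.Y c b q)) D l
  refine ⟨min D (K + D - l), fun k' hk l' hl h => ?_⟩
  obtain ⟨⟨m, q⟩, hq⟩ := exists_of_finsum_ne_zero h
  have h1 := izwPow_ne_zero (F_isZ 𝓕) (left_ne_zero_of_smul hq)
  have h2 := right_ne_zero_of_smul hq
  have h3 : D ≤ q := hD _ fun h0 => h2 (by simp [h0])
  have h4 := hK _ _ h3 (by simp only at h1; omega) h2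
  simp only at h1 h4
  omega

end WeakCommutativity

end VertexF

/-- weak commutativity in a vertex `F`-algebra: there is `M ≥ 0` with
`F(z,ι(w))^M Y(a,z)Y(b,w)c = F(z,ι(w))^M Y(b,w)Y(a,z)c` as bilateral series in
`V⟦z^{±1}, w^{±1}⟧` (coefficient of `z^k w^l`), and equivalently with `(z-w)^M` in
place of `F(z,ι(w))^M`. -/
theorem weak_commutativity (R : Type*) [CommRing R] (𝓕 : FormalGroupLaw R)
    (V : Type*) [AddCommGroup V] [Module R V] (A : VertexFAlgebra R 𝓕 V)
    (a b c : V) :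
    (∃ M : ℕ, mulS2 (pow2 𝓕.Fzi M) (fun k l => A.Y a (A.Y b c l) k)
        = mulS2 (pow2 𝓕.Fzi M) (fun k l => A.Y b (A.Y a c k) l)) ∧
    (∃ M : ℕ, mulS2 (pow2 (zmw R) M) (fun k l => A.Y a (A.Y b c l) k)
        = mulS2 (pow2 (zmw R) M) (fun k l => A.Y b (A.Y a c k) l)) := by
  obtain ⟨N, hN⟩ := A.weak_assoc a c b
  have h1 : mulS2 (pow2 𝓕.Fzi N) (fun k l => A.Y a (A.Y b c l) k)
      = mulS2 (pow2 𝓕.Fzi N) (fun k l => A.Y b (A.Y a c k) l) := by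
    simp only [VertexF.Y_Y_left A a b c, VertexF.Y_Y_right A a b c]
    exact (VertexF.twist_mulS2 A (VertexF.locFin_substFProd A a b c) N).symm.trans
      ((congrArg (VertexF.twist A) hN.symm).trans (VertexF.twist_mulS2 A (VertexF.locFin_Y_Y_left A a b c) N))
  obtain ⟨h, hh, hM⟩ := VertexF.exists_zmw_eq 𝓕
  refine ⟨⟨N, h1⟩, N, ?_⟩
  have hF := (VertexF.Fzi_isZ 𝓕).1.pow2 N
  rw [hM, ← VertexF.mulS2_assoc (hh.pow2 N) hF (VertexF.locFin_Y_Y_right A b a c).swap,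
    ← VertexF.mulS2_assoc (hh.pow2 N) hF (VertexF.locFin_Y_Y_right A a b c), h1]
end

section
/- Let F be a formal group law over a commutative ring R. Then the F-Jacobi identity for delta distributions holds in R⟦z0^{±1},z1^{±1},z2^{±1}⟧: i_{z1,z2} z0^{-1}δ_F(F(z1,ι z2)/z0) − i_{z2,z1} z0^{-1}δ_F(F(z1,ι z2)/z0) = i_{z1,z0} z2^{-1}δ_F(F(z1,ι z0)/z2), where i_{z1,z2} z0^{-1}δ_F(F(z1,ι z2)/z0) denotes the bilateral series obtained from z0^{-1}δ_F(w/z0) by substituting w^{±1} ↦ i_{z1,z2}F(z1,ι z2)^{±1} (the integer powers of F(z1,ι z2) expanded in R((z1))((z2))), i_{z2,z1} the analogous substitution with powers expanded in R((z2))((z1)), and i_{z1,z0} z2^{-1}δ_F(F(z1,ι z0)/z2) the substitution w^{±1} ↦ i_{z1,z0}F(z1,ι z0)^{±1} into z2^{-1}δ_F(w/z2). -/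
/-!
Coefficient-wise formal calculus for vertex `F`-algebras, following
M. Upmeier, "Vertex F-Algebras and Their Associated Lie Algebra".

Series in one, two or three variables are represented by their coefficient
functions `ℤ → R`, `ℤ → ℤ → R`, …; products are given by coefficient-wise
(finite) sums, expressed via `finsum` (`∑ᶠ`).
-/

open scoped BigOperators

noncomputable section

open MvPowerSeries

section FinsumReindex

variable {α β N : Type*} [AddCommMonoid N]

theorem finsum_mem_eq_finsum_of_support_subset {s : Set α} {f : α → N}
    (h : Function.support f ⊆ s) : ∑ᶠ x ∈ s, f x = ∑ᶠ x, f x := by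
  rw [finsum_mem_def, Set.indicator_eq_self.2 h]

theorem finsum_eq_finsum_mem_comp {s : Set α} {g : β → N} (e : α → β) (he : Set.InjOn e s)
    (hg : Function.support g ⊆ e '' s) : ∑ᶠ y, g y = ∑ᶠ x ∈ s, g (e x) := by
  rw [← finsum_mem_eq_finsum_of_support_subset hg, finsum_mem_image he]

theorem finsum_eq_finsum_of_injOn {s : Set α} {f : α → N} {g : β → N} (e : α → β)
    (he : Set.InjOn e s) (hf : Function.support f ⊆ s) (hg : Function.support g ⊆ e '' s)
    (h : ∀ x ∈ s, f x = g (e x)) : ∑ᶠ x, f x = ∑ᶠ y, g y := by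
  rw [finsum_eq_finsum_mem_comp e he hg, ← finsum_mem_eq_finsum_of_support_subset hf]
  exact finsum_mem_congr rfl h

end FinsumReindex

section IntegerCoefficients

variable {R : Type*} [CommRing R]

/-- The exponent `(i, j)` of a bivariate monomial. -/
def biexp (i j : ℕ) : Fin 2 →₀ ℕ := Finsupp.single 0 i + Finsupp.single 1 j

@[simp] theorem biexp_zero (i j : ℕ) : biexp i j 0 = i := by simp [biexp]

@[simp] theorem biexp_one (i j : ℕ) : biexp i j 1 = j := by simp [biexp]

theorem biexp_self (d : Fin 2 →₀ ℕ) : biexp (d 0) (d 1) = d := by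
  ext k; fin_cases k <;> simp

/-- The coefficients of a bivariate power series, extended by zero to integer exponents. -/
def bcoeff (f : MvPowerSeries (Fin 2) R) (i j : ℤ) : R :=
  if 0 ≤ i ∧ 0 ≤ j then coeff (biexp i.toNat j.toNat) f else 0

theorem bcoeff_natCast (f : MvPowerSeries (Fin 2) R) (i j : ℕ) :
    bcoeff f i j = coeff (biexp i j) f := by
  simp [bcoeff]

theorem bcoeff_of_neg (f : MvPowerSeries (Fin 2) R) {i j : ℤ} (h : i < 0 ∨ j < 0) :
    bcoeff f i j = 0 :=
  if_neg (by lia)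

theorem coeff_eq_bcoeff (f : MvPowerSeries (Fin 2) R) (d : Fin 2 →₀ ℕ) :
    coeff d f = bcoeff f (d 0) (d 1) := by
  rw [bcoeff_natCast, biexp_self]

theorem bcoeff_one : bcoeff (1 : MvPowerSeries (Fin 2) R) = oneS2 R := by
  funext i j
  by_cases h : i < 0 ∨ j < 0
  · rw [bcoeff_of_neg _ h, oneS2, if_neg (by lia)]
  · obtain ⟨i, rfl⟩ := Int.eq_ofNat_of_zero_le (show 0 ≤ i by lia)
    obtain ⟨j, rfl⟩ := Int.eq_ofNat_of_zero_le (show 0 ≤ j by lia)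
    classical
    simp [bcoeff_natCast, coeff_one, oneS2, Finsupp.ext_iff, Fin.forall_fin_two]

theorem bcoeff_mul (f g : MvPowerSeries (Fin 2) R) :
    bcoeff (f * g) = mulS2 (bcoeff f) (bcoeff g) := by
  funext a b
  have key : ∀ p : ℤ × ℤ, bcoeff f p.1 p.2 • bcoeff g (a - p.1) (b - p.2) ≠ 0 →
      0 ≤ p.1 ∧ 0 ≤ p.2 ∧ p.1 ≤ a ∧ p.2 ≤ b := by
    intro p hp
    by_contra hcon
    apply hp
    by_cases h : p.1 < 0 ∨ p.2 < 0
    · rw [bcoeff_of_neg f h, zero_smul]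
    · rw [bcoeff_of_neg g (by lia), smul_zero]
  by_cases h : a < 0 ∨ b < 0
  · rw [bcoeff_of_neg _ h, mulS2, finsum_eq_zero_of_forall_eq_zero]
    intro p
    by_contra hp
    have := key p hp
    lia
  obtain ⟨a, rfl⟩ := Int.eq_ofNat_of_zero_le (show 0 ≤ a by lia)
  obtain ⟨b, rfl⟩ := Int.eq_ofNat_of_zero_le (show 0 ≤ b by lia)
  classical
  rw [bcoeff_natCast, coeff_mul, mulS2, ← finsum_mem_coe_finset,
    finsum_eq_finsum_mem_comp (s := ↑(Finset.HasAntidiagonal.antidiagonal (biexp a b)))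
      (fun p : (Fin 2 →₀ ℕ) × (Fin 2 →₀ ℕ) => ((p.1 0 : ℤ), (p.1 1 : ℤ)))]
  · refine finsum_mem_congr rfl fun p hp => ?_
    have hp : p.1 + p.2 = biexp a b := by simpa using hp
    have h0 := DFunLike.congr_fun hp 0
    have h1 := DFunLike.congr_fun hp 1
    simp only [Finsupp.add_apply, biexp_zero, biexp_one] at h0 h1
    rw [coeff_eq_bcoeff, coeff_eq_bcoeff g, smul_eq_mul, ← h0, ← h1]
    simp
  · intro p hp q hq hpq
    have hp : p.1 + p.2 = biexp a b := by simpa using hp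
    have hq : q.1 + q.2 = biexp a b := by simpa using hq
    have h1 : p.1 = q.1 := by
      ext k
      fin_cases k <;> simp_all
    rw [← hq, h1] at hp
    exact Prod.ext h1 (add_left_cancel hp)
  · rintro ⟨i, j⟩ hp
    obtain ⟨h1, h2, h3, h4⟩ := key _ hp
    simp only at h1 h2 h3 h4
    obtain ⟨i, rfl⟩ := Int.eq_ofNat_of_zero_le h1
    obtain ⟨j, rfl⟩ := Int.eq_ofNat_of_zero_le h2
    refine ⟨(biexp i j, biexp (a - i) (b - j)), ?_, by simp⟩
    simp only [Finset.mem_coe, Finset.HasAntidiagonal.mem_antidiagonal]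
    ext k
    fin_cases k <;> simp <;> lia

theorem bcoeff_pow (f : MvPowerSeries (Fin 2) R) (k : ℕ) :
    bcoeff (f ^ k) = pow2 (bcoeff f) k := by
  induction k with
  | zero => rw [pow_zero, bcoeff_one, pow2]
  | succ k ih => rw [pow_succ', bcoeff_mul, ih, pow2]

/-- The bivariate power series with prescribed coefficients. -/
def ofCoeff2 (f : ℤ → ℤ → R) : MvPowerSeries (Fin 2) R := fun d => f (d 0) (d 1)

theorem coeff_ofCoeff2 (f : ℤ → ℤ → R) (d : Fin 2 →₀ ℕ) :
    coeff d (ofCoeff2 f) = f (d 0) (d 1) := rfl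

theorem bcoeff_ofCoeff2 {f : ℤ → ℤ → R} (hf : ∀ i j, i < 0 ∨ j < 0 → f i j = 0) :
    bcoeff (ofCoeff2 f) = f := by
  funext i j
  by_cases h : i < 0 ∨ j < 0
  · rw [bcoeff_of_neg _ h, hf i j h]
  · obtain ⟨i, rfl⟩ := Int.eq_ofNat_of_zero_le (show 0 ≤ i by lia)
    obtain ⟨j, rfl⟩ := Int.eq_ofNat_of_zero_le (show 0 ≤ j by lia)
    rw [bcoeff_natCast, coeff_ofCoeff2, biexp_zero, biexp_one]

/-- The coefficients of a univariate power series, extended by zero to integer exponents. -/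
def ucoeff (f : PowerSeries R) (i : ℤ) : R := if 0 ≤ i then PowerSeries.coeff i.toNat f else 0

theorem ucoeff_natCast (f : PowerSeries R) (i : ℕ) : ucoeff f i = PowerSeries.coeff i f := by
  simp [ucoeff]

theorem ucoeff_of_neg (f : PowerSeries R) {i : ℤ} (h : i < 0) : ucoeff f i = 0 :=
  if_neg (by lia)

theorem ucoeff_one : ucoeff (1 : PowerSeries R) = oneS R := by
  funext i
  by_cases h : i < 0
  · rw [ucoeff_of_neg _ h, oneS, if_neg (by lia)]
  · obtain ⟨i, rfl⟩ := Int.eq_ofNat_of_zero_le (show 0 ≤ i by lia)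
    simp [ucoeff_natCast, PowerSeries.coeff_one, oneS]

theorem ucoeff_mul (f g : PowerSeries R) : ucoeff (f * g) = mulS (ucoeff f) (ucoeff g) := by
  funext a
  have key : ∀ i : ℤ, ucoeff f i • ucoeff g (a - i) ≠ 0 → 0 ≤ i ∧ i ≤ a := by
    intro i hi
    by_contra hcon
    apply hi
    by_cases h : i < 0
    · rw [ucoeff_of_neg f h, zero_smul]
    · rw [ucoeff_of_neg g (by lia), smul_zero]
  by_cases h : a < 0
  · rw [ucoeff_of_neg _ h, mulS, finsum_eq_zero_of_forall_eq_zero]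
    intro i
    by_contra hi
    have := key i hi
    lia
  obtain ⟨a, rfl⟩ := Int.eq_ofNat_of_zero_le (show 0 ≤ a by lia)
  rw [ucoeff_natCast, PowerSeries.coeff_mul, mulS, ← finsum_mem_coe_finset,
    finsum_eq_finsum_mem_comp (s := ↑(Finset.HasAntidiagonal.antidiagonal a))
      (fun p : ℕ × ℕ => (p.1 : ℤ))]
  · refine finsum_mem_congr rfl fun p hp => ?_
    have hp : p.1 + p.2 = a := by simpa using hp
    rw [smul_eq_mul, ← hp, Nat.cast_add, add_sub_cancel_left, ucoeff_natCast, ucoeff_natCast]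
  · intro p hp q hq hpq
    have hp : p.1 + p.2 = a := by simpa using hp
    have hq : q.1 + q.2 = a := by simpa using hq
    simp only at hpq
    ext <;> lia
  · intro i hi
    obtain ⟨h1, h2⟩ := key _ hi
    obtain ⟨i, rfl⟩ := Int.eq_ofNat_of_zero_le h1
    exact ⟨(i, a - i), by simp; lia, rfl⟩

theorem ucoeff_pow (f : PowerSeries R) (k : ℕ) : ucoeff (f ^ k) = pow1 (ucoeff f) k := by
  induction k with
  | zero => rw [pow_zero, ucoeff_one, pow1]
  | succ k ih => rw [pow_succ', ucoeff_mul, ih, pow1]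

theorem ucoeff_mk {f : ℤ → R} (hf : ∀ i < 0, f i = 0) :
    ucoeff (PowerSeries.mk fun n => f n) = f := by
  funext i
  by_cases h : i < 0
  · rw [ucoeff_of_neg _ h, hf i h]
  · obtain ⟨i, rfl⟩ := Int.eq_ofNat_of_zero_le (show 0 ≤ i by lia)
    rw [ucoeff_natCast, PowerSeries.coeff_mk]

end IntegerCoefficients

section PairSubstitution

variable {R σ τ : Type*} [CommRing R]

theorem hasSubst_pair {a b : MvPowerSeries σ R} (ha : constantCoeff a = 0)
    (hb : constantCoeff b = 0) : HasSubst ![a, b] :=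
  hasSubst_of_constantCoeff_zero (by simp [Fin.forall_fin_two, ha, hb])

theorem coeff_subst_pair {a b : MvPowerSeries σ R} (ha : constantCoeff a = 0)
    (hb : constantCoeff b = 0) (f : MvPowerSeries (Fin 2) R) (e : σ →₀ ℕ) :
    coeff e (subst ![a, b] f) =
      ∑ᶠ d : Fin 2 →₀ ℕ, coeff d f * coeff e (a ^ d 0 * b ^ d 1) := by
  rw [coeff_subst (hasSubst_pair ha hb)]
  refine finsum_congr fun d => ?_
  rw [Finsupp.prod_pow, Fin.prod_univ_two, smul_eq_mul]
  rfl

theorem subst_pair_X_zero {a b : MvPowerSeries σ R} (ha : constantCoeff a = 0)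
    (hb : constantCoeff b = 0) : subst ![a, b] (X 0 : MvPowerSeries (Fin 2) R) = a :=
  subst_X (hasSubst_pair ha hb) 0

theorem subst_pair_X_one {a b : MvPowerSeries σ R} (ha : constantCoeff a = 0)
    (hb : constantCoeff b = 0) : subst ![a, b] (X 1 : MvPowerSeries (Fin 2) R) = b :=
  subst_X (hasSubst_pair ha hb) 1

theorem subst_one' {a : σ → MvPowerSeries τ R} (ha : HasSubst a) :
    subst a (1 : MvPowerSeries σ R) = 1 := by
  rw [← substAlgHom_apply (R := R) ha, map_one]

theorem subst_subst_pair {c : σ → MvPowerSeries τ R} (hc : HasSubst c) {a b : MvPowerSeries σ R}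
    (ha : constantCoeff a = 0) (hb : constantCoeff b = 0) (f : MvPowerSeries (Fin 2) R) :
    subst c (subst ![a, b] f) = subst ![subst c a, subst c b] f := by
  rw [subst_comp_subst_apply (hasSubst_pair ha hb) hc]
  congr 1
  funext k
  fin_cases k <;> rfl

theorem constantCoeff_monomial_one {u : σ →₀ ℕ} (hu : u ≠ 0) :
    constantCoeff (monomial u (1 : R)) = 0 := by
  classical
  rw [← coeff_zero_eq_constantCoeff_apply, coeff_monomial, if_neg hu.symm]

theorem coeff_subst_monomial [DecidableEq σ] {u v : σ →₀ ℕ} (hu : u ≠ 0) (hv : v ≠ 0)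
    (f : MvPowerSeries (Fin 2) R) (e : σ →₀ ℕ) :
    coeff e (subst ![monomial u (1 : R), monomial v 1] f) =
      ∑ᶠ d : Fin 2 →₀ ℕ, if e = d 0 • u + d 1 • v then coeff d f else 0 := by
  rw [coeff_subst_pair (constantCoeff_monomial_one hu) (constantCoeff_monomial_one hv)]
  refine finsum_congr fun d => ?_
  rw [monomial_pow, monomial_pow, monomial_mul_monomial, coeff_monomial]
  simp

theorem coeff_subst_monomial_of_forall {u v : σ →₀ ℕ} (hu : u ≠ 0) (hv : v ≠ 0)
    (f : MvPowerSeries (Fin 2) R) {e : σ →₀ ℕ} {d : Fin 2 →₀ ℕ}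
    (h : ∀ c : Fin 2 →₀ ℕ, e = c 0 • u + c 1 • v ↔ c = d) :
    coeff e (subst ![monomial u (1 : R), monomial v 1] f) = coeff d f := by
  classical
  rw [coeff_subst_monomial hu hv, finsum_eq_single _ d, if_pos ((h d).2 rfl)]
  exact fun c hc => if_neg fun hc' => hc ((h c).1 hc')

theorem coeff_subst_monomial_eq_zero {u v : σ →₀ ℕ} (hu : u ≠ 0) (hv : v ≠ 0)
    (f : MvPowerSeries (Fin 2) R) {e : σ →₀ ℕ}
    (h : ∀ c : Fin 2 →₀ ℕ, e ≠ c 0 • u + c 1 • v) :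
    coeff e (subst ![monomial u (1 : R), monomial v 1] f) = 0 := by
  classical
  rw [coeff_subst_monomial hu hv]
  exact finsum_eq_zero_of_forall_eq_zero fun c => if_neg (h c)

theorem X_mul_X_eq (p q : σ) :
    (X p * X q : MvPowerSeries σ R) = monomial (Finsupp.single p 1 + Finsupp.single q 1) 1 := by
  rw [X, X, monomial_mul_monomial, one_mul]

theorem single_one_add_ne_zero (p : σ) (u : σ →₀ ℕ) : Finsupp.single p 1 + u ≠ 0 := by
  intro h
  simpa using DFunLike.congr_fun h p

/-- Coefficients of `f(t, y t)`. -/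
theorem coeff_subst_X_one_X_mul_X (f : MvPowerSeries (Fin 2) R) (i j : ℕ) :
    coeff (biexp i j) (subst ![X 1, X 0 * X 1] f : MvPowerSeries (Fin 2) R) =
      bcoeff f ((j : ℤ) - i) i := by
  rw [X_mul_X_eq]
  by_cases h : i ≤ j
  · rw [← Nat.cast_sub h, bcoeff_natCast]
    apply coeff_subst_monomial_of_forall (by simp) (single_one_add_ne_zero _ _)
    intro c
    simp only [Finsupp.ext_iff, Fin.forall_fin_two]
    simp
    lia
  · rw [bcoeff_of_neg _ (by lia)]
    apply coeff_subst_monomial_eq_zero (by simp) (single_one_add_ne_zero _ _)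
    intro c hc
    have h0 := DFunLike.congr_fun hc 0
    have h1 := DFunLike.congr_fun hc 1
    simp at h0 h1
    lia

/-- Coefficients of `f(x t, t)`. -/
theorem coeff_subst_X_mul_X_X_one (f : MvPowerSeries (Fin 2) R) (i j : ℕ) :
    coeff (biexp i j) (subst ![X 0 * X 1, X 1] f : MvPowerSeries (Fin 2) R) =
      bcoeff f i ((j : ℤ) - i) := by
  rw [X_mul_X_eq]
  by_cases h : i ≤ j
  · rw [← Nat.cast_sub h, bcoeff_natCast]
    apply coeff_subst_monomial_of_forall (single_one_add_ne_zero _ _) (by simp)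
    intro c
    simp only [Finsupp.ext_iff, Fin.forall_fin_two]
    simp
    lia
  · rw [bcoeff_of_neg _ (by lia)]
    apply coeff_subst_monomial_eq_zero (single_one_add_ne_zero _ _) (by simp)
    intro c hc
    have h0 := DFunLike.congr_fun hc 0
    have h1 := DFunLike.congr_fun hc 1
    simp at h0 h1
    lia

end PairSubstitution

section ThreeVariables

variable {R σ : Type*} [CommRing R]

/-- The exponent of a monomial in three of the variables. -/
def triexp (p q r : σ) (a b n : ℕ) : σ →₀ ℕ :=
  Finsupp.single p a + Finsupp.single q b + Finsupp.single r n

variable {p q r : σ}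

theorem triexp_swap (p q r : σ) (a b n : ℕ) : triexp p q r a b n = triexp q p r b a n := by
  rw [triexp, triexp, add_comm (Finsupp.single p a)]

theorem triexp_fst (hpq : p ≠ q) (hpr : p ≠ r) (a b n : ℕ) : triexp p q r a b n p = a := by
  simp [triexp, hpq, hpr]

theorem triexp_snd (hpq : p ≠ q) (hqr : q ≠ r) (a b n : ℕ) : triexp p q r a b n q = b := by
  simp [triexp, hpq.symm, hqr]

theorem triexp_trd (hpr : p ≠ r) (hqr : q ≠ r) (a b n : ℕ) : triexp p q r a b n r = n := by
  simp [triexp, hpr.symm, hqr.symm]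

theorem coeff_triexp_subst_X_X (hpq : p ≠ q) (hpr : p ≠ r) (hqr : q ≠ r)
    (f : MvPowerSeries (Fin 2) R) (a b n : ℕ) :
    coeff (triexp p q r a b n) (subst ![X q, X r] f : MvPowerSeries σ R) =
      if a = 0 then bcoeff f b n else 0 := by
  split_ifs with h
  · rw [bcoeff_natCast]
    apply coeff_subst_monomial_of_forall (by simp) (by simp)
    intro c
    constructor
    · intro hc
      have h1 := DFunLike.congr_fun hc q
      have h2 := DFunLike.congr_fun hc r
      rw [triexp_snd hpq hqr] at h1
      rw [triexp_trd hpr hqr] at h2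
      simp [hqr, hqr.symm] at h1 h2
      rw [← biexp_self c, h1, h2]
    · rintro rfl
      simp [triexp, h]
  · apply coeff_subst_monomial_eq_zero (by simp) (by simp)
    intro c hc
    have h1 := DFunLike.congr_fun hc p
    rw [triexp_fst hpq hpr] at h1
    simp [hpq, hpr] at h1
    exact h h1

theorem coeff_triexp_subst_X_mul_X_mul (hpq : p ≠ q) (hpr : p ≠ r) (hqr : q ≠ r)
    (f : MvPowerSeries (Fin 2) R) (a b n : ℕ) :
    coeff (triexp p q r a b n) (subst ![X p * X r, X q * X r] f : MvPowerSeries σ R) =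
      if n = a + b then bcoeff f a b else 0 := by
  rw [X_mul_X_eq, X_mul_X_eq]
  split_ifs with h
  · rw [bcoeff_natCast]
    apply coeff_subst_monomial_of_forall (single_one_add_ne_zero _ _) (single_one_add_ne_zero _ _)
    intro c
    constructor
    · intro hc
      have h1 := DFunLike.congr_fun hc p
      have h2 := DFunLike.congr_fun hc q
      rw [triexp_fst hpq hpr] at h1
      rw [triexp_snd hpq hqr] at h2
      simp [hqr, hpq, hpr, hpq.symm] at h1 h2
      rw [← biexp_self c, h1, h2]
    · rintro rfl
      simp only [triexp, h, biexp_zero, biexp_one, smul_add, Finsupp.smul_single, smul_eq_mul,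
        mul_one, Finsupp.single_add]
      abel
  · apply coeff_subst_monomial_eq_zero (single_one_add_ne_zero _ _) (single_one_add_ne_zero _ _)
    intro c hc
    have h1 := DFunLike.congr_fun hc p
    have h2 := DFunLike.congr_fun hc q
    have h3 := DFunLike.congr_fun hc r
    rw [triexp_fst hpq hpr] at h1
    rw [triexp_snd hpq hqr] at h2
    rw [triexp_trd hpr hqr] at h3
    simp [hqr, hpq, hpr, hpq.symm, hpr.symm, hqr.symm] at h1 h2 h3
    lia

theorem coeff_triexp_X_pow_mul (hpr : p ≠ r) (hqr : q ≠ r) (f : MvPowerSeries σ R)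
    (a b n j : ℕ) :
    coeff (triexp p q r a b n) (X r ^ j * f) =
      if j ≤ n then coeff (triexp p q r a b (n - j)) f else 0 := by
  rw [X_pow_eq, coeff_monomial_mul, one_mul]
  have hle : Finsupp.single r j ≤ triexp p q r a b n ↔ j ≤ n := by
    rw [Finsupp.single_le_iff, triexp_trd hpr hqr]
  simp only [hle]
  split_ifs with h
  · congr 2
    rw [tsub_eq_iff_eq_add_of_le (hle.2 h), triexp, triexp, add_assoc _ _ (Finsupp.single r j),
      ← Finsupp.single_add, Nat.sub_add_cancel h]
  · rfl

theorem coeff_triexp_X_pow_mul_fst (hpq : p ≠ q) (hpr : p ≠ r) (f : MvPowerSeries σ R)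
    (a b n j : ℕ) :
    coeff (triexp p q r a b n) (X p ^ j * f) =
      if j ≤ a then coeff (triexp p q r (a - j) b n) f else 0 := by
  have rot (a' : ℕ) : triexp p q r a' b n = triexp q r p b n a' := by
    simp only [triexp]; abel
  rw [rot, coeff_triexp_X_pow_mul hpq.symm hpr.symm]
  simp only [rot]

/-- The coefficients of `(X_p / Q) W(X_p / Q, X_r Q)` with `Q = Q(X_q, X_r)`. -/
theorem coeff_triexp_subst_div_mul (hpq : p ≠ q) (hpr : p ≠ r) (hqr : q ≠ r)
    (W : MvPowerSeries (Fin 2) R) (Q : (MvPowerSeries (Fin 2) R)ˣ)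
    {P P' : MvPowerSeries σ R} (hP : P = subst ![X q, X r] (Q : MvPowerSeries (Fin 2) R))
    (hP' : P' = subst ![X q, X r] (↑Q⁻¹ : MvPowerSeries (Fin 2) R)) (a b n : ℕ) :
    coeff (triexp p q r (a + 1) b n) (subst ![X p * P', X r * P] (X 0 * W)) =
      ∑ᶠ m : ℤ, bcoeff W a (a + m + 1) *
        bcoeff (↑(Q ^ m) : MvPowerSeries (Fin 2) R) b (n - a - 1 - m) := by
  have hs : HasSubst (![X q, X r] : Fin 2 → MvPowerSeries σ R) :=
    hasSubst_pair (constantCoeff_X q) (constantCoeff_X r)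
  let φ := substAlgHom (R := R) hs
  let Q' : (MvPowerSeries σ R)ˣ := Units.map (φ : _ →* MvPowerSeries σ R) Q
  have hPQ : P = ↑Q' := by rw [hP, ← substAlgHom_apply (R := R) hs]; rfl
  have hPQ' : P' = ↑Q'⁻¹ := by rw [hP', ← substAlgHom_apply (R := R) hs]; rfl
  have hpow (m : ℤ) : (↑(Q' ^ m) : MvPowerSeries σ R) =
      subst ![X q, X r] (↑(Q ^ m) : MvPowerSeries (Fin 2) R) := by
    rw [← map_zpow, ← substAlgHom_apply (R := R) hs]; rfl
  have term (d : Fin 2 →₀ ℕ) : coeff (triexp p q r (a + 1) b n)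
      ((X p * P') ^ d 0 * (X r * P) ^ d 1) = if d 0 = a + 1 then
        bcoeff (↑(Q ^ ((d 1 : ℤ) - d 0)) : MvPowerSeries (Fin 2) R) b ((n : ℤ) - d 1) else 0 := by
    have h1 : (X p * P') ^ d 0 * (X r * P) ^ d 1 =
        X p ^ d 0 * (X r ^ d 1 * (↑(Q' ^ ((d 1 : ℤ) - d 0)) : MvPowerSeries σ R)) := by
      rw [zpow_sub, zpow_natCast, zpow_natCast, hPQ, hPQ', mul_pow, mul_pow]
      simp only [Units.val_mul, Units.val_pow_eq_pow_val, ← inv_pow]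
      ring
    rw [h1, coeff_triexp_X_pow_mul_fst hpq hpr, coeff_triexp_X_pow_mul hpr hqr, hpow,
      coeff_triexp_subst_X_X hpq hpr hqr]
    by_cases h2 : d 0 = a + 1
    · rw [if_pos (by lia), if_pos (show a + 1 - d 0 = 0 by lia), if_pos h2]
      split_ifs with h3
      · rw [Nat.cast_sub h3]
      · rw [bcoeff_of_neg _ (by lia)]
    · rw [if_neg h2]
      split_ifs <;> first | rfl | lia
  have hX (d : Fin 2 →₀ ℕ) (hd : d 0 = a + 1) : coeff d (X 0 * W) = bcoeff W a (d 1) := by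
    rw [show d = Finsupp.single 0 1 + biexp a (d 1) by
      ext k; fin_cases k <;> simp [hd, add_comm], X, coeff_add_monomial_mul, one_mul,
      ← bcoeff_natCast]
    simp
  rw [coeff_subst_pair (by simp) (by simp)]
  simp only [term]
  refine finsum_eq_finsum_of_injOn (s := {d | d 0 = a + 1})
    (fun d : Fin 2 →₀ ℕ => (d 1 : ℤ) - a - 1) ?_ ?_ ?_ ?_
  · intro c hc d hd hcd
    simp only [Set.mem_ofPred_eq] at hc hd hcd
    rw [← biexp_self c, ← biexp_self d, hc, hd, show c 1 = d 1 by lia]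
  · intro d hd
    by_contra h
    simp only [Set.mem_ofPred_eq] at h
    simp [h] at hd
  · intro m hm
    by_cases h : (a : ℤ) + m + 1 < 0
    · simp [bcoeff_of_neg W (Or.inr h)] at hm
    · exact ⟨biexp (a + 1) (a + m + 1).toNat, by simp, by simp; lia⟩
  · intro d hd
    have hd : d 0 = a + 1 := hd
    rw [hX d hd, if_pos hd, hd]
    congr 2
    · lia
    · push_cast; congr 2; lia
    · lia

/-- The coefficients of `U(Y, X_r)` with `X_r Y = g(X_p X_r, X_q X_r)`. -/
theorem coeff_triexp_subst_of_X_mul_eq (hpq : p ≠ q) (hpr : p ≠ r) (hqr : q ≠ r)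
    (U g : MvPowerSeries (Fin 2) R) {Y : MvPowerSeries σ R} (hY0 : constantCoeff Y = 0)
    (hY : X r * Y = subst ![X p * X r, X q * X r] g) (a b n : ℕ) :
    coeff (triexp p q r a b n) (subst ![Y, X r] U) =
      ∑ᶠ m : ℕ, bcoeff U m (m + n - (a + b)) * bcoeff (g ^ m) a b := by
  have term (d : Fin 2 →₀ ℕ) : coeff (triexp p q r a b n) (Y ^ d 0 * X r ^ d 1) =
      if d 1 + (a + b) = n + d 0 then bcoeff (g ^ d 0) a b else 0 := by
    have h1 := coeff_triexp_X_pow_mul hpr hqr (Y ^ d 0 * X r ^ d 1) a b (n + d 0) (d 0)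
    rw [if_pos (Nat.le_add_left _ _), Nat.add_sub_cancel] at h1
    rw [← h1, ← mul_assoc, ← mul_pow, hY, ← subst_pow (hasSubst_pair (by simp) (by simp)),
      mul_comm, coeff_triexp_X_pow_mul hpr hqr, coeff_triexp_subst_X_mul_X_mul hpq hpr hqr]
    by_cases h : d 1 + (a + b) = n + d 0
    · rw [if_pos (by lia), if_pos (by lia), if_pos h]
    · rw [if_neg h]
      split_ifs <;> first | rfl | lia
  rw [coeff_subst_pair hY0 (constantCoeff_X r)]
  simp only [term]
  refine finsum_eq_finsum_of_injOn (s := {d | d 1 + (a + b) = n + d 0})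
    (fun d : Fin 2 →₀ ℕ => d 0) ?_ ?_ ?_ ?_
  · intro c hc d hd hcd
    simp only [Set.mem_ofPred_eq] at hc hd hcd
    rw [← biexp_self c, ← biexp_self d, hcd, show c 1 = d 1 by lia]
  · intro d hd
    by_contra h
    simp only [Set.mem_ofPred_eq] at h
    simp [h] at hd
  · intro m hm
    by_cases h : (m : ℤ) + n - (a + b) < 0
    · simp [bcoeff_of_neg U (Or.inr h)] at hm
    · exact ⟨biexp m (m + n - (a + b)), by simp; lia, by simp⟩
  · intro d hd
    have hd : d 1 + (a + b) = n + d 0 := hd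
    rw [if_pos hd, coeff_eq_bcoeff]
    congr 2
    lia

end ThreeVariables

section BinomialExpansion

variable {R : Type*} [CommRing R]

theorem zbinom_eq_choose (n : ℤ) (k : ℕ) : zbinom n k = Ring.choose n k := by
  rw [zbinom]
  split_ifs with h
  · obtain ⟨n, rfl⟩ := Int.eq_ofNat_of_zero_le h
    rw [Int.toNat_natCast, Ring.choose_natCast]
  · obtain ⟨m, rfl⟩ : ∃ m : ℤ, n = -m := ⟨-n, by simp⟩
    obtain ⟨l, hl⟩ := Int.eq_ofNat_of_zero_le (show 0 ≤ (k : ℤ) - -m - 1 by lia)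
    rw [Ring.choose_neg, show m + (k : ℤ) - 1 = (l : ℤ) by lia, hl, Int.toNat_natCast,
      Ring.choose_natCast, Units.smul_def, smul_eq_mul, Int.negOnePow_def]
    simp

theorem subst_binomialSeries_eq_zpow {σ : Type*} {h : MvPowerSeries σ R}
    (hh : constantCoeff h = 0) {U : (MvPowerSeries σ R)ˣ} (hU : (U : MvPowerSeries σ R) = 1 + h)
    (n : ℤ) : PowerSeries.subst h (PowerSeries.binomialSeries R n) =
      (↑(U ^ n) : MvPowerSeries σ R) := by
  have hs : PowerSeries.HasSubst h := PowerSeries.HasSubst.of_constantCoeff_zero hh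
  have hnat (m : ℕ) : PowerSeries.subst h (PowerSeries.binomialSeries R (m : ℤ)) =
      (↑(U ^ m) : MvPowerSeries σ R) := by
    rw [PowerSeries.binomialSeries_nat, PowerSeries.subst_pow hs, PowerSeries.subst_add hs,
      PowerSeries.subst_X hs, ← PowerSeries.coe_substAlgHom hs, map_one, Units.val_pow_eq_pow_val,
      hU]
  obtain ⟨m, rfl | rfl⟩ := n.eq_nat_or_neg
  · rw [hnat, zpow_natCast]
  · rw [zpow_neg, zpow_natCast]
    apply Units.eq_inv_of_mul_eq_one_right
    rw [← hnat, ← PowerSeries.subst_mul hs, ← PowerSeries.binomialSeries_add, neg_add_cancel,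
      PowerSeries.binomialSeries_zero, ← PowerSeries.coe_substAlgHom hs, map_one]

theorem bcoeff_sub (f g : MvPowerSeries (Fin 2) R) (i j : ℤ) :
    bcoeff (f - g) i j = bcoeff f i j - bcoeff g i j := by
  unfold bcoeff
  split_ifs <;> simp

theorem bcoeff_neg (f : MvPowerSeries (Fin 2) R) (i j : ℤ) :
    bcoeff (-f) i j = -bcoeff f i j := by
  unfold bcoeff
  split_ifs <;> simp

theorem constantCoeff_eq_bcoeff (f : MvPowerSeries (Fin 2) R) :
    constantCoeff f = bcoeff f 0 0 := by
  rw [← coeff_zero_eq_constantCoeff_apply, coeff_eq_bcoeff]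
  simp

theorem bcoeff_zpow_eq_finsum {h : MvPowerSeries (Fin 2) R}
    (hh : constantCoeff h = 0) {U : (MvPowerSeries (Fin 2) R)ˣ}
    (hU : (U : MvPowerSeries (Fin 2) R) = 1 + h) (n a b : ℤ) :
    bcoeff (↑(U ^ n) : MvPowerSeries (Fin 2) R) a b =
      ∑ᶠ k : ℕ, (zbinom n k : R) * pow2 (bcoeff h) k a b := by
  simp only [← bcoeff_pow]
  by_cases hab : a < 0 ∨ b < 0
  · simp [bcoeff_of_neg _ hab]
  obtain ⟨a, rfl⟩ := Int.eq_ofNat_of_zero_le (show 0 ≤ a by lia)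
  obtain ⟨b, rfl⟩ := Int.eq_ofNat_of_zero_le (show 0 ≤ b by lia)
  rw [bcoeff_natCast, ← subst_binomialSeries_eq_zpow hh hU,
    PowerSeries.coeff_subst (PowerSeries.HasSubst.of_constantCoeff_zero hh)]
  refine finsum_congr fun k => ?_
  rw [bcoeff_natCast, PowerSeries.binomialSeries_coeff, zbinom_eq_choose]
  simp

theorem mulS2_comp (e : ℤ × ℤ ≃+ ℤ × ℤ) (f g : ℤ → ℤ → R) :
    mulS2 (fun i j => f (e (i, j)).1 (e (i, j)).2) (fun i j => g (e (i, j)).1 (e (i, j)).2) =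
      fun i j => mulS2 f g (e (i, j)).1 (e (i, j)).2 := by
  funext a b
  rw [mulS2, mulS2]
  refine Eq.trans (finsum_congr fun p => ?_) (finsum_comp_equiv e.toEquiv)
  have h : e (a - p.1, b - p.2) = e (a, b) - e p := by rw [← map_sub]; rfl
  simp [h]

theorem pow2_comp (e : ℤ × ℤ ≃+ ℤ × ℤ) (f : ℤ → ℤ → R) (k : ℕ) :
    pow2 (fun i j => f (e (i, j)).1 (e (i, j)).2) k =
      fun i j => pow2 f k (e (i, j)).1 (e (i, j)).2 := by
  induction k with
  | zero =>
    funext i j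
    have h : (e (i, j)).1 = 0 ∧ (e (i, j)).2 = 0 ↔ i = 0 ∧ j = 0 := by
      rw [← Prod.mk_eq_zero, ← Prod.mk_eq_zero, Prod.mk.eta, EmbeddingLike.map_eq_zero_iff]
    simp only [pow2, oneS2, h]
  | succ k ih => rw [pow2, ih, mulS2_comp, pow2]

/-- The exponents of `f(t, y t)` in terms of those of `f`. -/
def shearFst : ℤ × ℤ ≃+ ℤ × ℤ where
  toFun p := (p.2 - p.1, p.1)
  invFun p := (p.2, p.1 + p.2)
  left_inv p := by simp
  right_inv p := by simp
  map_add' p q := by ext <;> simp; ring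

/-- The exponents of `f(x t, t)` in terms of those of `f`. -/
def shearSnd : ℤ × ℤ ≃+ ℤ × ℤ where
  toFun p := (p.1, p.2 - p.1)
  invFun p := (p.1, p.1 + p.2)
  left_inv p := by simp
  right_inv p := by simp
  map_add' p q := by ext <;> simp; ring

theorem pow2_shearFst (f : ℤ → ℤ → R) (k : ℕ) (i j : ℤ) :
    pow2 (fun i j => f (j - i) i) k i j = pow2 f k (j - i) i :=
  congr_fun₂ (pow2_comp shearFst f k) i j

theorem pow2_shearSnd (f : ℤ → ℤ → R) (k : ℕ) (i j : ℤ) :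
    pow2 (fun i j => f i (j - i)) k i j = pow2 f k i (j - i) :=
  congr_fun₂ (pow2_comp shearSnd f k) i j

theorem izwPow_eq_bcoeff_zpow {G : ℤ → ℤ → R} (h1 : G 1 0 = 1)
    {V : (MvPowerSeries (Fin 2) R)ˣ}
    (hV : ∀ i j, bcoeff (V : MvPowerSeries (Fin 2) R) i j = G (j - i + 1) i) (n a b : ℤ) :
    izwPow G n a b = bcoeff (↑(V ^ n) : MvPowerSeries (Fin 2) R) b (a + b - n) := by
  have hc : constantCoeff ((V : MvPowerSeries (Fin 2) R) - 1) = 0 := by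
    rw [constantCoeff_eq_bcoeff, bcoeff_sub, hV, bcoeff_one]
    simp [oneS2, h1]
  have hb : bcoeff ((V : MvPowerSeries (Fin 2) R) - 1) = fun i j => hzS G (j - i) i := by
    funext i j
    rw [bcoeff_sub, hV, bcoeff_one, hzS]
    congr 1
    exact if_congr (by lia) rfl rfl
  rw [izwPow, bcoeff_zpow_eq_finsum hc (by ring), hb]
  refine finsum_congr fun k => ?_
  rw [pow2_shearFst]
  congr 2
  ring

theorem neg_zpow_eq_msign_smul {A : Type*} [CommRing A] (U : Aˣ) (n : ℤ) :
    (↑((-U) ^ n) : A) = msign n * ↑(U ^ n) := by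
  rw [msign]
  split_ifs with h
  · simp [h.neg_zpow]
  · simp [(Int.not_even_iff_odd.1 h).neg_zpow]

theorem iwzPowNeg_eq_bcoeff_zpow {G : ℤ → ℤ → R} (h1 : G 0 1 = -1)
    {V : (MvPowerSeries (Fin 2) R)ˣ}
    (hV : ∀ i j, bcoeff (V : MvPowerSeries (Fin 2) R) i j = G i (j - i + 1)) (n a b : ℤ) :
    iwzPowNeg G n a b = bcoeff (↑(V ^ n) : MvPowerSeries (Fin 2) R) a (a + b - n) := by
  have hc : constantCoeff (-(V : MvPowerSeries (Fin 2) R) - 1) = 0 := by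
    rw [constantCoeff_eq_bcoeff, bcoeff_sub, bcoeff_neg, hV, bcoeff_one]
    simp [oneS2, h1]
  have hb : bcoeff (-(V : MvPowerSeries (Fin 2) R) - 1) = fun i j => hwNegS G i (j - i) := by
    funext i j
    rw [bcoeff_sub, bcoeff_neg, hV, bcoeff_one, hwNegS]
    congr 1
    exact if_congr (by lia) rfl rfl
  have hsign : (↑(V ^ n) : MvPowerSeries (Fin 2) R) = msign n * ↑((-V) ^ n) := by
    rw [← neg_zpow_eq_msign_smul, neg_neg]
  have hmul (f : MvPowerSeries (Fin 2) R) (i j : ℤ) :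
      bcoeff ((msign n : MvPowerSeries (Fin 2) R) * f) i j = msign n * bcoeff f i j := by
    rw [msign]
    split_ifs <;> simp [bcoeff_neg]
  rw [iwzPowNeg, hsign, hmul, bcoeff_zpow_eq_finsum hc (by simp), hb]
  congr 1
  refine finsum_congr fun k => ?_
  rw [pow2_shearSnd]
  congr 2
  ring

end BinomialExpansion

section Shear

variable {R : Type*} [CommRing R]

theorem coeff_biexp_X_one_pow_mul (f : MvPowerSeries (Fin 2) R) (i j m : ℕ) :
    coeff (biexp i j) (X 1 ^ m * f) = bcoeff f i ((j : ℤ) - m) := by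
  rw [X_pow_eq, coeff_monomial_mul, one_mul]
  have hle : Finsupp.single 1 m ≤ biexp i j ↔ m ≤ j := by
    rw [Finsupp.single_le_iff, biexp_one]
  simp only [hle]
  split_ifs with h
  · rw [← Nat.cast_sub h, bcoeff_natCast]
    congr 2
    rw [tsub_eq_iff_eq_add_of_le (hle.2 h), biexp, biexp, add_assoc, ← Finsupp.single_add,
      Nat.sub_add_cancel h]
  · rw [bcoeff_of_neg _ (by lia)]

variable {G V : MvPowerSeries (Fin 2) R}

theorem X_one_mul_eq_subst_of_shearFst (hG : constantCoeff G = 0)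
    (hV : ∀ i j, bcoeff V i j = bcoeff G (j - i + 1) i) :
    X 1 * V = subst ![X 1, X 0 * X 1] G := by
  ext d
  rw [← biexp_self d, coeff_subst_X_one_X_mul_X]
  have h := coeff_biexp_X_one_pow_mul V (d 0) (d 1) 1
  rw [pow_one] at h
  rw [h]
  by_cases hd : d 1 = 0
  · rw [bcoeff_of_neg _ (by simp [hd]), hd]
    by_cases hd' : d 0 = 0
    · simpa [hd', constantCoeff_eq_bcoeff] using hG.symm
    · rw [bcoeff_of_neg _ (by lia)]
  · rw [hV]
    congr 1
    push_cast
    ring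

theorem X_one_mul_eq_subst_of_shearSnd (hG : constantCoeff G = 0)
    (hV : ∀ i j, bcoeff V i j = bcoeff G i (j - i + 1)) :
    X 1 * V = subst ![X 0 * X 1, X 1] G := by
  ext d
  rw [← biexp_self d, coeff_subst_X_mul_X_X_one]
  have h := coeff_biexp_X_one_pow_mul V (d 0) (d 1) 1
  rw [pow_one] at h
  rw [h]
  by_cases hd : d 1 = 0
  · rw [bcoeff_of_neg _ (by simp [hd]), hd]
    by_cases hd' : d 0 = 0
    · simpa [hd', constantCoeff_eq_bcoeff] using hG.symm
    · rw [bcoeff_of_neg _ (by lia)]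
  · rw [hV]
    congr 1
    push_cast
    ring

theorem bcoeff_pow_of_X_one_mul_eq_subst_fst (hV : X 1 * V = subst ![X 1, X 0 * X 1] G)
    (m : ℕ) (a b : ℤ) : bcoeff (V ^ m) b (a + b - m) = bcoeff (G ^ m) a b := by
  by_cases hb : b < 0
  · rw [bcoeff_of_neg _ (by lia), bcoeff_of_neg _ (by lia)]
  by_cases hab : a + b < 0
  · rw [bcoeff_of_neg _ (by lia), bcoeff_of_neg _ (by lia)]
  obtain ⟨i, rfl⟩ := Int.eq_ofNat_of_zero_le (show 0 ≤ b by lia)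
  obtain ⟨j, hj⟩ := Int.eq_ofNat_of_zero_le (show 0 ≤ a + i by lia)
  obtain rfl : a = j - i := by lia
  rw [← coeff_subst_X_one_X_mul_X, subst_pow (hasSubst_pair (by simp) (by simp)), ← hV, mul_pow,
    coeff_biexp_X_one_pow_mul, sub_add_cancel]

theorem bcoeff_pow_of_X_one_mul_eq_subst_snd (hV : X 1 * V = subst ![X 0 * X 1, X 1] G)
    (m : ℕ) (a b : ℤ) : bcoeff (V ^ m) a (a + b - m) = bcoeff (G ^ m) a b := by
  by_cases ha : a < 0
  · rw [bcoeff_of_neg _ (by lia), bcoeff_of_neg _ (by lia)]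
  by_cases hab : a + b < 0
  · rw [bcoeff_of_neg _ (by lia), bcoeff_of_neg _ (by lia)]
  obtain ⟨i, rfl⟩ := Int.eq_ofNat_of_zero_le (show 0 ≤ a by lia)
  obtain ⟨j, hj⟩ := Int.eq_ofNat_of_zero_le (show 0 ≤ (i : ℤ) + b by lia)
  obtain rfl : b = j - i := by lia
  rw [← coeff_subst_X_mul_X_X_one, subst_pow (hasSubst_pair (by simp) (by simp)), ← hV, mul_pow,
    coeff_biexp_X_one_pow_mul, add_sub_cancel]

end Shear

section Triexp

variable {R : Type*} [CommRing R] {σ : Type*}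

theorem coeff_triexp_X_pow_mul_subst {p q r : σ} (hpq : p ≠ q) (hpr : p ≠ r)
    (hqr : q ≠ r) (f : MvPowerSeries (Fin 2) R) (a b n j : ℕ) :
    coeff (triexp p q r a b n) (X p ^ j * subst ![X q, X r] f : MvPowerSeries σ R) =
      if j = a then bcoeff f b n else 0 := by
  rw [coeff_triexp_X_pow_mul_fst hpq hpr, coeff_triexp_subst_X_X hpq hpr hqr]
  split_ifs <;> first | rfl | lia

theorem triexp_apply_self {p q r : Fin 3} (hpq : p ≠ q) (hpr : p ≠ r) (hqr : q ≠ r)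
    (e : Fin 3 →₀ ℕ) : triexp p q r (e p) (e q) (e r) = e := by
  ext k
  obtain rfl | rfl | rfl : k = p ∨ k = q ∨ k = r := by lia
  · exact triexp_fst hpq hpr _ _ _
  · exact triexp_snd hpq hqr _ _ _
  · exact triexp_trd hpr hqr _ _ _

end Triexp

namespace FormalGroupLaw

variable {R : Type*} [CommRing R] (𝓕 : FormalGroupLaw R)

/-- The power series `F(z, w)`. -/
def series : MvPowerSeries (Fin 2) R := ofCoeff2 𝓕.F

/-- The power series `ι(z)`. -/
def invSeries : PowerSeries R := PowerSeries.mk fun n => 𝓕.inv n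

theorem bcoeff_series : bcoeff 𝓕.series = 𝓕.F := bcoeff_ofCoeff2 𝓕.F_supp

theorem constantCoeff_series : constantCoeff 𝓕.series = 0 := by
  rw [constantCoeff_eq_bcoeff, bcoeff_series, F_modw, if_neg (by simp)]

theorem ucoeff_invSeries_pow (m : ℕ) : ucoeff (𝓕.invSeries ^ m) = pow1 𝓕.inv m := by
  rw [ucoeff_pow, invSeries, ucoeff_mk fun i hi => 𝓕.inv_supp i (by lia)]

theorem series_assoc :
    subst ![subst ![X 0, X 1] 𝓕.series, X 2] 𝓕.series =
      subst ![X 0, subst ![X 1, X 2] 𝓕.series] 𝓕.series (S := R) (τ := Fin 3) := by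
  have hc (p q : Fin 3) :
      constantCoeff (subst ![X p, X q] 𝓕.series : MvPowerSeries (Fin 3) R) = 0 :=
    constantCoeff_subst_eq_zero (hasSubst_pair (constantCoeff_X p) (constantCoeff_X q))
      (by simp [Fin.forall_fin_two]) 𝓕.constantCoeff_series
  ext e
  rw [coeff_subst_pair (hc 0 1) (constantCoeff_X 2),
    coeff_subst_pair (constantCoeff_X 0) (hc 1 2)]
  have left (d : Fin 2 →₀ ℕ) : coeff e (subst ![X 0, X 1] 𝓕.series ^ d 0 * X 2 ^ d 1) =
      if d 1 = e 2 then pow2 𝓕.F (d 0) (e 0) (e 1) else 0 := by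
    rw [mul_comm, ← subst_pow (hasSubst_pair (constantCoeff_X 0) (constantCoeff_X 1)),
      ← bcoeff_series, ← bcoeff_pow,
      ← coeff_triexp_X_pow_mul_subst (p := (2 : Fin 3)) (q := 0) (r := 1) (by decide)
        (by decide) (by decide),
      triexp_apply_self (by decide) (by decide) (by decide)]
  have right (d : Fin 2 →₀ ℕ) : coeff e (X 0 ^ d 0 * subst ![X 1, X 2] 𝓕.series ^ d 1) =
      if d 0 = e 0 then pow2 𝓕.F (d 1) (e 1) (e 2) else 0 := by
    rw [← subst_pow (hasSubst_pair (constantCoeff_X 1) (constantCoeff_X 2)),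
      ← bcoeff_series, ← bcoeff_pow,
      ← coeff_triexp_X_pow_mul_subst (p := (0 : Fin 3)) (q := 1) (r := 2) (by decide)
        (by decide) (by decide),
      triexp_apply_self (by decide) (by decide) (by decide)]
  simp only [left, right, coeff_eq_bcoeff, bcoeff_series]
  refine Eq.trans ?_ ((𝓕.F_assoc (e 0) (e 1) (e 2)).trans ?_)
  · refine finsum_eq_finsum_of_injOn (s := {d | d 1 = e 2}) (fun d => d 0) ?_ ?_ ?_ ?_
    · intro c hc d hd hcd
      simp only [Set.mem_ofPred_eq] at hc hd hcd
      rw [← biexp_self c, ← biexp_self d, hcd, hc, hd]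
    · intro d hd
      by_contra h
      simp only [Set.mem_ofPred_eq] at h
      simp [h] at hd
    · exact fun m _ => ⟨biexp m (e 2), by simp, by simp⟩
    · intro d hd
      have hd : d 1 = e 2 := hd
      rw [if_pos hd, hd]
  · symm
    refine finsum_eq_finsum_of_injOn (s := {d | d 0 = e 0}) (fun d => d 1) ?_ ?_ ?_ ?_
    · intro c hc d hd hcd
      simp only [Set.mem_ofPred_eq] at hc hd hcd
      rw [← biexp_self c, ← biexp_self d, hcd, hc, hd]
    · intro d hd
      by_contra h
      simp only [Set.mem_ofPred_eq] at h
      simp [h] at hd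
    · exact fun m _ => ⟨biexp (e 0) m, by simp, by simp⟩
    · intro d hd
      have hd : d 0 = e 0 := hd
      rw [if_pos hd, hd]

/-- The formal group law as a Mathlib formal group. -/
def toFormalGroup : FormalGroup R where
  toPowerSeries := 𝓕.series
  zero_constantCoeff := 𝓕.constantCoeff_series
  lin_coeff_X := by
    rw [coeff_eq_bcoeff, bcoeff_series]
    simp [F_modw]
  lin_coeff_Y := by
    rw [coeff_eq_bcoeff, bcoeff_series, F_comm]
    simp [F_modw]
  assoc := 𝓕.series_assoc

instance : 𝓕.toFormalGroup.IsComm where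
  comm := by
    ext d
    change coeff d 𝓕.series = coeff d (subst ![X 1, X 0] 𝓕.series)
    have h : coeff d (subst ![X 1, X 0] 𝓕.series) = coeff (biexp (d 1) (d 0)) 𝓕.series := by
      apply coeff_subst_monomial_of_forall (by simp) (by simp)
      intro c
      simp only [Finsupp.ext_iff, Fin.forall_fin_two]
      simp
      lia
    rw [h, coeff_eq_bcoeff, coeff_eq_bcoeff, bcoeff_series, F_comm]
    simp

theorem constantCoeff_invSeries : PowerSeries.constantCoeff 𝓕.invSeries = 0 := by
  rw [← PowerSeries.coeff_zero_eq_constantCoeff_apply, invSeries, PowerSeries.coeff_mk]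
  exact 𝓕.inv_supp _ (by simp)

theorem constantCoeff_powerSeries_X :
    MvPowerSeries.constantCoeff (PowerSeries.X : PowerSeries R) = 0 :=
  PowerSeries.constantCoeff_X

theorem subst_X_invSeries :
    subst ![(PowerSeries.X : PowerSeries R), 𝓕.invSeries] 𝓕.series = (0 : PowerSeries R) := by
  ext n
  rw [PowerSeries.coeff, coeff_subst_pair constantCoeff_powerSeries_X 𝓕.constantCoeff_invSeries]
  have term (d : Fin 2 →₀ ℕ) : coeff (Finsupp.single () n)
      ((PowerSeries.X : PowerSeries R) ^ d 0 * 𝓕.invSeries ^ d 1) =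
        pow1 𝓕.inv (d 1) (n - d 0) := by
    change PowerSeries.coeff n _ = _
    rw [PowerSeries.coeff_X_pow_mul', ← ucoeff_invSeries_pow]
    split_ifs with h
    · rw [← Nat.cast_sub h, ucoeff_natCast]
    · rw [ucoeff_of_neg _ (by lia)]
  simp only [term, coeff_eq_bcoeff, bcoeff_series]
  rw [map_zero, ← 𝓕.inv_eq n]
  refine finsum_eq_finsum_of_injOn (s := Set.univ) (fun d => ((d 0 : ℤ), d 1)) ?_ ?_ ?_ ?_
  · intro c _ d _ hcd
    simp only [Prod.mk.injEq, Nat.cast_inj] at hcd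
    rw [← biexp_self c, ← biexp_self d, hcd.1, hcd.2]
  · exact fun _ _ => trivial
  · rintro ⟨i, m⟩ h
    by_cases hi : i < 0
    · simp [𝓕.F_supp i m (Or.inl hi)] at h
    · exact ⟨biexp i.toNat m, trivial, by simp; lia⟩
  · exact fun _ _ => rfl

section Points

variable {σ : Type*}

theorem subst_subst_invSeries {x : MvPowerSeries σ R} (hx : PowerSeries.HasSubst x) :
    subst ![x, PowerSeries.subst x 𝓕.invSeries] 𝓕.series = 0 := by
  have h := congrArg (PowerSeries.subst x) 𝓕.subst_X_invSeries
  rw [← PowerSeries.coe_substAlgHom hx, map_zero, PowerSeries.coe_substAlgHom, PowerSeries.subst,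
    subst_subst_pair hx.const constantCoeff_powerSeries_X 𝓕.constantCoeff_invSeries] at h
  rw [← h]
  congr
  exact (PowerSeries.subst_X hx).symm

instance : Neg (𝓕.toFormalGroup.Point σ) where
  neg x := ⟨PowerSeries.subst x.val 𝓕.invSeries,
    IsNilpotent_subst x.prop.const (𝓕.constantCoeff_invSeries ▸ IsNilpotent.zero)⟩

instance : AddCommGroup (𝓕.toFormalGroup.Point σ) where
  __ := (inferInstance : AddCommMonoid (𝓕.toFormalGroup.Point σ))
  zsmul := zsmulRec
  neg_add_cancel x := by
    rw [add_comm]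
    exact Subtype.ext (𝓕.subst_subst_invSeries x.prop)

/-- The power series `F(z, ι(w))`. -/
def subSeries : MvPowerSeries (Fin 2) R :=
  subst ![X 0, PowerSeries.subst (X 1 : MvPowerSeries (Fin 2) R) 𝓕.invSeries] 𝓕.series

theorem constantCoeff_subst_X_invSeries :
    constantCoeff (PowerSeries.subst (X 1 : MvPowerSeries (Fin 2) R) 𝓕.invSeries) = 0 :=
  constantCoeff_subst_eq_zero (PowerSeries.HasSubst.X (1 : Fin 2)).const (by simp)
    𝓕.constantCoeff_invSeries

theorem subst_subSeries {a b : MvPowerSeries σ R} (ha : constantCoeff a = 0)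
    (hb : constantCoeff b = 0) : subst ![a, b] 𝓕.subSeries =
      subst ![a, PowerSeries.subst b 𝓕.invSeries] 𝓕.series := by
  rw [subSeries, subst_subst_pair (hasSubst_pair ha hb) (constantCoeff_X _)
    𝓕.constantCoeff_subst_X_invSeries, subst_pair_X_zero ha hb, PowerSeries.subst,
    subst_comp_subst_apply (PowerSeries.HasSubst.X (1 : Fin 2)).const (hasSubst_pair ha hb),
    subst_pair_X_one ha hb]
  rfl

theorem constantCoeff_subSeries : constantCoeff 𝓕.subSeries = 0 :=
  constantCoeff_subst_eq_zero
    (hasSubst_pair (constantCoeff_X _) 𝓕.constantCoeff_subst_X_invSeries)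
    (by simp [Fin.forall_fin_two, constantCoeff_subst_X_invSeries]) 𝓕.constantCoeff_series

theorem constantCoeff_subst_subSeries {a b : MvPowerSeries σ R} (ha : constantCoeff a = 0)
    (hb : constantCoeff b = 0) : constantCoeff (subst ![a, b] 𝓕.subSeries) = 0 :=
  constantCoeff_subst_eq_zero (hasSubst_pair ha hb) (by simp [Fin.forall_fin_two, ha, hb])
    𝓕.constantCoeff_subSeries

/-- The identity `a - (b - c) = c - (b - a)` in the group of points. -/
theorem subst_subSeries_subst_subSeries {a b c : MvPowerSeries σ R} (ha : constantCoeff a = 0)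
    (hb : constantCoeff b = 0) (hc : constantCoeff c = 0) :
    subst ![a, subst ![b, c] 𝓕.subSeries] 𝓕.subSeries =
      subst ![c, subst ![b, a] 𝓕.subSeries] 𝓕.subSeries := by
  let point {x : MvPowerSeries σ R} (hx : constantCoeff x = 0) : 𝓕.toFormalGroup.Point σ :=
    ⟨x, PowerSeries.HasSubst.of_constantCoeff_zero hx⟩
  have key (x y z : 𝓕.toFormalGroup.Point σ) : x + -(y + -z) = z + -(y + -x) := by abel
  rw [𝓕.subst_subSeries ha (𝓕.constantCoeff_subst_subSeries hb hc), 𝓕.subst_subSeries hb hc,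
    𝓕.subst_subSeries hc (𝓕.constantCoeff_subst_subSeries hb ha), 𝓕.subst_subSeries hb ha]
  exact congrArg Subtype.val (key (point ha) (point hb) (point hc))

end Points

theorem coeff_biexp_X_zero_pow_mul_subst_X_one (g : PowerSeries R) (i j k : ℕ) :
    coeff (biexp i j) (X 0 ^ k * PowerSeries.subst (X 1 : MvPowerSeries (Fin 2) R) g) =
      if k = i then PowerSeries.coeff j g else 0 := by
  rw [X_pow_eq, coeff_monomial_mul, one_mul]
  have hle : Finsupp.single 0 k ≤ biexp i j ↔ k ≤ i := by
    rw [Finsupp.single_le_iff, biexp_zero]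
  simp only [hle]
  by_cases h : k ≤ i
  · have hsub : biexp i j - Finsupp.single 0 k = biexp (i - k) j := by
      ext l; fin_cases l <;> simp
    rw [if_pos h, hsub, PowerSeries.coeff_subst_single]
    have : biexp (i - k) j = Finsupp.single 1 j ↔ k = i := by
      simp [Finsupp.ext_iff, Fin.forall_fin_two]
      lia
    simp only [biexp_one, this]
  · rw [if_neg h, if_neg (by lia)]

theorem bcoeff_subSeries : bcoeff 𝓕.subSeries = 𝓕.Fzi := by
  funext i j
  by_cases h : i < 0 ∨ j < 0
  · rw [bcoeff_of_neg _ h, Fzi, finsum_eq_zero_of_forall_eq_zero]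
    intro m
    obtain h | h := h
    · rw [𝓕.F_supp _ _ (Or.inl h), zero_mul]
    · rw [← ucoeff_invSeries_pow, ucoeff_of_neg _ h, mul_zero]
  obtain ⟨i, rfl⟩ := Int.eq_ofNat_of_zero_le (show 0 ≤ i by lia)
  obtain ⟨j, rfl⟩ := Int.eq_ofNat_of_zero_le (show 0 ≤ j by lia)
  rw [bcoeff_natCast, subSeries,
    coeff_subst_pair (constantCoeff_X _) 𝓕.constantCoeff_subst_X_invSeries, Fzi]
  simp only [← PowerSeries.subst_pow (PowerSeries.HasSubst.X (1 : Fin 2)),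
    coeff_biexp_X_zero_pow_mul_subst_X_one, ← ucoeff_invSeries_pow, ucoeff_natCast]
  simp only [coeff_eq_bcoeff, bcoeff_series]
  refine finsum_eq_finsum_of_injOn (s := {d | d 0 = i}) (fun d => d 1) ?_ ?_ ?_ ?_
  · intro c hc d hd hcd
    simp only [Set.mem_ofPred_eq] at hc hd hcd
    rw [← biexp_self c, ← biexp_self d, hcd, hc, hd]
  · intro d hd
    by_contra h
    simp only [Set.mem_ofPred_eq] at h
    simp [h] at hd
  · exact fun m _ => ⟨biexp i m, by simp, by simp⟩
  · intro d hd
    have hd : d 0 = i := hd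
    rw [if_pos hd, hd]

theorem Fzi_one_zero : 𝓕.Fzi 1 0 = 1 := by
  have h : ∀ m : ℕ, m ≠ 0 → 𝓕.F 1 m * pow1 𝓕.inv m 0 = 0 := by
    intro m hm
    rw [← ucoeff_invSeries_pow, ← Nat.cast_zero, ucoeff_natCast,
      PowerSeries.coeff_zero_eq_constantCoeff_apply, map_pow, constantCoeff_invSeries, zero_pow hm,
      mul_zero]
  rw [Fzi, finsum_eq_single _ 0 h]
  simp [F_modw, pow1, oneS]

theorem Fzi_zero_one : 𝓕.Fzi 0 1 = -1 := by
  have h : ∀ m : ℕ, m ≠ 1 → 𝓕.F 0 m * pow1 𝓕.inv m 1 = 0 := by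
    intro m hm
    rw [F_comm, F_modw, if_neg (by exact_mod_cast hm), zero_mul]
  rw [Fzi, finsum_eq_single _ 1 h, ← ucoeff_invSeries_pow, pow_one, F_comm, F_modw]
  have h1 : ucoeff 𝓕.invSeries 1 = -1 := by
    rw [← Nat.cast_one, ucoeff_natCast, invSeries, PowerSeries.coeff_mk, Nat.cast_one, 𝓕.inv_one]
  simp [h1]

end FormalGroupLaw

section Units

variable {R : Type*} [CommRing R]

theorem MvPowerSeries.X_mul_cancel {σ : Type*} {p : σ} {f g : MvPowerSeries σ R}
    (h : X p * f = X p * g) : f = g := by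
  ext d
  have hd := congrArg (coeff (Finsupp.single p 1 + d)) h
  simpa only [X, coeff_add_monomial_mul, one_mul] using hd

theorem exists_unit_bcoeff_eq {f : ℤ → ℤ → R} (hf : ∀ i j, i < 0 ∨ j < 0 → f i j = 0)
    (h0 : IsUnit (f 0 0)) :
    ∃ U : (MvPowerSeries (Fin 2) R)ˣ, bcoeff (U : MvPowerSeries (Fin 2) R) = f := by
  have hu : IsUnit (ofCoeff2 f) := by
    rwa [isUnit_iff_constantCoeff, constantCoeff_eq_bcoeff, bcoeff_ofCoeff2 hf]
  exact ⟨hu.unit, bcoeff_ofCoeff2 hf⟩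

end Units

namespace FormalGroupLaw

variable {R : Type*} [CommRing R] (𝓕 : FormalGroupLaw R)

theorem Fzi_of_neg {i j : ℤ} (h : i < 0 ∨ j < 0) : 𝓕.Fzi i j = 0 := by
  rw [← bcoeff_subSeries, bcoeff_of_neg _ h]

theorem Fzi_zero_zero : 𝓕.Fzi 0 0 = 0 := by
  rw [← bcoeff_subSeries, ← constantCoeff_eq_bcoeff, constantCoeff_subSeries]

theorem Fzi_of_add_nonpos {i j : ℤ} (h : i + j ≤ 0) : 𝓕.Fzi i j = 0 := by
  by_cases hn : i < 0 ∨ j < 0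
  · exact 𝓕.Fzi_of_neg hn
  · obtain ⟨rfl, rfl⟩ : i = 0 ∧ j = 0 := by lia
    exact 𝓕.Fzi_zero_zero

/-- The unit `F(t, ι(y t)) / t`. -/
theorem exists_unit_shearFst : ∃ V : (MvPowerSeries (Fin 2) R)ˣ,
    ∀ i j, bcoeff (V : MvPowerSeries (Fin 2) R) i j = 𝓕.Fzi (j - i + 1) i := by
  obtain ⟨V, hV⟩ := exists_unit_bcoeff_eq (f := fun i j => 𝓕.Fzi (j - i + 1) i)
    (by
      rintro i j (h | h)
      · exact 𝓕.Fzi_of_neg (Or.inr h)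
      · exact 𝓕.Fzi_of_add_nonpos (by lia))
    (by simp [Fzi_one_zero])
  exact ⟨V, fun i j => congrFun₂ hV i j⟩

/-- The unit `F(x t, ι(t)) / t`. -/
theorem exists_unit_shearSnd : ∃ W : (MvPowerSeries (Fin 2) R)ˣ,
    ∀ i j, bcoeff (W : MvPowerSeries (Fin 2) R) i j = 𝓕.Fzi i (j - i + 1) := by
  obtain ⟨W, hW⟩ := exists_unit_bcoeff_eq (f := fun i j => 𝓕.Fzi i (j - i + 1))
    (by
      rintro i j (h | h)
      · exact 𝓕.Fzi_of_neg (Or.inl h)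
      · exact 𝓕.Fzi_of_add_nonpos (by lia))
    (by simp [Fzi_zero_one])
  exact ⟨W, fun i j => congrFun₂ hW i j⟩

variable {𝓕} {V W : (MvPowerSeries (Fin 2) R)ˣ}

theorem subst_mul_subst_inv_fst {σ : Type*}
    (hV : X 1 * (V : MvPowerSeries (Fin 2) R) = subst ![X 1, X 0 * X 1] 𝓕.subSeries)
    {y t : MvPowerSeries σ R} (hy : constantCoeff y = 0) (ht : constantCoeff t = 0) :
    subst ![t, y * t] 𝓕.subSeries * subst ![y, t] (↑V⁻¹ : MvPowerSeries (Fin 2) R) = t := by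
  have h : subst ![y, t] (X 1 * (V : MvPowerSeries (Fin 2) R) * (↑V⁻¹ : MvPowerSeries (Fin 2) R)) =
      subst ![y, t] (X 1 : MvPowerSeries (Fin 2) R) := by
    rw [Units.mul_inv_cancel_right]
  have hs := hasSubst_pair hy ht
  rwa [hV, subst_mul hs, subst_subst_pair hs (by simp) (by simp), subst_mul hs,
    subst_pair_X_zero hy ht, subst_pair_X_one hy ht] at h

theorem subst_mul_subst_inv_snd {σ : Type*}
    (hW : X 1 * (W : MvPowerSeries (Fin 2) R) = subst ![X 0 * X 1, X 1] 𝓕.subSeries)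
    {x t : MvPowerSeries σ R} (hx : constantCoeff x = 0) (ht : constantCoeff t = 0) :
    subst ![x * t, t] 𝓕.subSeries *
      subst ![x, t] (X 0 * (↑W⁻¹ : MvPowerSeries (Fin 2) R)) = x * t := by
  have h : subst ![x, t]
      (X 1 * (W : MvPowerSeries (Fin 2) R) * (X 0 * (↑W⁻¹ : MvPowerSeries (Fin 2) R))) =
      subst ![x, t] (X 0 * X 1 : MvPowerSeries (Fin 2) R) := by
    congr 1
    linear_combination (X 0 * X 1) * W.mul_inv
  have hs := hasSubst_pair hx ht
  rw [subst_mul hs, subst_pair_X_zero hx ht]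
  rwa [hW, subst_mul hs, subst_subst_pair hs (by simp) (by simp), subst_mul hs, subst_mul hs,
    subst_pair_X_zero hx ht, subst_pair_X_one hx ht] at h

/-- The substitution `x = X_p / P`, `t = X_r P` in `F(x t, ι(t)) * (x t F(x t, ι(t))⁻¹) = x t`. -/
theorem subst_mul_subst_div_mul {σ : Type*} {p q r : σ}
    (hW : X 1 * (W : MvPowerSeries (Fin 2) R) = subst ![X 0 * X 1, X 1] 𝓕.subSeries)
    (Q : (MvPowerSeries (Fin 2) R)ˣ) {P P' : MvPowerSeries σ R}
    (hP : P = subst ![X q, X r] (Q : MvPowerSeries (Fin 2) R))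
    (hP' : P' = subst ![X q, X r] (↑Q⁻¹ : MvPowerSeries (Fin 2) R)) :
    subst ![X p * X r, X r * P] 𝓕.subSeries *
      subst ![X p * P', X r * P] (X 0 * (↑W⁻¹ : MvPowerSeries (Fin 2) R)) = X p * X r := by
  have hs : HasSubst (![X q, X r] : Fin 2 → MvPowerSeries σ R) :=
    hasSubst_pair (constantCoeff_X q) (constantCoeff_X r)
  have hPP : P * P' = 1 := by
    rw [hP, hP', ← subst_mul hs, Units.mul_inv, subst_one' hs]
  have h := subst_mul_subst_inv_snd hW (x := X p * P') (t := X r * P) (by simp) (by simp)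
  rwa [show X p * P' * (X r * P) = X p * X r by linear_combination (X p * X r) * hPP] at h

theorem X_mul_subst_fst {σ : Type*}
    (hV : X 1 * (V : MvPowerSeries (Fin 2) R) = subst ![X 1, X 0 * X 1] 𝓕.subSeries) (q r : σ) :
    X r * (subst ![X q, X r] (V : MvPowerSeries (Fin 2) R) : MvPowerSeries σ R) =
      subst ![X r, X q * X r] 𝓕.subSeries := by
  have hq := constantCoeff_X (R := R) q
  have hr := constantCoeff_X (R := R) r
  have hs := hasSubst_pair hq hr
  have h := congrArg (subst (![X q, X r] : Fin 2 → MvPowerSeries σ R)) hV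
  rwa [subst_subst_pair hs (by simp) (by simp), subst_mul hs, subst_mul hs,
    subst_pair_X_zero hq hr, subst_pair_X_one hq hr] at h

theorem X_mul_subst_snd {σ : Type*}
    (hW : X 1 * (W : MvPowerSeries (Fin 2) R) = subst ![X 0 * X 1, X 1] 𝓕.subSeries) (q r : σ) :
    X r * (subst ![X q, X r] (W : MvPowerSeries (Fin 2) R) : MvPowerSeries σ R) =
      subst ![X q * X r, X r] 𝓕.subSeries := by
  have hq := constantCoeff_X (R := R) q
  have hr := constantCoeff_X (R := R) r
  have hs := hasSubst_pair hq hr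
  have h := congrArg (subst (![X q, X r] : Fin 2 → MvPowerSeries σ R)) hW
  rwa [subst_subst_pair hs (by simp) (by simp), subst_mul hs, subst_mul hs,
    subst_pair_X_zero hq hr, subst_pair_X_one hq hr] at h

theorem finsum_bcoeff_inv_mul_symm
    (hV : X 1 * (V : MvPowerSeries (Fin 2) R) = subst ![X 1, X 0 * X 1] 𝓕.subSeries)
    (hW : X 1 * (W : MvPowerSeries (Fin 2) R) = subst ![X 0 * X 1, X 1] 𝓕.subSeries)
    (a b n : ℤ) :
    ∑ᶠ m : ℤ, bcoeff (↑W⁻¹ : MvPowerSeries (Fin 2) R) a (a + m + 1) *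
        bcoeff (↑(V ^ m) : MvPowerSeries (Fin 2) R) b (n - a - 1 - m) =
      ∑ᶠ m : ℤ, bcoeff (↑W⁻¹ : MvPowerSeries (Fin 2) R) b (b + m + 1) *
        bcoeff (↑(V ^ m) : MvPowerSeries (Fin 2) R) a (n - b - 1 - m) := by
  have zero {a b : ℤ} (h : a < 0 ∨ b < 0 ∨ n < 0) :
      ∑ᶠ m : ℤ, bcoeff (↑W⁻¹ : MvPowerSeries (Fin 2) R) a (a + m + 1) *
        bcoeff (↑(V ^ m) : MvPowerSeries (Fin 2) R) b (n - a - 1 - m) = 0 := by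
    refine finsum_eq_zero_of_forall_eq_zero fun m => ?_
    by_cases h' : a < 0 ∨ a + m + 1 < 0
    · rw [bcoeff_of_neg _ h', zero_mul]
    · rw [bcoeff_of_neg _ (by lia : b < 0 ∨ n - a - 1 - m < 0), mul_zero]
  by_cases h : a < 0 ∨ b < 0 ∨ n < 0
  · rw [zero h, zero (by lia)]
  lift a to ℕ using by lia
  lift b to ℕ using by lia
  lift n to ℕ using by lia
  set P : Fin 3 → MvPowerSeries (Fin 3) R := fun q =>
    subst ![X q, X 2] (V : MvPowerSeries (Fin 2) R)
  set P' : Fin 3 → MvPowerSeries (Fin 3) R := fun q =>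
    subst ![X q, X 2] (↑V⁻¹ : MvPowerSeries (Fin 2) R)
  set D : Fin 3 → Fin 3 → MvPowerSeries (Fin 3) R := fun p q =>
    subst ![X p * P' q, X 2 * P q] (X 0 * (↑W⁻¹ : MvPowerSeries (Fin 2) R))
  have coeff_D (p q : Fin 3) (hpq : p ≠ q) (hp : p ≠ 2) (hq : q ≠ 2) (a b : ℕ) :
      coeff (triexp p q 2 (a + 1) (b + 1) n) (X q * D p q) =
        ∑ᶠ m : ℤ, bcoeff (↑W⁻¹ : MvPowerSeries (Fin 2) R) a (a + m + 1) *
          bcoeff (↑(V ^ m) : MvPowerSeries (Fin 2) R) b (n - a - 1 - m) := by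
    have h := coeff_triexp_X_pow_mul_fst hpq.symm hq (D p q) (b + 1) (a + 1) n 1
    rw [pow_one, if_pos (by lia), Nat.add_sub_cancel] at h
    rw [← coeff_triexp_subst_div_mul hpq hp hq _ V rfl rfl, triexp_swap, h, triexp_swap]
  have mul_D (p q : Fin 3) :
      subst ![X p * X 2, subst ![X 2, X q * X 2] 𝓕.subSeries] 𝓕.subSeries * D p q = X p * X 2 := by
    rw [← X_mul_subst_fst hV, subst_mul_subst_div_mul hW V rfl rfl]
  have symm := 𝓕.subst_subSeries_subst_subSeries (a := X 0 * X 2) (b := X 2) (c := X 1 * X 2)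
    (σ := Fin 3) (by simp) (by simp) (by simp)
  have h01 := mul_D 0 1
  have h10 := mul_D 1 0
  rw [symm] at h01
  rw [← coeff_D 0 1 (by decide) (by decide) (by decide) a b,
    ← coeff_D 1 0 (by decide) (by decide) (by decide) b a, triexp_swap 1 0]
  congr 1
  apply X_mul_cancel (p := 2)
  linear_combination D 1 0 * h01 - D 0 1 * h10

theorem finsum_bcoeff_inv_mul_zpow_eq
    (hV : X 1 * (V : MvPowerSeries (Fin 2) R) = subst ![X 1, X 0 * X 1] 𝓕.subSeries)
    (hW : X 1 * (W : MvPowerSeries (Fin 2) R) = subst ![X 0 * X 1, X 1] 𝓕.subSeries)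
    (a b n : ℤ) :
    ∑ᶠ m : ℤ, bcoeff (↑W⁻¹ : MvPowerSeries (Fin 2) R) a (a + m + 1) *
        bcoeff (↑(W ^ m) : MvPowerSeries (Fin 2) R) b (n - a - 1 - m) =
      ∑ᶠ m : ℕ, bcoeff (↑V⁻¹ : MvPowerSeries (Fin 2) R) m (m + n - (a + b)) *
        bcoeff (𝓕.subSeries ^ m) b a := by
  by_cases h : a < 0 ∨ b < 0 ∨ n < 0
  · rw [finsum_eq_zero_of_forall_eq_zero, finsum_eq_zero_of_forall_eq_zero]
    · intro m
      rw [← bcoeff_pow_of_X_one_mul_eq_subst_fst hV]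
      by_cases h' : a < 0 ∨ b + a - m < 0
      · rw [bcoeff_of_neg _ h', mul_zero]
      · by_cases hb : b < 0
        · rw [bcoeff_pow_of_X_one_mul_eq_subst_fst hV, bcoeff_of_neg _ (Or.inl hb), mul_zero]
        · rw [bcoeff_of_neg _ (by lia : (m : ℤ) < 0 ∨ m + n - (a + b) < 0), zero_mul]
    · intro m
      by_cases h' : a < 0 ∨ a + m + 1 < 0
      · rw [bcoeff_of_neg _ h', zero_mul]
      · rw [bcoeff_of_neg _ (by lia : b < 0 ∨ n - a - 1 - m < 0), mul_zero]
  lift a to ℕ using by lia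
  lift b to ℕ using by lia
  lift n to ℕ using by lia
  obtain ⟨Y, hY⟩ : (X 2 : MvPowerSeries (Fin 3) R) ∣
      subst ![X 1 * X 2, X 0 * X 2] 𝓕.subSeries := by
    rw [X_dvd_iff]
    intro e he
    rw [← triexp_apply_self (p := (1 : Fin 3)) (q := 0) (r := 2) (by decide) (by decide)
      (by decide) e, coeff_triexp_subst_X_mul_X_mul (by decide) (by decide) (by decide), he]
    split_ifs with h0
    · rw [bcoeff_subSeries, 𝓕.Fzi_of_add_nonpos (by lia)]
    · rfl
  have hY0 : constantCoeff Y = 0 := by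
    have h0 := coeff_triexp_X_pow_mul (p := (1 : Fin 3)) (q := 0) (r := 2) (by decide) (by decide)
      Y 0 0 1 1
    rw [pow_one, ← hY, coeff_triexp_subst_X_mul_X_mul (by decide) (by decide) (by decide)] at h0
    simpa [triexp] using h0.symm
  have h1 := X_mul_subst_snd hW (1 : Fin 3) 2
  have h2 := subst_mul_subst_div_mul (p := (0 : Fin 3)) (q := 1) (r := 2) hW W rfl rfl
  have h3 := subst_mul_subst_inv_fst (t := (X 2 : MvPowerSeries (Fin 3) R)) hV hY0 (by simp)
  have symm := 𝓕.subst_subSeries_subst_subSeries (a := X 0 * X 2) (b := X 1 * X 2) (c := X 2)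
    (σ := Fin 3) (by simp) (by simp) (by simp)
  rw [mul_comm Y, ← hY, ← symm, ← h1] at h3
  generalize hE : subst ![Y, X 2] (↑V⁻¹ : MvPowerSeries (Fin 2) R) = E at h3
  generalize hD : subst ![(X 0 : MvPowerSeries (Fin 3) R) *
      subst ![X 1, X 2] (↑W⁻¹ : MvPowerSeries (Fin 2) R),
    X 2 * subst ![X 1, X 2] (W : MvPowerSeries (Fin 2) R)]
      (X 0 * (↑W⁻¹ : MvPowerSeries (Fin 2) R)) = D at h2
  have key : D = X 0 * E := X_mul_cancel (p := 2) (by linear_combination E * h2 - D * h3)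
  have h4 := coeff_triexp_X_pow_mul_fst (p := (0 : Fin 3)) (q := 1) (by decide) (r := 2) (by decide)
    E (a + 1) b n 1
  rw [pow_one, if_pos (by lia), Nat.add_sub_cancel] at h4
  rw [← coeff_triexp_subst_div_mul (σ := Fin 3) (p := 0) (q := 1) (r := 2) (by decide) (by decide)
    (by decide) _ W rfl rfl, hD, key, h4, ← hE, triexp_swap, coeff_triexp_subst_of_X_mul_eq
    (by decide) (by decide) (by decide) _ _ hY0 hY.symm, add_comm (a : ℤ)]

end FormalGroupLaw

end

/-- the `F`-Jacobi identity for delta distributions, coefficient of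
`z0^e0 z1^e1 z2^e2`:
`i_{z1,z2} z0⁻¹δ_F(F(z1,ιz2)/z0) - i_{z2,z1} z0⁻¹δ_F(F(z1,ιz2)/z0)`
`= i_{z1,z0} z2⁻¹δ_F(F(z1,ιz0)/z2)`. -/
theorem deltaF_jacobi (R : Type*) [CommRing R] (𝓕 : FormalGroupLaw R) (e0 e1 e2 : ℤ) :
    (∑ᶠ m : ℤ, 𝓕.delta e0 m * izwPow 𝓕.Fzi m e1 e2)
    - (∑ᶠ m : ℤ, 𝓕.delta e0 m * iwzPowNeg 𝓕.Fzi m e1 e2)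
    = ∑ᶠ m : ℤ, 𝓕.delta e2 m * izwPow 𝓕.Fzi m e1 e0 := by
  obtain ⟨V, hV⟩ := 𝓕.exists_unit_shearFst
  obtain ⟨W, hW⟩ := 𝓕.exists_unit_shearSnd
  have hXV := X_one_mul_eq_subst_of_shearFst 𝓕.constantCoeff_subSeries
    (V := (V : MvPowerSeries (Fin 2) R)) (by rwa [FormalGroupLaw.bcoeff_subSeries])
  have hXW := X_one_mul_eq_subst_of_shearSnd 𝓕.constantCoeff_subSeries
    (V := (W : MvPowerSeries (Fin 2) R)) (by rwa [FormalGroupLaw.bcoeff_subSeries])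
  set A : ℤ → ℤ → R := fun e m => bcoeff (↑V⁻¹ : MvPowerSeries (Fin 2) R) m (e + m + 1)
  set B : ℤ → ℤ → R := fun e m => bcoeff (↑W⁻¹ : MvPowerSeries (Fin 2) R) e (e + m + 1)
  have delta_eq (e m : ℤ) : 𝓕.delta e m = A e m - B e m := by
    rw [FormalGroupLaw.delta, izwPow_eq_bcoeff_zpow 𝓕.Fzi_one_zero hV,
      iwzPowNeg_eq_bcoeff_zpow 𝓕.Fzi_zero_one hW, zpow_neg_one, zpow_neg_one, sub_neg_eq_add]
  have A_of_neg {e m : ℤ} (hm : m < 0) : A e m = 0 := bcoeff_of_neg _ (Or.inl hm)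
  have B_of_lt {e m : ℤ} (hm : m < -e - 1) : B e m = 0 := bcoeff_of_neg _ (by lia)
  have finsum_delta (e N : ℤ) (v : ℤ → R) (hv : ∀ m, N < m → v m = 0) :
      ∑ᶠ m, 𝓕.delta e m * v m = ∑ᶠ m, A e m * v m - ∑ᶠ m, B e m * v m := by
    simp only [delta_eq, sub_mul]
    refine finsum_sub_distrib ((Set.finite_Icc 0 N).subset ?_)
      ((Set.finite_Icc (-e - 1) N).subset ?_)
    · intro m hm
      by_contra h
      obtain h | h : m < 0 ∨ N < m := by simp only [Set.mem_Icc] at h; lia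
      · simp [A_of_neg h] at hm
      · simp [hv m h] at hm
    · intro m hm
      by_contra h
      obtain h | h : m < -e - 1 ∨ N < m := by simp only [Set.mem_Icc] at h; lia
      · simp [B_of_lt h] at hm
      · simp [hv m h] at hm
  simp only [izwPow_eq_bcoeff_zpow 𝓕.Fzi_one_zero hV, iwzPowNeg_eq_bcoeff_zpow 𝓕.Fzi_zero_one hW]
  rw [finsum_delta e0 (e1 + e2) _ fun m hm => bcoeff_of_neg _ (by lia),
    finsum_delta e0 (e1 + e2) _ fun m hm => bcoeff_of_neg _ (by lia),
    finsum_delta e2 (e1 + e0) _ fun m hm => bcoeff_of_neg _ (by lia)]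
  have finsum_A (e : ℤ) (v : ℤ → R) : ∑ᶠ m, A e m * v m = ∑ᶠ m : ℕ, A e m * v m := by
    symm
    refine finsum_eq_finsum_of_injOn (s := Set.univ) (fun m : ℕ => (m : ℤ))
      Nat.cast_injective.injOn (fun _ _ => trivial) ?_ fun _ _ => rfl
    intro m hm
    by_cases h : m < 0
    · simp [A_of_neg h] at hm
    · exact ⟨m.toNat, trivial, by simp; lia⟩
  simp only [finsum_A, zpow_natCast, Units.val_pow_eq_pow_val,
    bcoeff_pow_of_X_one_mul_eq_subst_fst hXV, bcoeff_pow_of_X_one_mul_eq_subst_snd hXW]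
  have hS := 𝓕.finsum_bcoeff_inv_mul_symm hXV hXW e0 e2 (e0 + e1 + e2 + 1)
  have hT := 𝓕.finsum_bcoeff_inv_mul_zpow_eq hXV hXW e0 e1 (e0 + e1 + e2 + 1)
  simp only [show ∀ m, e0 + e1 + e2 + 1 - e0 - 1 - m = e1 + e2 - m by intro; ring,
    show ∀ m, e0 + e1 + e2 + 1 - e2 - 1 - m = e1 + e0 - m by intro; ring,
    show ∀ m : ℕ, m + (e0 + e1 + e2 + 1) - (e0 + e1) = e2 + m + 1 by intro; ring] at hS hT
  linear_combination hT - hS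
end
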